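/- arXiv:1707.02659 — 5 statements merged into one kernel-verified Lean document; each statement's English description precedes it below -/
import Mathlib

section
/- Let X be a measurable space, P a Markov (probability) kernel on X, V : X → ℝ measurable with V(x) ≥ 1 for all x, K ⊆ X a measurable set, λ ∈ (0,1) and b ∈ [0,∞), and suppose the drift condition ∫ V(y) P(x,dy) ≤ λ·V(x) + b·1_K(x) holds for all x ∈ X. Then for all x ∈ X, ∫ √(V(y)) P(x,dy) ≤ √λ·√(V(x)) + √b·1_K(x). -/
open MeasureTheory ProbabilityTheory Filter
open scoped ENNReal NNReal Topology

noncomputable section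

/-- Jensen plus subadditivity of the square root:
`∫ √V dP(x,·) ≤ √λ·√V(x) + √b·1_K(x)`. -/
theorem drift_sqrt {X : Type*} [MeasurableSpace X]
    (P : Kernel X X) [IsMarkovKernel P]
    (V : X → ℝ) (hVmeas : Measurable V) (hV1 : ∀ x, 1 ≤ V x)
    (K : Set X) (hK : MeasurableSet K)
    (l b : ℝ) (hl0 : 0 < l) (hl1 : l < 1) (hb : 0 ≤ b)
    (hdrift : ∀ x, ∫⁻ y, ENNReal.ofReal (V y) ∂(P x)
      ≤ ENNReal.ofReal (l * V x + b * K.indicator (fun _ => 1) x)) :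
    ∀ x : X, ∫⁻ y, ENNReal.ofReal (Real.sqrt (V y)) ∂(P x)
      ≤ ENNReal.ofReal (Real.sqrt l * Real.sqrt (V x)
          + Real.sqrt b * K.indicator (fun _ => 1) x) := by
  intro x
  set c : ℝ := K.indicator (fun _ => (1 : ℝ)) x with hc
  have hc01 : c = 0 ∨ c = 1 := by
    by_cases hx : x ∈ K
    · right; simp [hc, hx]
    · left; simp [hc, hx]
  have hc0 : 0 ≤ c := by rcases hc01 with h | h <;> simp [h]
  have hVx : 0 < V x := lt_of_lt_of_le one_pos (hV1 x)
  have hM : 0 < l * V x + b * c := by positivity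
  have hd := hdrift x
  rw [← hc] at hd
  set M : ℝ := l * V x + b * c with hMdef
  set s : ℝ := Real.sqrt M with hs
  have hs0 : 0 < s := Real.sqrt_pos.mpr hM
  have hss : s * s = M := Real.mul_self_sqrt hM.le
  have hpt : ∀ y, ENNReal.ofReal (Real.sqrt (V y))
      ≤ ENNReal.ofReal (1 / (2 * s)) * ENNReal.ofReal (V y) + ENNReal.ofReal (s / 2) := by
    intro y
    have hVy : 0 ≤ V y := zero_le_one.trans (hV1 y)
    rw [← ENNReal.ofReal_mul (by positivity), ← ENNReal.ofReal_add (by positivity) (by positivity)]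
    apply ENNReal.ofReal_le_ofReal
    have h1 := Real.mul_self_sqrt hVy
    have h2 : 1 / (2 * s) * V y + s / 2 - Real.sqrt (V y)
        = (Real.sqrt (V y) - s) ^ 2 / (2 * s) := by
      field_simp
      nlinarith
    have h3 : 0 ≤ (Real.sqrt (V y) - s) ^ 2 / (2 * s) := by positivity
    linarith
  have hfin : s ≤ Real.sqrt l * Real.sqrt (V x) + Real.sqrt b * c := by
    apply Real.sqrt_le_iff.mpr
    refine ⟨by positivity, ?_⟩
    have h1 := Real.sq_sqrt hl0.le
    have h2 := Real.sq_sqrt hVx.le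
    have h3 := Real.sq_sqrt hb
    have h4 : c ^ 2 = c := by rcases hc01 with h | h <;> simp [h]
    have h5 : 0 ≤ 2 * (Real.sqrt l * Real.sqrt (V x)) * (Real.sqrt b * c) := by positivity
    rw [add_sq, mul_pow, mul_pow, h1, h2, h3, h4]
    linarith
  calc ∫⁻ y, ENNReal.ofReal (Real.sqrt (V y)) ∂(P x)
      ≤ ∫⁻ y, (ENNReal.ofReal (1 / (2 * s)) * ENNReal.ofReal (V y)
          + ENNReal.ofReal (s / 2)) ∂(P x) := lintegral_mono hpt
    _ = ENNReal.ofReal (1 / (2 * s)) * ∫⁻ y, ENNReal.ofReal (V y) ∂(P x)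
          + ENNReal.ofReal (s / 2) := by
        rw [lintegral_add_right _ measurable_const,
          lintegral_const_mul _ hVmeas.ennreal_ofReal]
        simp
    _ ≤ ENNReal.ofReal (1 / (2 * s)) * ENNReal.ofReal M + ENNReal.ofReal (s / 2) := by
        gcongr
    _ = ENNReal.ofReal s := by
        rw [← ENNReal.ofReal_mul (by positivity),
          ← ENNReal.ofReal_add (by positivity) (by positivity), ← hss]
        congr 1
        field_simp
        ring
    _ ≤ _ := ENNReal.ofReal_le_ofReal hfin

end
end

section
/- Let X be a measurable space, P a Markov (probability) kernel on X, V : X → ℝ measurable with V(x) ≥ 1 for all x, K ⊆ X measurable, λ ∈ (0,1), b ∈ [0,∞), and suppose ∫ V(y) P(x,dy) ≤ λ·V(x) + b·1_K(x) for all x ∈ X. Let κ ≥ 0 and define Ṽ(x) = (1−√λ)^{−1}·max(1,κ)·√(V(x)). Then for all x ∈ X, ∫ Ṽ(y) P(x,dy) ≤ Ṽ(x) − max(1,κ)·√(V(x)) + (1−√λ)^{−1}·max(1,κ)·√b·1_K(x). -/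
open MeasureTheory ProbabilityTheory Filter
open scoped ENNReal NNReal Topology

noncomputable section

/-- The function `Ṽ = (1-√λ)⁻¹ max(1,κ) √V` satisfies the Meyn–Tweedie condition (V3):
`∫ Ṽ dP(x,·) ≤ Ṽ(x) − max(1,κ)·√V(x) + (1−√λ)⁻¹ max(1,κ) √b · 1_K(x)`. -/
theorem drift_V3 {X : Type*} [MeasurableSpace X]
    (P : Kernel X X) [IsMarkovKernel P]
    (V : X → ℝ) (hVmeas : Measurable V) (hV1 : ∀ x, 1 ≤ V x)
    (K : Set X) (hK : MeasurableSet K)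
    (l b : ℝ) (hl0 : 0 < l) (hl1 : l < 1) (hb : 0 ≤ b)
    (hdrift : ∀ x, ∫⁻ y, ENNReal.ofReal (V y) ∂(P x)
      ≤ ENNReal.ofReal (l * V x + b * K.indicator (fun _ => 1) x))
    (κ : ℝ) (hκ : 0 ≤ κ)
    (tV : X → ℝ) (htV : ∀ x, tV x = (1 - Real.sqrt l)⁻¹ * max 1 κ * Real.sqrt (V x)) :
    ∀ x : X, ∫⁻ y, ENNReal.ofReal (tV y) ∂(P x)
      ≤ ENNReal.ofReal (tV x - max 1 κ * Real.sqrt (V x)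
          + (1 - Real.sqrt l)⁻¹ * max 1 κ * Real.sqrt b * K.indicator (fun _ => 1) x) := by
  intro x
  have hsl : Real.sqrt l < 1 := by
    rw [Real.sqrt_lt' one_pos]; simpa using hl1
  have hVx := hV1 x
  have hc : (1 : ℝ) ≤ max 1 κ := le_max_left _ _
  set c := max 1 κ with hcdef
  have h1 : 0 < 1 - Real.sqrt l := by linarith
  set i : ℝ := K.indicator (fun _ => 1) x with hi
  have hi01 : i = 0 ∨ i = 1 := by
    by_cases h : x ∈ K <;> simp [hi, h]
  have hi0 : 0 ≤ i := by rcases hi01 with h | h <;> simp [h]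
  set A := l * V x + b * i with hA
  have hApos : 0 < A := by
    have : 0 < l * V x := by positivity
    have : 0 ≤ b * i := by positivity
    linarith
  set r := Real.sqrt A with hr
  have hr0 : 0 < r := Real.sqrt_pos.mpr hApos
  have hrr : r * r = A := Real.mul_self_sqrt hApos.le
  have hrle : r ≤ Real.sqrt l * Real.sqrt (V x) + Real.sqrt b * i := by
    apply Real.sqrt_le_iff.mpr
    refine ⟨by positivity, ?_⟩
    have e1 := Real.mul_self_sqrt hl0.le
    have e2 := Real.mul_self_sqrt (zero_le_one.trans hVx)
    have e3 := Real.mul_self_sqrt hb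
    have e4 : i * i = i := by rcases hi01 with h | h <;> simp [h]
    have e5 : 0 ≤ 2 * (Real.sqrt l * Real.sqrt (V x)) * (Real.sqrt b * i) := by positivity
    have e6 : (Real.sqrt l * Real.sqrt (V x) + Real.sqrt b * i) ^ 2
      = (Real.sqrt l * Real.sqrt l) * (Real.sqrt (V x) * Real.sqrt (V x))
        + (Real.sqrt b * Real.sqrt b) * (i * i)
        + 2 * (Real.sqrt l * Real.sqrt (V x)) * (Real.sqrt b * i) := by ring
    rw [e6, e1, e2, e3, e4]
    linarith
  set C := (1 - Real.sqrt l)⁻¹ * c with hC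
  have hC0 : 0 < C := by positivity
  have hCc : C * (1 - Real.sqrt l) = c := by
    rw [hC]; field_simp
  have hpt : ∀ y, ENNReal.ofReal (tV y)
      ≤ ENNReal.ofReal (C / (2 * r)) * ENNReal.ofReal (V y) + ENNReal.ofReal (C * r / 2) := by
    intro y
    have hVy := hV1 y
    rw [← ENNReal.ofReal_mul (by positivity), ← ENNReal.ofReal_add (by positivity) (by positivity)]
    apply ENNReal.ofReal_le_ofReal
    rw [htV y]
    have e := Real.mul_self_sqrt (zero_le_one.trans hVy)
    have key : C / (2 * r) * V y + C * r / 2 - C * Real.sqrt (V y)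
        = C / (2 * r) * (Real.sqrt (V y) - r) ^ 2 := by
      rw [sub_sq, Real.sq_sqrt (zero_le_one.trans hVy)]
      field_simp
      ring
    have : 0 ≤ C / (2 * r) * (Real.sqrt (V y) - r) ^ 2 := by positivity
    linarith
  calc ∫⁻ y, ENNReal.ofReal (tV y) ∂(P x)
      ≤ ∫⁻ y, (ENNReal.ofReal (C / (2 * r)) * ENNReal.ofReal (V y)
          + ENNReal.ofReal (C * r / 2)) ∂(P x) := lintegral_mono hpt
    _ = ENNReal.ofReal (C / (2 * r)) * ∫⁻ y, ENNReal.ofReal (V y) ∂(P x)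
          + ENNReal.ofReal (C * r / 2) := by
        rw [lintegral_add_right _ measurable_const,
          lintegral_const_mul _ hVmeas.ennreal_ofReal]
        simp
    _ ≤ ENNReal.ofReal (C / (2 * r)) * ENNReal.ofReal A + ENNReal.ofReal (C * r / 2) := by
        gcongr
        exact hdrift x
    _ = ENNReal.ofReal (C * r) := by
        rw [← ENNReal.ofReal_mul (by positivity),
          ← ENNReal.ofReal_add (by positivity) (by positivity), ← hrr]
        congr 1
        field_simp
        ring
    _ ≤ _ := by
        apply ENNReal.ofReal_le_ofReal
        rw [htV x]
        have := mul_le_mul_of_nonneg_left hrle hC0.le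
        have e : c * Real.sqrt (V x) = C * (1 - Real.sqrt l) * Real.sqrt (V x) := by rw [hCc]
        rw [e]
        linarith

end
end

section
/- Let X be a measurable space, P a Markov kernel on X, V : X → ℝ measurable with V(x) ≥ 1, satisfying ∫ V(y) P(x,dy) ≤ λ·V(x) + b·1_K(x) for all x (λ ∈ (0,1), b < ∞, K measurable), and μ an initial distribution with ∫ V dμ < ∞. Let q : X × X → ℝ be jointly measurable with ∫ q(x,y) P(x,dy) = 0 and ∫ q(x,y)² P(x,dy) ≤ G·V(x) for all x; let f : X → ℝ be measurable with |f(x)| ≤ κ·√(V(x)); let f̂ : X → ℝ be measurable with |f̂(x)| ≤ c·√(V(x)) and f̂ − P f̂ = f − a pointwise for a constant a. Under the chain law P_μ set α_n = (1/n)∑_{j=0}^{n−1} f(Φ_j), D_k = q(Φ_{k−1},Φ_k), M_n = ∑_{j=1}^n D_j, and ξ_k = f̂(Φ_k) − P f̂(Φ_{k−1}). Then for every n ≥ 1, E_μ[α_n M_n] = E_μ[(α_n − a) M_n] = −(1/n)·E_μ[ f̂(Φ_n) M_n ] + (1/n)·∑_{k=1}^n E_μ[ ξ_k D_k ]. -/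
open MeasureTheory ProbabilityTheory Filter
open scoped ENNReal NNReal Topology

noncomputable section

/-- The natural filtration of the coordinate process on path space `ℕ → X`. -/
def natFiltration (X : Type*) [MeasurableSpace X] :
    Filtration ℕ (inferInstance : MeasurableSpace (ℕ → X)) where
  seq k := ⨆ i ∈ Set.Iic k, MeasurableSpace.comap (fun ω : ℕ → X => ω i) inferInstance
  mono' := fun _ _ hij => biSup_mono fun _ hk => le_trans hk hij
  le' := fun _ => iSup₂_le fun i _ => (measurable_pi_apply i).comap_le

/-- `Pμ` is the law on path space of the Markov chain with initial distribution `μ`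
and one-step transition kernel `P`. -/
def IsMarkovChainLaw {X : Type*} [MeasurableSpace X] (μ : Measure X) (P : Kernel X X)
    (Pμ : Measure (ℕ → X)) : Prop :=
  IsProbabilityMeasure Pμ ∧
  Pμ.map (fun ω => ω 0) = μ ∧
  ∀ (n : ℕ) (g : (Fin (n + 1) → X) → ℝ≥0∞) (h : X → ℝ≥0∞),
    Measurable g → Measurable h →
    ∫⁻ ω, g (fun i => ω i) * h (ω (n + 1)) ∂Pμ
      = ∫⁻ ω, g (fun i => ω i) * ∫⁻ y, h y ∂(P (ω n)) ∂Pμ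

/-- The prefix of a path. -/
def pathPre {X : Type*} (m : ℕ) (ω : ℕ → X) : Fin (m + 1) → X := fun i => ω i

lemma measurable_pathPre {X : Type*} [MeasurableSpace X] (m : ℕ) :
    Measurable (pathPre (X := X) m) :=
  measurable_pi_lambda _ fun i => measurable_pi_apply _

lemma measurable_lastCoord {X : Type*} [MeasurableSpace X] (m : ℕ) :
    Measurable (fun p : Fin (m + 1) → X => p (Fin.last m)) := measurable_pi_apply _

lemma chain_joint_law {X : Type*} [MeasurableSpace X] {μ : Measure X} {P : Kernel X X}
    [IsMarkovKernel P] {Pμ : Measure (ℕ → X)} (h : IsMarkovChainLaw μ P Pμ) (m : ℕ) :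
    Pμ.map (fun ω => (pathPre m ω, ω (m + 1)))
      = (Pμ.map (pathPre m)) ⊗ₘ (P.comap _ (measurable_lastCoord m)) := by
  obtain ⟨hp, -, hc⟩ := h
  have hm : Measurable (fun ω : ℕ → X => (pathPre m ω, ω (m + 1))) :=
    (measurable_pathPre m).prodMk (measurable_pi_apply _)
  have : IsProbabilityMeasure (Pμ.map (fun ω => (pathPre m ω, ω (m + 1)))) :=
    Measure.isProbabilityMeasure_map hm.aemeasurable
  have : IsProbabilityMeasure (Pμ.map (pathPre m)) :=
    Measure.isProbabilityMeasure_map (measurable_pathPre m).aemeasurable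
  refine Measure.ext_prod ?_
  intro s t hs ht
  rw [Measure.compProd_apply_prod hs ht, Measure.map_apply hm (hs.prod ht),
    ← lintegral_indicator hs, lintegral_map _ (measurable_pathPre m)]
  · have key := hc m (s.indicator 1) (t.indicator 1) (measurable_one.indicator hs)
      (measurable_one.indicator ht)
    rw [← lintegral_indicator_one (hm (hs.prod ht))]
    calc _ = ∫⁻ ω, s.indicator 1 (fun i : Fin (m + 1) => ω i) * t.indicator 1 (ω (m + 1)) ∂Pμ := by
            refine lintegral_congr fun ω => ?_
            change _ = s.indicator 1 (pathPre m ω) * t.indicator 1 (ω (m + 1))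
            by_cases h1 : pathPre m ω ∈ s <;> by_cases h2 : ω (m + 1) ∈ t <;>
              simp [Set.indicator, h1, h2]
      _ = _ := key
      _ = _ := by
            refine lintegral_congr fun ω => ?_
            change s.indicator 1 (pathPre m ω) * _ = _
            rw [lintegral_indicator_one ht]
            by_cases h1 : pathPre m ω ∈ s <;> simp [Set.indicator, h1, pathPre]
  · exact (Kernel.measurable_coe _ ht).indicator hs

lemma chain_lintegral {X : Type*} [MeasurableSpace X] {μ : Measure X} {P : Kernel X X}
    [IsMarkovKernel P] {Pμ : Measure (ℕ → X)} (h : IsMarkovChainLaw μ P Pμ) (m : ℕ)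
    (r : X → X → ℝ≥0∞) (hr : Measurable (Function.uncurry r)) :
    ∫⁻ ω, r (ω m) (ω (m + 1)) ∂Pμ = ∫⁻ ω, ∫⁻ y, r (ω m) y ∂(P (ω m)) ∂Pμ := by
  have := h.1
  have : IsProbabilityMeasure (Pμ.map (pathPre m)) :=
    Measure.isProbabilityMeasure_map (measurable_pathPre m).aemeasurable
  have hm : Measurable (fun ω : ℕ → X => (pathPre m ω, ω (m + 1))) :=
    (measurable_pathPre m).prodMk (measurable_pi_apply _)
  have hF : Measurable (fun z : (Fin (m + 1) → X) × X => r (z.1 (Fin.last m)) z.2) :=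
    hr.comp (((measurable_lastCoord m).comp measurable_fst).prodMk measurable_snd)
  have h1 := lintegral_map (μ := Pμ) hF hm
  rw [chain_joint_law h m, Measure.lintegral_compProd hF, lintegral_map _ (measurable_pathPre m)]
    at h1
  · simpa [pathPre] using h1.symm
  · exact hF.lintegral_kernel_prod_right'

lemma chain_orth {X : Type*} [MeasurableSpace X] {μ : Measure X} {P : Kernel X X}
    [IsMarkovKernel P] {Pμ : Measure (ℕ → X)} (h : IsMarkovChainLaw μ P Pμ) (m : ℕ)
    (r : X → X → ℝ) (hr : Measurable (Function.uncurry r))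
    (hr0 : ∀ x, ∫ y, r x y ∂(P x) = 0)
    (F : (Fin (m + 1) → X) → ℝ) (hF : Measurable F)
    (hint : Integrable (fun ω => F (pathPre m ω) * r (ω m) (ω (m + 1))) Pμ) :
    ∫ ω, F (pathPre m ω) * r (ω m) (ω (m + 1)) ∂Pμ = 0 := by
  have := h.1
  have : IsProbabilityMeasure (Pμ.map (pathPre m)) :=
    Measure.isProbabilityMeasure_map (measurable_pathPre m).aemeasurable
  have hm : Measurable (fun ω : ℕ → X => (pathPre m ω, ω (m + 1))) :=
    (measurable_pathPre m).prodMk (measurable_pi_apply _)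
  let H : (Fin (m + 1) → X) × X → ℝ := fun z => F z.1 * r (z.1 (Fin.last m)) z.2
  have hH : Measurable H :=
    (hF.comp measurable_fst).mul
      (hr.comp (((measurable_lastCoord m).comp measurable_fst).prodMk measurable_snd))
  have hHi : Integrable H (Pμ.map (fun ω => (pathPre m ω, ω (m + 1)))) := by
    rw [integrable_map_measure hH.aestronglyMeasurable hm.aemeasurable]
    exact hint
  have h1 := integral_map (μ := Pμ) hm.aemeasurable hH.aestronglyMeasurable
  have h2 : ∫ z, H z ∂(Pμ.map (fun ω => (pathPre m ω, ω (m + 1)))) = 0 := by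
    rw [chain_joint_law h m] at hHi ⊢
    rw [Measure.integral_compProd hHi]
    simp [H, integral_const_mul, hr0]
  rw [h2] at h1
  exact h1.symm

lemma memLp_two_of_lintegral {Ω : Type*} [MeasurableSpace Ω] {ν : Measure Ω} {g : Ω → ℝ}
    (hg : Measurable g) (h : ∫⁻ ω, ENNReal.ofReal ((g ω) ^ 2) ∂ν < ⊤) : MemLp g 2 ν := by
  rw [memLp_two_iff_integrable_sq hg.aestronglyMeasurable]
  refine ⟨(hg.pow_const 2).aestronglyMeasurable, ?_⟩
  rw [hasFiniteIntegral_iff_ofReal (ae_of_all _ fun ω => sq_nonneg _)]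
  exact h

/-- The central identity in the proof of convergence of `E[α_n ∇L_n(θ₀)]`:
`E_μ[α_n M_n] = E_μ[(α_n − a) M_n]
  = −(1/n) E_μ[f̂(Φ_n) M_n] + (1/n) ∑_{k=1}^n E_μ[ξ_k D_k]`. -/
theorem gradient_expectation_identity {X : Type*} [MeasurableSpace X]
    (P : Kernel X X) [IsMarkovKernel P]
    (V : X → ℝ) (hVmeas : Measurable V) (hV1 : ∀ x, 1 ≤ V x)
    (K : Set X) (hK : MeasurableSet K)
    (l b : ℝ) (hl0 : 0 < l) (hl1 : l < 1) (hb : 0 ≤ b)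
    (hdrift : ∀ x, ∫⁻ y, ENNReal.ofReal (V y) ∂(P x)
      ≤ ENNReal.ofReal (l * V x + b * K.indicator (fun _ => 1) x))
    (μ : Measure X) [IsProbabilityMeasure μ]
    (hμV : ∫⁻ x, ENNReal.ofReal (V x) ∂μ < ⊤)
    (q : X → X → ℝ) (hq_meas : Measurable (Function.uncurry q))
    (G : ℝ) (hG : 0 ≤ G)
    (hq_mean : ∀ x, ∫ y, q x y ∂(P x) = 0)
    (hq_sq : ∀ x, ∫⁻ y, ENNReal.ofReal ((q x y) ^ 2) ∂(P x) ≤ ENNReal.ofReal (G * V x))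
    (f : X → ℝ) (hf_meas : Measurable f)
    (κ : ℝ) (hκ : 0 ≤ κ) (hf_bdd : ∀ x, |f x| ≤ κ * Real.sqrt (V x))
    (fhat : X → ℝ) (hfhat_meas : Measurable fhat)
    (c : ℝ) (hc : 0 ≤ c) (hfhat_bdd : ∀ x, |fhat x| ≤ c * Real.sqrt (V x))
    (a : ℝ) (hPoisson : ∀ x, fhat x - ∫ y, fhat y ∂(P x) = f x - a)
    (Pμ : Measure (ℕ → X)) (hPμ : IsMarkovChainLaw μ P Pμ)
    (A : ℕ → (ℕ → X) → ℝ)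
    (hA : ∀ n ω, A n ω = (1 / (n : ℝ)) * ∑ j ∈ Finset.range n, f (ω j))
    (M : ℕ → (ℕ → X) → ℝ)
    (hM : ∀ n ω, M n ω = ∑ j ∈ Finset.range n, q (ω j) (ω (j + 1))) :
    ∀ n : ℕ, 1 ≤ n →
      (∫ ω, A n ω * M n ω ∂Pμ = ∫ ω, (A n ω - a) * M n ω ∂Pμ) ∧
      ∫ ω, A n ω * M n ω ∂Pμ
        = -(1 / (n : ℝ)) * ∫ ω, fhat (ω n) * M n ω ∂Pμ
          + (1 / (n : ℝ)) * ∑ k ∈ Finset.range n,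
              ∫ ω, (fhat (ω (k + 1)) - ∫ y, fhat y ∂(P (ω k))) * q (ω k) (ω (k + 1)) ∂Pμ := by
  classical
  have := hPμ.1
  have hV0 : ∀ x, 0 ≤ V x := fun x => zero_le_one.trans (hV1 x)
  have hco : ∀ k, Measurable (fun ω : ℕ → X => ω k) := fun k => measurable_pi_apply k
  have hEV : ∀ k, ∫⁻ ω, ENNReal.ofReal (V (ω k)) ∂Pμ < ⊤ := by
    intro k
    induction k with
    | zero =>
      have := lintegral_map (μ := Pμ) hVmeas.ennreal_ofReal (hco 0)
      rw [hPμ.2.1] at this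
      rwa [← this]
    | succ k ih =>
      have := chain_lintegral hPμ k (fun _ y => ENNReal.ofReal (V y))
        (hVmeas.ennreal_ofReal.comp measurable_snd)
      rw [this]
      have hle : ∀ ω : ℕ → X, ∫⁻ y, ENNReal.ofReal (V y) ∂(P (ω k))
          ≤ ENNReal.ofReal (V (ω k)) + ENNReal.ofReal b := by
        intro ω
        refine (hdrift _).trans ?_
        rw [← ENNReal.ofReal_add (hV0 _) hb]
        refine ENNReal.ofReal_le_ofReal ?_
        have h1 : l * V (ω k) ≤ V (ω k) := by nlinarith [hV0 (ω k)]
        have h2 : b * K.indicator (fun _ => (1 : ℝ)) (ω k) ≤ b := by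
          by_cases hk : ω k ∈ K <;> simp [hk, hb]
        linarith
      refine (lintegral_mono hle).trans_lt ?_
      rw [lintegral_add_right _ measurable_const]
      simp [ih]
  have hL2V : ∀ (g : X → ℝ) (C : ℝ), Measurable g → (∀ x, |g x| ≤ C * Real.sqrt (V x)) →
      ∀ k, MemLp (fun ω : ℕ → X => g (ω k)) 2 Pμ := by
    intro g C hg hgb k
    refine memLp_two_of_lintegral (hg.comp (hco k)) ?_
    have hle : ∀ ω : ℕ → X, ENNReal.ofReal ((g (ω k)) ^ 2)
        ≤ ENNReal.ofReal (C ^ 2) * ENNReal.ofReal (V (ω k)) := by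
      intro ω
      rw [← ENNReal.ofReal_mul (sq_nonneg C)]
      refine ENNReal.ofReal_le_ofReal ?_
      have := pow_le_pow_left₀ (abs_nonneg _) (hgb (ω k)) 2
      rwa [sq_abs, mul_pow, Real.sq_sqrt (hV0 _)] at this
    refine (lintegral_mono hle).trans_lt ?_
    rw [lintegral_const_mul' _ _ ENNReal.ofReal_ne_top]
    exact ENNReal.mul_lt_top ENNReal.ofReal_lt_top (hEV k)
  have hf2 := hL2V f κ hf_meas hf_bdd
  have hh2 := hL2V fhat c hfhat_meas hfhat_bdd
  have hDm : ∀ k, Measurable (fun ω : ℕ → X => q (ω k) (ω (k + 1))) := fun k =>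
    hq_meas.comp ((hco k).prodMk (hco (k + 1)))
  have hD2 : ∀ k, MemLp (fun ω : ℕ → X => q (ω k) (ω (k + 1))) 2 Pμ := by
    intro k
    refine memLp_two_of_lintegral (hDm k) ?_
    have := chain_lintegral hPμ k (fun x y => ENNReal.ofReal ((q x y) ^ 2))
      (hq_meas.pow_const 2).ennreal_ofReal
    rw [this]
    refine (lintegral_mono fun ω : ℕ → X => hq_sq (ω k)).trans_lt ?_
    simp_rw [ENNReal.ofReal_mul hG]
    rw [lintegral_const_mul' _ _ ENNReal.ofReal_ne_top]
    exact ENNReal.mul_lt_top ENNReal.ofReal_lt_top (hEV k)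
  have hPf : ∀ x, ∫ y, fhat y ∂(P x) = fhat x - f x + a := fun x => by
    linarith [hPoisson x]
  have hr_meas : Measurable (Function.uncurry fun x y => fhat y - ∫ z, fhat z ∂(P x)) := by
    simp_rw [hPf]
    exact (hfhat_meas.comp measurable_snd).sub
      (((hfhat_meas.comp measurable_fst).sub (hf_meas.comp measurable_fst)).add_const a)
  have hfi : ∀ x, Integrable fhat (P x) := by
    intro x
    have hVi : Integrable V (P x) := by
      refine ⟨hVmeas.aestronglyMeasurable, ?_⟩
      rw [hasFiniteIntegral_iff_ofReal (ae_of_all _ hV0)]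
      exact (hdrift x).trans_lt ENNReal.ofReal_lt_top
    refine (hVi.const_mul c).mono' hfhat_meas.aestronglyMeasurable (ae_of_all _ fun y => ?_)
    refine (hfhat_bdd y).trans (mul_le_mul_of_nonneg_left ?_ hc)
    rw [Real.sqrt_le_left (hV0 y)]
    nlinarith [hV1 y]
  have hr0 : ∀ x, ∫ y, (fhat y - ∫ z, fhat z ∂(P x)) ∂(P x) = 0 := by
    intro x
    rw [integral_sub (hfi x) (integrable_const _)]
    simp
  have hx2 : ∀ k, MemLp (fun ω : ℕ → X => fhat (ω (k + 1)) - ∫ y, fhat y ∂(P (ω k))) 2 Pμ := by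
    intro k
    simp_rw [hPf]
    exact (hh2 (k + 1)).sub (((hh2 k).sub (hf2 k)).add (memLp_const a))
  -- orthogonality
  have hED : ∀ j, ∫ ω, q (ω j) (ω (j + 1)) ∂Pμ = 0 := by
    intro j
    have := chain_orth hPμ j q hq_meas hq_mean (fun _ => 1) measurable_const
      (by simpa using (hD2 j).integrable one_le_two)
    simpa using this
  have h0D : ∀ j, ∫ ω, fhat (ω 0) * q (ω j) (ω (j + 1)) ∂Pμ = 0 := fun j =>
    chain_orth hPμ j q hq_meas hq_mean (fun p => fhat (p 0))
      (hfhat_meas.comp (measurable_pi_apply _)) ((hh2 0).integrable_mul (hD2 j))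
  have hxDi : ∀ k j, Integrable (fun ω : ℕ → X =>
      (fhat (ω (k + 1)) - ∫ y, fhat y ∂(P (ω k))) * q (ω j) (ω (j + 1))) Pμ :=
    fun k j => (hx2 k).integrable_mul (hD2 j)
  have hxD : ∀ k j, k ≠ j → ∫ ω, (fhat (ω (k + 1)) - ∫ y, fhat y ∂(P (ω k)))
      * q (ω j) (ω (j + 1)) ∂Pμ = 0 := by
    intro k j hkj
    rcases lt_or_gt_of_ne hkj with hlt | hlt
    · have hmm : Measurable (fun p : Fin (j + 1) → X =>
          fhat (p ⟨k + 1, by omega⟩) - ∫ y, fhat y ∂(P (p ⟨k, by omega⟩))) :=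
        hr_meas.comp (f := fun p : Fin (j + 1) → X => (p ⟨k, by omega⟩, p ⟨k + 1, by omega⟩))
          ((measurable_pi_apply _).prodMk (measurable_pi_apply _))
      exact chain_orth hPμ j q hq_meas hq_mean
        (fun p => fhat (p ⟨k + 1, by omega⟩) - ∫ y, fhat y ∂(P (p ⟨k, by omega⟩)))
        hmm (hxDi k j)
    · have hi := hxDi k j
      simp_rw [mul_comm _ (q _ _)] at hi ⊢
      have hmm : Measurable (fun p : Fin (k + 1) → X =>
          q (p ⟨j, by omega⟩) (p ⟨j + 1, by omega⟩)) :=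
        hq_meas.comp (f := fun p : Fin (k + 1) → X => (p ⟨j, by omega⟩, p ⟨j + 1, by omega⟩))
          ((measurable_pi_apply _).prodMk (measurable_pi_apply _))
      exact chain_orth hPμ k (fun x y => fhat y - ∫ z, fhat z ∂(P x)) hr_meas hr0
        (fun p => q (p ⟨j, by omega⟩) (p ⟨j + 1, by omega⟩))
        hmm hi
  intro n hn
  have hn0 : (n : ℝ) ≠ 0 := by exact_mod_cast (by omega : n ≠ 0)
  have hM' : M n = fun ω => ∑ j ∈ Finset.range n, q (ω j) (ω (j + 1)) := funext (hM n)
  have hM2 : MemLp (M n) 2 Pμ := by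
    rw [hM']
    exact memLp_finsetSum _ fun j _ => hD2 j
  have hA2 : MemLp (A n) 2 Pμ := by
    rw [show A n = fun ω => (1 / (n : ℝ)) * ∑ j ∈ Finset.range n, f (ω j) from funext (hA n)]
    exact (memLp_finsetSum _ fun j _ => hf2 j).const_mul _
  have hEM : ∫ ω, M n ω ∂Pμ = 0 := by
    rw [hM', integral_finsetSum _ fun j _ => (hD2 j).integrable one_le_two]
    exact Finset.sum_eq_zero fun j _ => hED j
  have hfirst : ∫ ω, A n ω * M n ω ∂Pμ = ∫ ω, (A n ω - a) * M n ω ∂Pμ := by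
    simp_rw [sub_mul]
    have hAM : Integrable (fun ω => A n ω * M n ω) Pμ := hA2.integrable_mul hM2
    rw [integral_sub hAM ((hM2.integrable one_le_two).const_mul a),
      integral_const_mul, hEM]
    simp
  refine ⟨hfirst, ?_⟩
  rw [hfirst]
  have hdecomp : ∀ ω : ℕ → X, A n ω - a = (1 / (n : ℝ)) * (fhat (ω 0) - fhat (ω n)
      + ∑ k ∈ Finset.range n, (fhat (ω (k + 1)) - ∫ y, fhat y ∂(P (ω k)))) := by
    intro ω
    have hs : ∑ k ∈ Finset.range n, (fhat (ω (k + 1)) - ∫ y, fhat y ∂(P (ω k)))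
        = (fhat (ω n) - fhat (ω 0)) + (∑ k ∈ Finset.range n, f (ω k) - n * a) := by
      rw [← Finset.sum_range_sub (fun k => fhat (ω k)) n]
      have : (n : ℝ) * a = ∑ k ∈ Finset.range n, a := by simp
      rw [this, ← Finset.sum_sub_distrib, ← Finset.sum_add_distrib]
      refine Finset.sum_congr rfl fun k _ => ?_
      rw [hPf]
      ring
    rw [hs, hA]
    field_simp
    ring
  have hprod : ∀ ω : ℕ → X, (A n ω - a) * M n ω = (1 / (n : ℝ)) *
      ((∑ j ∈ Finset.range n, fhat (ω 0) * q (ω j) (ω (j + 1))) - fhat (ω n) * M n ω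
      + ∑ k ∈ Finset.range n, ∑ j ∈ Finset.range n,
        (fhat (ω (k + 1)) - ∫ y, fhat y ∂(P (ω k))) * q (ω j) (ω (j + 1))) := by
    intro ω
    rw [hdecomp, ← Finset.mul_sum, ← hM, ← Finset.sum_mul_sum, ← hM]
    ring
  have hi0 : Integrable (fun ω : ℕ → X =>
      ∑ j ∈ Finset.range n, fhat (ω 0) * q (ω j) (ω (j + 1))) Pμ :=
    integrable_finsetSum _ fun j _ => (hh2 0).integrable_mul (hD2 j)
  have hi1 : Integrable (fun ω : ℕ → X => fhat (ω n) * M n ω) Pμ := (hh2 n).integrable_mul hM2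
  have hi3 : ∀ k, Integrable (fun ω : ℕ → X => ∑ j ∈ Finset.range n,
        (fhat (ω (k + 1)) - ∫ y, fhat y ∂(P (ω k))) * q (ω j) (ω (j + 1))) Pμ :=
    fun k => integrable_finsetSum _ fun j _ => hxDi k j
  have hi2 := integrable_finsetSum (Finset.range n) fun k _ => hi3 k
  have hi01 : Integrable (fun ω : ℕ → X =>
      (∑ j ∈ Finset.range n, fhat (ω 0) * q (ω j) (ω (j + 1))) - fhat (ω n) * M n ω) Pμ :=
    hi0.sub hi1
  have hi00 : ∀ j, Integrable (fun ω : ℕ → X => fhat (ω 0) * q (ω j) (ω (j + 1))) Pμ :=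
    fun j => (hh2 0).integrable_mul (hD2 j)
  simp_rw [hprod]
  rw [integral_const_mul, integral_add hi01 hi2, integral_sub hi0 hi1,
    integral_finsetSum _ fun j _ => hi00 j,
    Finset.sum_eq_zero fun j _ => h0D j, integral_finsetSum _ fun k _ => hi3 k]
  have hdiag : ∀ k ∈ Finset.range n, ∫ ω, ∑ j ∈ Finset.range n,
      (fhat (ω (k + 1)) - ∫ y, fhat y ∂(P (ω k))) * q (ω j) (ω (j + 1)) ∂Pμ
      = ∫ ω, (fhat (ω (k + 1)) - ∫ y, fhat y ∂(P (ω k))) * q (ω k) (ω (k + 1)) ∂Pμ := by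
    intro k hk
    rw [integral_finsetSum _ fun j _ => hxDi k j]
    exact Finset.sum_eq_single_of_mem k hk fun j _ hjk => hxD k j hjk.symm
  rw [Finset.sum_congr rfl hdiag]
  ring

end
end

section
/- Let X be a measurable space, P a Markov kernel on X, V : X → ℝ measurable with V(x) ≥ 1, satisfying ∫ V(y) P(x,dy) ≤ λ·V(x) + b·1_K(x) for all x (λ ∈ (0,1), b < ∞, K measurable), and μ an initial distribution with ∫ V dμ < ∞. Let q : X × X → ℝ be jointly measurable with ∫ q(x,y) P(x,dy) = 0 and ∫ q(x,y)² P(x,dy) ≤ G·V(x) for all x, and f̂ : X → ℝ measurable with |f̂(x)| ≤ c·√(V(x)) for all x. Under the chain law P_μ set D_j = q(Φ_{j−1},Φ_j) and M_n = ∑_{j=1}^n D_j. Then (1/n)·E_μ[ f̂(Φ_n) M_n ] → 0 as n → ∞. -/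
open MeasureTheory ProbabilityTheory Filter
open scoped ENNReal NNReal Topology

noncomputable section

lemma bt_law {X : Type*} [MeasurableSpace X] (P : Kernel X X) [IsMarkovKernel P]
    (μ : Measure X) (Pμ : Measure (ℕ → X)) (hPμ : IsMarkovChainLaw μ P Pμ) (n : ℕ) :
    Pμ.map (fun ω => ((fun i : Fin (n + 1) => ω i), ω (n + 1)))
      = (Pμ.map (fun ω => (fun i : Fin (n + 1) => ω i))) ⊗ₘ
        (P.comap (fun x : Fin (n + 1) → X => x (Fin.last n)) (measurable_pi_apply _)) := by
  obtain ⟨hp, -, h⟩ := hPμ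
  have hr : Measurable (fun ω : ℕ → X => (fun i : Fin (n + 1) => ω i)) := by fun_prop
  have hr2 : Measurable (fun ω : ℕ → X => ((fun i : Fin (n + 1) => ω i), ω (n + 1))) := by fun_prop
  have : IsProbabilityMeasure (Pμ.map (fun ω => (fun i : Fin (n + 1) => ω i))) :=
    Measure.isProbabilityMeasure_map hr.aemeasurable
  have : IsProbabilityMeasure (Pμ.map (fun ω => ((fun i : Fin (n + 1) => ω i), ω (n + 1)))) :=
    Measure.isProbabilityMeasure_map hr2.aemeasurable
  refine Measure.ext_prod fun {s} {t} hs ht => ?_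
  have h1 := h n (s.indicator 1) (t.indicator 1) (measurable_one.indicator hs)
    (measurable_one.indicator ht)
  rw [Measure.compProd_apply_prod hs ht, Measure.map_apply hr2 (hs.prod ht),
    ← lintegral_indicator hs, lintegral_map _ hr]
  · rw [← lintegral_indicator_one (hr2 (hs.prod ht))]
    convert h1 using 1
    · refine lintegral_congr fun ω => ?_
      by_cases h1 : (fun i : Fin (n + 1) => ω i) ∈ s <;> by_cases h2 : ω (n + 1) ∈ t <;>
        simp [Set.indicator, h1, h2]
    · refine lintegral_congr fun ω => ?_
      rw [lintegral_indicator_one ht]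
      by_cases h1 : (fun i : Fin (n + 1) => ω i) ∈ s <;> simp [Set.indicator, h1]
  · exact (Kernel.measurable_coe _ ht).indicator hs

lemma bt_memLp {Ω : Type*} [MeasurableSpace Ω] (ν : Measure Ω) (f : Ω → ℝ) (hf : Measurable f)
    (A : ℝ) (hA : 0 ≤ A) (h : ∫⁻ ω, ENNReal.ofReal (f ω ^ 2) ∂ν ≤ ENNReal.ofReal A) :
    MemLp f 2 ν ∧ ∫ ω, f ω ^ 2 ∂ν ≤ A := by
  constructor
  · rw [memLp_two_iff_integrable_sq hf.aestronglyMeasurable]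
    refine ⟨(hf.pow_const 2).aestronglyMeasurable, ?_⟩
    rw [hasFiniteIntegral_iff_ofReal (ae_of_all _ fun ω => sq_nonneg _)]
    exact h.trans_lt ENNReal.ofReal_lt_top
  · rw [integral_eq_lintegral_of_nonneg_ae (ae_of_all _ fun ω => sq_nonneg _)
      (hf.pow_const 2).aestronglyMeasurable]
    exact ENNReal.toReal_le_of_le_ofReal hA h

/-- The boundary term vanishes: `(1/n)·E_μ[f̂(Φ_n) M_n] → 0` as `n → ∞`. -/
theorem boundary_term_vanishes {X : Type*} [MeasurableSpace X]
    (P : Kernel X X) [IsMarkovKernel P]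
    (V : X → ℝ) (hVmeas : Measurable V) (hV1 : ∀ x, 1 ≤ V x)
    (K : Set X) (hK : MeasurableSet K)
    (l b : ℝ) (hl0 : 0 < l) (hl1 : l < 1) (hb : 0 ≤ b)
    (hdrift : ∀ x, ∫⁻ y, ENNReal.ofReal (V y) ∂(P x)
      ≤ ENNReal.ofReal (l * V x + b * K.indicator (fun _ => 1) x))
    (μ : Measure X) [IsProbabilityMeasure μ]
    (hμV : ∫⁻ x, ENNReal.ofReal (V x) ∂μ < ⊤)
    (q : X → X → ℝ) (hq_meas : Measurable (Function.uncurry q))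
    (G : ℝ) (hG : 0 ≤ G)
    (hq_mean : ∀ x, ∫ y, q x y ∂(P x) = 0)
    (hq_sq : ∀ x, ∫⁻ y, ENNReal.ofReal ((q x y) ^ 2) ∂(P x) ≤ ENNReal.ofReal (G * V x))
    (fhat : X → ℝ) (hfhat_meas : Measurable fhat)
    (c : ℝ) (hc : 0 ≤ c) (hfhat_bdd : ∀ x, |fhat x| ≤ c * Real.sqrt (V x))
    (Pμ : Measure (ℕ → X)) (hPμ : IsMarkovChainLaw μ P Pμ)
    (M : ℕ → (ℕ → X) → ℝ)
    (hM : ∀ n ω, M n ω = ∑ j ∈ Finset.range n, q (ω j) (ω (j + 1))) :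
    Tendsto (fun n : ℕ => (1 / (n : ℝ)) * ∫ ω, fhat (ω n) * M n ω ∂Pμ)
      atTop (nhds 0) := by
  have hlaw := bt_law P μ Pμ hPμ
  obtain ⟨hp, h0, h⟩ := hPμ
  obtain ⟨A, hA0, hA1, hA2⟩ : ∃ A : ℝ, 0 ≤ A ∧
      ∫⁻ x, ENNReal.ofReal (V x) ∂μ ≤ ENNReal.ofReal A ∧ l * A + b ≤ A := by
    have h1l : 0 < 1 - l := by linarith
    have hbl : 0 ≤ b / (1 - l) := div_nonneg hb h1l.le
    refine ⟨(∫⁻ x, ENNReal.ofReal (V x) ∂μ).toReal + b / (1 - l), by positivity, ?_, ?_⟩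
    · rw [ENNReal.ofReal_add ENNReal.toReal_nonneg hbl, ENNReal.ofReal_toReal hμV.ne]
      exact le_self_add
    · have e : (1 - l) * (b / (1 - l)) = b := by field_simp
      have : 0 ≤ (∫⁻ x, ENNReal.ofReal (V x) ∂μ).toReal := ENNReal.toReal_nonneg
      nlinarith
  have hVm : Measurable fun x => ENNReal.ofReal (V x) := hVmeas.ennreal_ofReal
  have hL : ∀ n, ∫⁻ ω, ENNReal.ofReal (V (ω n)) ∂Pμ ≤ ENNReal.ofReal A := by
    intro n
    induction n with
    | zero =>
      rw [← h0, lintegral_map hVm (measurable_pi_apply 0)] at hA1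
      exact hA1
    | succ n ih =>
      have h1 := h n 1 _ measurable_one hVm
      simp only [Pi.one_apply, one_mul] at h1
      rw [h1]
      calc ∫⁻ ω, ∫⁻ y, ENNReal.ofReal (V y) ∂(P (ω n)) ∂Pμ
          ≤ ∫⁻ ω, (ENNReal.ofReal l * ENNReal.ofReal (V (ω n)) + ENNReal.ofReal b) ∂Pμ := by
            refine lintegral_mono fun ω => (hdrift _).trans ?_
            rw [← ENNReal.ofReal_mul hl0.le, ← ENNReal.ofReal_add
              (mul_nonneg hl0.le (zero_le_one.trans (hV1 _))) hb]
            refine ENNReal.ofReal_le_ofReal ?_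
            by_cases hk : ω n ∈ K <;> simp [hk, hb]
        _ = ENNReal.ofReal l * ∫⁻ ω, ENNReal.ofReal (V (ω n)) ∂Pμ + ENNReal.ofReal b := by
            rw [lintegral_add_right _ measurable_const, lintegral_const_mul _ (by fun_prop)]
            simp
        _ ≤ ENNReal.ofReal l * ENNReal.ofReal A + ENNReal.ofReal b := by gcongr
        _ ≤ ENNReal.ofReal A := by
            rw [← ENNReal.ofReal_mul hl0.le, ← ENNReal.ofReal_add (mul_nonneg hl0.le hA0) hb]
            exact ENNReal.ofReal_le_ofReal hA2
  have hf := fun n => bt_memLp Pμ (fun ω => fhat (ω n)) (by fun_prop) (c ^ 2 * A) (by positivity) (by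
    calc ∫⁻ ω, ENNReal.ofReal (fhat (ω n) ^ 2) ∂Pμ
        ≤ ∫⁻ ω, ENNReal.ofReal (c ^ 2) * ENNReal.ofReal (V (ω n)) ∂Pμ := by
          refine lintegral_mono fun ω => ?_
          rw [← ENNReal.ofReal_mul (sq_nonneg c)]
          refine ENNReal.ofReal_le_ofReal ?_
          have := pow_le_pow_left₀ (abs_nonneg _) (hfhat_bdd (ω n)) 2
          rwa [sq_abs, mul_pow, Real.sq_sqrt (zero_le_one.trans (hV1 _))] at this
      _ = ENNReal.ofReal (c ^ 2) * ∫⁻ ω, ENNReal.ofReal (V (ω n)) ∂Pμ :=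
          lintegral_const_mul _ (by fun_prop)
      _ ≤ _ := by
          rw [ENNReal.ofReal_mul (sq_nonneg c)]
          gcongr
          exact hL n)
  have hqm : ∀ i j : ℕ, Measurable (fun ω : ℕ → X => q (ω i) (ω j)) := by
    intro i j
    have h1 : Measurable (fun ω : ℕ → X => (ω i, ω j)) := by fun_prop
    exact hq_meas.comp h1
  have hr : ∀ n, Measurable (fun ω : ℕ → X => (fun i : Fin (n + 1) => ω i)) := by
    intro n; fun_prop
  have hr2 : ∀ n, Measurable (fun ω : ℕ → X => ((fun i : Fin (n + 1) => ω i), ω (n + 1))) := by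
    intro n; fun_prop
  have hqp : ∀ n, Measurable (fun z : (Fin (n + 1) → X) × X => q (z.1 (Fin.last n)) z.2) :=
by
    intro n
    have h1 : Measurable (fun z : (Fin (n + 1) → X) × X => (z.1 (Fin.last n), z.2)) := by fun_prop
    exact hq_meas.comp h1
  have hνp : ∀ n, IsProbabilityMeasure (Pμ.map (fun ω => (fun i : Fin (n + 1) => ω i))) :=
    fun n => Measure.isProbabilityMeasure_map (hr n).aemeasurable
  have hD := fun n => bt_memLp Pμ (fun ω => q (ω n) (ω (n + 1))) (hqm _ _) (G * A)
    (by positivity) (by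
    calc ∫⁻ ω, ENNReal.ofReal (q (ω n) (ω (n + 1)) ^ 2) ∂Pμ
        = ∫⁻ z, ENNReal.ofReal (q (z.1 (Fin.last n)) z.2 ^ 2)
            ∂(Pμ.map (fun ω => ((fun i : Fin (n + 1) => ω i), ω (n + 1)))) := by
          rw [lintegral_map ((hqp n).pow_const 2).ennreal_ofReal (hr2 n)]
          simp
      _ = ∫⁻ ω, ∫⁻ y, ENNReal.ofReal (q (ω n) y ^ 2) ∂(P (ω n)) ∂Pμ := by
          have := hνp n
          have hm := ((hqp n).pow_const 2).ennreal_ofReal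
          rw [hlaw n, Measure.lintegral_compProd hm, lintegral_map hm.lintegral_kernel_prod_right' (hr n)]
          simp
      _ ≤ ∫⁻ ω, ENNReal.ofReal G * ENNReal.ofReal (V (ω n)) ∂Pμ := by
          refine lintegral_mono fun ω => ?_
          rw [← ENNReal.ofReal_mul hG]
          exact hq_sq _
      _ = ENNReal.ofReal G * ∫⁻ ω, ENNReal.ofReal (V (ω n)) ∂Pμ :=
          lintegral_const_mul _ (by fun_prop)
      _ ≤ _ := by
          rw [ENNReal.ofReal_mul hG]
          gcongr
          exact hL n)
  have hM' : ∀ n, M n = fun ω => ∑ j ∈ Finset.range n, q (ω j) (ω (j + 1)) :=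
    fun n => funext (hM n)
  have hML : ∀ n, MemLp (M n) 2 Pμ := by
    intro n
    rw [hM' n]
    exact memLp_finsetSum _ fun j _ => (hD j).1
  have hcross : ∀ n, ∫ ω, M n ω * q (ω n) (ω (n + 1)) ∂Pμ = 0 := by
    intro n
    have hint : Integrable (fun ω => M n ω * q (ω n) (ω (n + 1))) Pμ :=
      (hML n).integrable_mul (hD n).1
    let m : (Fin (n + 1) → X) → ℝ := fun x => ∑ j : Fin n, q (x j.castSucc) (x j.succ)
    have hm : Measurable m := Finset.measurable_sum _ fun j _ => by
      have h1 : Measurable (fun x : Fin (n + 1) → X => (x j.castSucc, x j.succ)) := by fun_prop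
      exact hq_meas.comp h1
    have hF : Measurable (fun z : (Fin (n + 1) → X) × X => m z.1 * q (z.1 (Fin.last n)) z.2) :=
      (hm.comp measurable_fst).mul (hqp n)
    have e : (fun ω => M n ω * q (ω n) (ω (n + 1))) =
        (fun z : (Fin (n + 1) → X) × X => m z.1 * q (z.1 (Fin.last n)) z.2) ∘
          (fun ω : ℕ → X => ((fun i : Fin (n + 1) => ω i), ω (n + 1))) := by
      funext ω
      simp [m, hM, Finset.sum_range]
    have := hνp n
    rw [e] at hint ⊢
    rw [← integrable_map_measure hF.aestronglyMeasurable (hr2 n).aemeasurable, hlaw n] at hint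
    have e2 := integral_map (μ := Pμ) (hr2 n).aemeasurable hF.aestronglyMeasurable
    simp only [Function.comp_def]
    rw [← e2, hlaw n, Measure.integral_compProd hint]
    simp [integral_const_mul, hq_mean]
  have hM2 : ∀ n : ℕ, ∫ ω, M n ω ^ 2 ∂Pμ ≤ n * (G * A) := by
    intro n
    induction n with
    | zero => simp [hM]
    | succ n ih =>
      have hi : Integrable (fun ω => M n ω * q (ω n) (ω (n + 1))) Pμ :=
        (hML n).integrable_mul (hD n).1
      have e : (fun ω => M (n + 1) ω ^ 2) = fun ω => (M n ω ^ 2 +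
          2 * (M n ω * q (ω n) (ω (n + 1)))) + q (ω n) (ω (n + 1)) ^ 2 := by
        funext ω
        rw [hM (n + 1), Finset.sum_range_succ, ← hM n]
        ring
      have hi2 : Integrable (fun ω => M n ω ^ 2 + 2 * (M n ω * q (ω n) (ω (n + 1)))) Pμ :=
        (hML n).integrable_sq.add (hi.const_mul 2)
      rw [e, integral_add hi2 (hD n).1.integrable_sq,
        integral_add (hML n).integrable_sq (hi.const_mul 2), integral_const_mul, hcross n]
      have := (hD n).2
      push_cast
      linarith
  have hbound : ∀ n : ℕ, 0 < n → ‖(1 / (n : ℝ)) * ∫ ω, fhat (ω n) * M n ω ∂Pμ‖ ≤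
      (c ^ 2 * A + G * A) / Real.sqrt n := by
    intro n hn
    have hn' : (0 : ℝ) < n := by exact_mod_cast hn
    set s := Real.sqrt n with hs
    have hs0 : 0 < s := Real.sqrt_pos.2 hn'
    have hss : s ^ 2 = n := Real.sq_sqrt hn'.le
    have h1 : ‖∫ ω, fhat (ω n) * M n ω ∂Pμ‖ ≤
        ∫ ω, (s * fhat (ω n) ^ 2 + s⁻¹ * M n ω ^ 2) ∂Pμ := by
      refine norm_integral_le_of_norm_le
        (((hf n).1.integrable_sq.const_mul s).add ((hML n).integrable_sq.const_mul s⁻¹))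
        (ae_of_all _ fun ω => ?_)
      rw [Real.norm_eq_abs]
      have e : s * fhat (ω n) ^ 2 + s⁻¹ * M n ω ^ 2
          = s⁻¹ * ((s * fhat (ω n)) ^ 2 + M n ω ^ 2) := by field_simp
      have e2 : fhat (ω n) * M n ω = s⁻¹ * ((s * fhat (ω n)) * M n ω) := by field_simp
      rw [e, e2, abs_mul, abs_of_pos (inv_pos.2 hs0)]
      refine mul_le_mul_of_nonneg_left ?_ (inv_pos.2 hs0).le
      generalize s * fhat (ω n) = u
      generalize M n ω = v
      rw [abs_le]
      constructor <;> nlinarith [sq_nonneg (u + v), sq_nonneg (u - v)]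
    rw [integral_add ((hf n).1.integrable_sq.const_mul s) ((hML n).integrable_sq.const_mul s⁻¹),
      integral_const_mul, integral_const_mul] at h1
    rw [norm_mul, Real.norm_of_nonneg (by positivity : 0 ≤ 1 / (n : ℝ))]
    have h2 := mul_le_mul_of_nonneg_left (hf n).2 hs0.le
    have h3 := mul_le_mul_of_nonneg_left (hM2 n) (inv_pos.2 hs0).le
    calc _ ≤ 1 / (n : ℝ) * (s * (c ^ 2 * A) + s⁻¹ * (n * (G * A))) := by
          gcongr
          linarith
      _ = _ := by
          rw [← hss]
          field_simp
  refine squeeze_zero_norm' ((eventually_gt_atTop 0).mono fun n hn => hbound n hn) ?_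
  exact tendsto_const_nhds.div_atTop (Real.tendsto_sqrt_atTop.comp tendsto_natCast_atTop_atTop)

end
end

section
/- Let X be a measurable space, θ₀ ∈ ℝ^d, and for each θ in a neighborhood B_ε(θ₀) let P(θ) be a Markov kernel on X with P(θ,x,dy) = p(θ,x,y)·P(θ₀,x,dy), where p is nonnegative, jointly measurable, p(θ₀,x,y) = 1, and θ ↦ p(θ,x,y) is differentiable at θ₀ with partial derivatives ∂_i p(θ₀,x,y). Assume: (i) there is a nonzero σ-finite measure ψ on X such that for every θ ∈ B_ε(θ₀), every measurable A with ψ(A) > 0, and every x, there exists n with P(θ)^n(x,A) > 0; (ii) there exist a measurable set K, δ > 0, m ∈ ℕ and a probability measure ν with P(θ)^m(x,·) ≥ δ·ν for all x ∈ K and θ ∈ B_ε(θ₀); (iii) there are V : X → [1,∞) measurable, λ ∈ (0,1), b < ∞ with ∫ V dP(θ)(x,·) ≤ λV(x) + b·1_K(x) for all x and θ ∈ B_ε(θ₀); (iv) for each i, with P^{(i)}(θ₀,x,dy) = ∂_i p(θ₀,x,y)P(θ₀,x,dy), the V-operator norm |||P^{(i)}(θ₀)|||_V is finite and |||(P(θ₀+h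 e_i)−P(θ₀))/h − P^{(i)}(θ₀)|||_V → 0 as h → 0; (v) g_{ij}(x) = ∫ ∂_i p(θ₀,x,y)·∂_j p(θ₀,x,y) P(θ₀,x,dy) satisfies sup_x g_{ii}(x)/V(x) < ∞ for each i; (vi) f : X → ℝ is measurable with sup_x |f(x)|/√(V(x)) < ∞. Let π be an invariant probability measure for P(θ₀) with ∫ V dπ < ∞, set α(θ₀) = ∫ f dπ and Σ ∈ ℝ^{d×d} with Σ_{ij} = ∫ g_{ij} dπ. Let μ be an initial distribution with ∫ V dμ < ∞, and under the chain law P_μ for P(θ₀) set α_n = (1/n)∑_{j=0}^{n−1} f(Φ_j), D_j = (∂_1 p(θ₀,Φ_{j−1},Φ_j), …, ∂_d p(θ₀,Φ_{j−1},Φ_j)) ∈ ℝ^d and M_n = ∑_{j=1}^n D_j. Then the laws of n^{−1/2}·α_n·M_n converge weakly, as n → ∞, to the centered multivariate Gaussian distribution on ℝ^d with covariance matrix α(θ₀)²·Σ. -/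
open MeasureTheory ProbabilityTheory Filter
open scoped ENNReal NNReal Topology

noncomputable section

/-- The `k`-step transition kernel `P^k`. -/
def kpow {X : Type*} [MeasurableSpace X] (P : Kernel X X) : ℕ → Kernel X X
  | 0 => Kernel.id
  | k + 1 => P ∘ₖ kpow P k

/-- One-step contraction of the weighted oscillation seminorm. -/
theorem hm_contract {X : Type*} (F : Submodule ℝ (X → ℝ)) (Q : F →ₗ[ℝ] F) (e v : F)
    (he : ∀ x, e.1 x = 1) (hv1 : ∀ x, 1 ≤ v.1 x)
    (hpos : ∀ u : F, (∀ x, 0 ≤ u.1 x) → ∀ x, 0 ≤ (Q u).1 x)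
    (hQe : Q e = e) (κ : ℝ) (hκ : 0 < κ)
    (hQv : ∀ x, (Q v).1 x ≤ v.1 x / 2 + κ)
    (J : F →ₗ[ℝ] ℝ) (hJpos : ∀ u : F, (∀ x, 0 ≤ u.1 x) → 0 ≤ J u) (hJe : J e = 1)
    (ε : ℝ) (hε : 0 < ε)
    (hmin : ∀ u : F, (∀ x, 0 ≤ u.1 x) → ∀ x, v.1 x ≤ 16 * κ → ε * J u ≤ (Q u).1 x) :
    ∃ β > 0, ∃ ρ, 0 ≤ ρ ∧ ρ < 1 ∧ ∀ g : F, ∀ A, 0 ≤ A →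
      (∀ x y, |g.1 x - g.1 y| ≤ A * (2 + β * v.1 x + β * v.1 y)) →
      ∀ x y, |(Q g).1 x - (Q g).1 y| ≤ (ρ * A) * (2 + β * v.1 x + β * v.1 y) := by
  set β := ε / (2 * κ) with hβ
  have hβ0 : 0 < β := by positivity
  have hβκ : β * κ = ε / 2 := by rw [hβ]; field_simp
  set η := min (1 / 4) (ε / 2) with hη
  have hη0 : 0 < η := by positivity
  have hη1 : η ≤ 1 / 4 := min_le_left _ _
  have hη2 : η ≤ ε / 2 := min_le_right _ _
  refine ⟨β, hβ0, 1 - η, by linarith, by linarith, ?_⟩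
  intro g A hA hg
  -- one sided estimate
  have key : ∀ x y, (Q g).1 x - (Q g).1 y ≤ ((1 - η) * A) * (2 + β * v.1 x + β * v.1 y) := by
    intro x y
    -- centering constant
    obtain ⟨c, hc⟩ : ∃ c : ℝ, ∀ z, |g.1 z - c| ≤ A * (1 + β * v.1 z) := by
      have : Nonempty X := ⟨x⟩
      refine ⟨⨆ z, (g.1 z - A * (1 + β * v.1 z)), fun z => ?_⟩
      have hle : ∀ a b, g.1 a - A * (1 + β * v.1 a) ≤ g.1 b + A * (1 + β * v.1 b) := by
        intro a b
        have := (abs_le.1 (hg a b)).2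
        nlinarith
      have hbdd : BddAbove (Set.range fun z => (g.1 z - A * (1 + β * v.1 z))) :=
        ⟨g.1 z + A * (1 + β * v.1 z), by rintro _ ⟨a, rfl⟩; exact hle a z⟩
      have h1 := le_ciSup hbdd z
      have h2 : (⨆ z, (g.1 z - A * (1 + β * v.1 z))) ≤ g.1 z + A * (1 + β * v.1 z) :=
        ciSup_le fun a => hle a z
      rw [abs_le]; constructor <;> linarith
    set u1 : F := A • (e + β • v) - (g - c • e) with hu1
    set u2 : F := A • (e + β • v) + (g - c • e) with hu2
    have hu1p : ∀ z, 0 ≤ u1.1 z := by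
      intro z
      have := (abs_le.1 (hc z)).2
      simp [hu1, he]; linarith
    have hu2p : ∀ z, 0 ≤ u2.1 z := by
      intro z
      have := (abs_le.1 (hc z)).1
      simp [hu2, he]; linarith
    have hQ1 : ∀ z, (Q u1).1 z = A * (1 + β * (Q v).1 z) - ((Q g).1 z - c) := by
      intro z; simp [hu1, map_sub, map_add, map_smul, hQe, he]; ring
    have hQ2 : ∀ z, (Q u2).1 z = A * (1 + β * (Q v).1 z) + ((Q g).1 z - c) := by
      intro z; simp [hu2, map_sub, map_add, map_smul, hQe, he]; ring
    have hJ1 : J u1 = A * (1 + β * J v) - (J g - c) := by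
      simp [hu1, map_sub, map_add, map_smul, hJe]; ring
    have hJ2 : J u2 = A * (1 + β * J v) + (J g - c) := by
      simp [hu2, map_sub, map_add, map_smul, hJe]; ring
    have hJv : 0 ≤ J v := hJpos v fun z => by linarith [hv1 z]
    have hx := hQv x
    have hy := hQv y
    have hAβ : 0 ≤ A * β := by positivity
    have hx' : A * β * (Q v).1 x ≤ A * β * (v.1 x / 2 + κ) := mul_le_mul_of_nonneg_left hx hAβ
    have hy' : A * β * (Q v).1 y ≤ A * β * (v.1 y / 2 + κ) := mul_le_mul_of_nonneg_left hy hAβ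
    have e1 : A * β * κ = A * (ε / 2) := by rw [mul_assoc, hβκ]
    have hAη : A * η ≤ A * (ε / 2) := mul_le_mul_of_nonneg_left hη2 hA
    have hvs : 0 ≤ v.1 x + v.1 y := by linarith [hv1 x, hv1 y]
    have hs : 0 ≤ A * β * (v.1 x + v.1 y) := mul_nonneg hAβ hvs
    have hs2 : (A * β * (v.1 x + v.1 y)) * η ≤ (A * β * (v.1 x + v.1 y)) * (1 / 4) :=
      mul_le_mul_of_nonneg_left hη1 hs
    by_cases hcase : v.1 x + v.1 y ≤ 16 * κ
    · have h1 := hmin u1 hu1p x (by linarith [hv1 y])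
      have h2 := hmin u2 hu2p y (by linarith [hv1 x])
      rw [hQ1, hJ1] at h1
      rw [hQ2, hJ2] at h2
      have h3 : 0 ≤ ε * (A * (β * J v)) := by positivity
      nlinarith
    · push Not at hcase
      have h1 := hpos u1 hu1p x
      have h2 := hpos u2 hu2p y
      rw [hQ1] at h1
      rw [hQ2] at h2
      have h3 : A * β * (16 * κ) ≤ A * β * (v.1 x + v.1 y) :=
        mul_le_mul_of_nonneg_left hcase.le hAβ
      nlinarith
  intro x y
  rw [abs_le]
  constructor
  · have := key y x
    nlinarith
  · exact key x y

theorem hm_decay {X : Type*} (F : Submodule ℝ (X → ℝ)) (Q : F →ₗ[ℝ] F) (e v : F)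
    (he : ∀ x, e.1 x = 1) (hv1 : ∀ x, 1 ≤ v.1 x)
    (hpos : ∀ u : F, (∀ x, 0 ≤ u.1 x) → ∀ x, 0 ≤ (Q u).1 x)
    (hQe : Q e = e) (κ : ℝ) (hκ : 0 < κ)
    (hQv : ∀ x, (Q v).1 x ≤ v.1 x / 2 + κ)
    (J : F →ₗ[ℝ] ℝ) (hJpos : ∀ u : F, (∀ x, 0 ≤ u.1 x) → 0 ≤ J u) (hJe : J e = 1)
    (ε : ℝ) (hε : 0 < ε)
    (hmin : ∀ u : F, (∀ x, 0 ≤ u.1 x) → ∀ x, v.1 x ≤ 16 * κ → ε * J u ≤ (Q u).1 x)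
    (I : F →ₗ[ℝ] ℝ) (hIpos : ∀ u : F, (∀ x, 0 ≤ u.1 x) → 0 ≤ I u) (hIe : I e = 1)
    (hIQ : ∀ u, I (Q u) = I u) :
    ∃ C ρ, 0 ≤ C ∧ 0 ≤ ρ ∧ ρ < 1 ∧ ∀ g : F, (∀ x, |g.1 x| ≤ 2 * v.1 x) ∧ I g = 0 → ∀ n x,
      |((Q ^ n) g).1 x| ≤ C * ρ ^ n * v.1 x := by
  obtain ⟨β, hβ, ρ, hρ0, hρ1, hc⟩ :=
    hm_contract F Q e v he hv1 hpos hQe κ hκ hQv J hJpos hJe ε hε hmin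
  have hIv : 0 ≤ I v := hIpos v fun z => by linarith [hv1 z]
  refine ⟨(2 / β) * (2 + β + β * I v), ρ, by positivity, hρ0, hρ1, ?_⟩
  rintro g ⟨hg, hIg⟩
  have hit : ∀ n x y, |((Q ^ n) g).1 x - ((Q ^ n) g).1 y|
      ≤ (ρ ^ n * (2 / β)) * (2 + β * v.1 x + β * v.1 y) := by
    intro n
    induction n with
    | zero =>
      intro x y
      have h1 := hg x
      have h2 := hg y
      have h3 : (2 / β) * (2 + β * v.1 x + β * v.1 y) = 4 / β + 2 * v.1 x + 2 * v.1 y := by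
        field_simp; ring
      have h4 : 0 < 4 / β := by positivity
      simp only [pow_zero, Module.End.one_apply, one_mul]
      rw [h3]
      have := abs_sub (g.1 x) (g.1 y)
      linarith
    | succ n ih =>
      have := hc ((Q ^ n) g) (ρ ^ n * (2 / β)) (by positivity) ih
      intro x y
      have h := this x y
      rw [pow_succ' Q]
      simp only [Module.End.mul_apply]
      calc _ ≤ _ := h
        _ = _ := by ring
  have hIn : ∀ n, I ((Q ^ n) g) = 0 := by
    intro n
    induction n with
    | zero => simpa using hIg
    | succ n ih => rw [pow_succ']; simp only [Module.End.mul_apply]; rw [hIQ, ih]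
  intro n x
  set w := (Q ^ n) g with hw
  set a := ρ ^ n * (2 / β) with ha
  have ha0 : 0 ≤ a := by positivity
  have p1 := hIpos ((a * (2 + β * v.1 x)) • e + (a * β) • v - (w.1 x • e - w)) (by
    intro y
    have := (abs_le.1 (hit n x y)).2
    simp [he]; linarith)
  have p2 := hIpos ((a * (2 + β * v.1 x)) • e + (a * β) • v + (w.1 x • e - w)) (by
    intro y
    have := (abs_le.1 (hit n x y)).1
    simp [he]; linarith)
  simp [hIe, hIn, map_add, map_sub, map_smul, hw] at p1 p2
  have hb : |w.1 x| ≤ a * (2 + β * v.1 x) + a * β * I v := by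
    rw [abs_le]; constructor <;> simp only [hw] <;> linarith
  refine hb.trans ?_
  have e1 : 2 / β * (2 + β + β * I v) * ρ ^ n * v.1 x
      = a * ((2 + β + β * I v) * v.1 x) := by rw [ha]; ring
  rw [e1]
  have : 2 + β * v.1 x + β * I v ≤ (2 + β + β * I v) * v.1 x := by
    have := hv1 x
    have h5 : 0 ≤ β * I v := by positivity
    nlinarith
  nlinarith

theorem pre_sum_apply {X : Type*} (F : Submodule ℝ (X → ℝ)) (s : Finset ℕ) (a : ℕ → F) (x : X) :
    (∑ j ∈ s, a j).1 x = ∑ j ∈ s, (a j).1 x := by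
  rw [Submodule.coe_sum, Finset.sum_apply]

theorem resolvent_identity {A : Type*} [Ring A] [Algebra ℝ A] (T : A) (N : ℕ) (hN0 : (N : ℝ) ≠ 0) :
    (1 - T) * ((N : ℝ)⁻¹ • ∑ i ∈ Finset.range N, ∑ j ∈ Finset.range i, T ^ j)
      = 1 - (N : ℝ)⁻¹ • ∑ j ∈ Finset.range N, T ^ j := by
  rw [mul_smul_comm, Finset.mul_sum, Finset.sum_congr rfl fun i _ => mul_neg_geom_sum T i,
    Finset.sum_sub_distrib, Finset.sum_const, Finset.card_range, smul_sub,
    ← Nat.cast_smul_eq_nsmul ℝ, smul_smul, inv_mul_cancel₀ hN0, one_smul]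

/-- Approximate solutions of the Poisson equation. -/
theorem poisson_pre {X : Type*} (F : Submodule ℝ (X → ℝ)) (T : Module.End ℝ F) (e v k : F)
    (he : ∀ x, e.1 x = 1) (hv1 : ∀ x, 1 ≤ v.1 x)
    (hk0 : ∀ x, 0 ≤ k.1 x) (hk1 : ∀ x, k.1 x ≤ 1)
    (hpos : ∀ u : F, (∀ x, 0 ≤ u.1 x) → ∀ x, 0 ≤ (T u).1 x)
    (hTe : T e = e) (l b : ℝ) (hl0 : 0 < l) (hl1 : l < 1) (hb : 0 < b)
    (hTv : ∀ x, (T v).1 x ≤ l * v.1 x + b * k.1 x)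
    (J : F →ₗ[ℝ] ℝ) (hJpos : ∀ u : F, (∀ x, 0 ≤ u.1 x) → 0 ≤ J u) (hJe : J e = 1)
    (δ : ℝ) (hδ : 0 < δ) (m : ℕ)
    (hmin : ∀ u : F, (∀ x, 0 ≤ u.1 x) → ∀ x, δ * J u * k.1 x ≤ ((T ^ m) u).1 x)
    (I : F →ₗ[ℝ] ℝ) (hIpos : ∀ u : F, (∀ x, 0 ≤ u.1 x) → 0 ≤ I u) (hIe : I e = 1)
    (hIT : ∀ u, I (T u) = I u) :
    ∃ C ρ, 0 ≤ C ∧ 0 ≤ ρ ∧ ρ < 1 ∧ ∀ g : F, (∀ x, |g.1 x| ≤ 2 * v.1 x) ∧ I g = 0 →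
      ∃ u r : ℕ → F, r 0 = g ∧ (∀ n x, |(u n).1 x| ≤ C * ρ ^ n * v.1 x) ∧
        (∀ n x, |(r n).1 x| ≤ C * ρ ^ n * v.1 x) ∧
        ∀ n, u n - T (u n) = r n - r (n + 1) := by
  have h1l : 0 < 1 - l := by linarith
  set κ := b / (1 - l) with hκ
  have hκ0 : 0 < κ := by positivity
  have hκe : l * κ + b = κ := by rw [hκ]; field_simp; ring
  have hposn : ∀ n, ∀ u : F, (∀ x, 0 ≤ u.1 x) → ∀ x, 0 ≤ ((T ^ n) u).1 x := by
    intro n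
    induction n with
    | zero => intro u hu; simpa using hu
    | succ n ih =>
      intro u hu
      rw [pow_succ', Module.End.mul_apply]
      exact hpos _ (ih u hu)
  have hmono : ∀ n, ∀ u w : F, (∀ x, u.1 x ≤ w.1 x) → ∀ x, ((T ^ n) u).1 x ≤ ((T ^ n) w).1 x := by
    intro n u w h x
    have := hposn n (w - u) (fun z => by simpa using h z) x
    rw [map_sub] at this
    simpa using this
  have hTne : ∀ n, (T ^ n) e = e := by
    intro n
    induction n with
    | zero => simp
    | succ n ih => rw [pow_succ', Module.End.mul_apply, ih, hTe]
  have hTvb : ∀ n x, ((T ^ (n + 1)) v).1 x ≤ l * ((T ^ n) v).1 x + b * ((T ^ n) k).1 x := by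
    intro n x
    have := hmono n (T v) (l • v + b • k) (fun z => by simpa using hTv z) x
    rw [map_add, map_smul, map_smul] at this
    rw [pow_succ, Module.End.mul_apply]
    simpa using this
  have hTk1 : ∀ n x, ((T ^ n) k).1 x ≤ 1 := by
    intro n x
    have := hmono n k e (fun z => by rw [he]; exact hk1 z) x
    rwa [hTne, he] at this
  have hTk0 : ∀ n x, 0 ≤ ((T ^ n) k).1 x := fun n => hposn n k hk0
  have hTv1 : ∀ n x, 1 ≤ ((T ^ n) v).1 x := by
    intro n x
    have := hmono n e v (fun z => by rw [he]; exact hv1 z) x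
    rwa [hTne, he] at this
  have hTnv : ∀ n x, ((T ^ n) v).1 x ≤ l ^ n * v.1 x + κ := by
    intro n x
    induction n with
    | zero => simp [hκ0.le]
    | succ n ih =>
      have h1 := hTvb n x
      have h2 := hTk1 n x
      have h3 := mul_le_mul_of_nonneg_left ih hl0.le
      have h4 := mul_le_mul_of_nonneg_left h2 hb.le
      rw [pow_succ' l]
      nlinarith
  have hTnv' : ∀ n x, ((T ^ n) v).1 x ≤ (1 + κ) * v.1 x := by
    intro n x
    have h1 := hTnv n x
    have h2 : l ^ n ≤ 1 := pow_le_one₀ hl0.le hl1.le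
    have h3 := hv1 x
    nlinarith
  have hvisit : ∀ (n : ℕ) x, (n : ℝ) * (1 - l) + ((T ^ n) v).1 x
      ≤ v.1 x + b * ∑ j ∈ Finset.range n, ((T ^ j) k).1 x := by
    intro n x
    induction n with
    | zero => simp
    | succ n ih =>
      rw [Finset.sum_range_succ]
      have h1 := hTvb n x
      have h2 := hTv1 n x
      push_cast
      nlinarith
  obtain ⟨n0, hn0⟩ := exists_nat_ge ((16 * κ + 1) / (1 - l))
  obtain ⟨n1, hn1⟩ := exists_nat_ge (2 / (1 - l))
  rw [div_le_iff₀ h1l] at hn0 hn1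
  set N := n0 + m + n1 + 1 with hN
  have hN0 : (0 : ℝ) < N := by rw [hN]; positivity
  have hNn1 : (n1 : ℝ) ≤ N := by rw [hN]; push_cast; linarith [Nat.cast_nonneg (α := ℝ) n0, Nat.cast_nonneg (α := ℝ) m]
  set Q : Module.End ℝ F := (N : ℝ)⁻¹ • ∑ j ∈ Finset.range N, T ^ j with hQ
  have hQa : ∀ u : F, Q u = (N : ℝ)⁻¹ • ∑ j ∈ Finset.range N, (T ^ j) u := by
    intro u; simp [hQ, LinearMap.sum_apply]
  have hQax : ∀ (u : F) x, (Q u).1 x = (N : ℝ)⁻¹ * ∑ j ∈ Finset.range N, ((T ^ j) u).1 x := by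
    intro u x
    rw [hQa, Submodule.coe_smul, Pi.smul_apply, pre_sum_apply, smul_eq_mul]
  have hQpos : ∀ u : F, (∀ x, 0 ≤ u.1 x) → ∀ x, 0 ≤ (Q u).1 x := by
    intro u hu x
    rw [hQax]
    exact mul_nonneg (by positivity) (Finset.sum_nonneg fun j _ => hposn j u hu x)
  have hQe : Q e = e := by
    rw [hQa]
    simp only [hTne, Finset.sum_const, Finset.card_range]
    rw [← Nat.cast_smul_eq_nsmul ℝ, smul_smul, inv_mul_cancel₀ hN0.ne', one_smul]
  have hgeom : ∑ j ∈ Finset.range N, l ^ j ≤ 1 / (1 - l) := by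
    have : ∑ j ∈ Finset.range N, l ^ j = (1 - l ^ N) / (1 - l) := by
      have := geom_sum_mul_neg l N
      field_simp
      linarith
    rw [this]
    gcongr
    have : 0 < l ^ N := by positivity
    linarith
  have hQv : ∀ x, (Q v).1 x ≤ v.1 x / 2 + κ := by
    intro x
    rw [hQax, inv_mul_le_iff₀ hN0]
    have hvx := hv1 x
    calc ∑ j ∈ Finset.range N, ((T ^ j) v).1 x
        ≤ ∑ j ∈ Finset.range N, (l ^ j * v.1 x + κ) := Finset.sum_le_sum fun j _ => hTnv j x
      _ = (∑ j ∈ Finset.range N, l ^ j) * v.1 x + N * κ := by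
          rw [Finset.sum_add_distrib, Finset.sum_mul]; simp
      _ ≤ (1 / (1 - l)) * v.1 x + N * κ := by gcongr
      _ ≤ (N / 2) * v.1 x + N * κ := by
          have : 1 / (1 - l) ≤ (N : ℝ) / 2 := by
            rw [div_le_iff₀ h1l]
            nlinarith
          gcongr
      _ = _ := by ring
  have hQmin : ∀ u : F, (∀ x, 0 ≤ u.1 x) → ∀ x, v.1 x ≤ 16 * κ →
      (δ / (b * N)) * J u ≤ (Q u).1 x := by
    intro u hu x hx
    rw [hQax]
    have hvis := hvisit n0 x
    have hTv0 := hTv1 n0 x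
    have hs : 1 ≤ b * ∑ j ∈ Finset.range n0, ((T ^ j) k).1 x := by linarith
    have hJu := hJpos u hu
    have h1 : ∀ j, δ * J u * ((T ^ j) k).1 x ≤ ((T ^ (j + m)) u).1 x := by
      intro j
      have := hmono j ((δ * J u) • k) ((T ^ m) u) (fun z => by simpa using hmin u hu z) x
      rw [map_smul] at this
      rw [pow_add, Module.End.mul_apply]
      simpa using this
    have h2 : ∑ j ∈ Finset.range n0, ((T ^ (j + m)) u).1 x
        ≤ ∑ j ∈ Finset.range N, ((T ^ j) u).1 x := by
      have : ∑ j ∈ Finset.range n0, ((T ^ (j + m)) u).1 x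
          = ∑ j ∈ (Finset.range n0).image (fun j => j + m), ((T ^ j) u).1 x := by
        rw [Finset.sum_image]
        intro a _ c _ h
        simpa using h
      rw [this]
      apply Finset.sum_le_sum_of_subset_of_nonneg
      · intro j hj
        simp only [Finset.mem_image, Finset.mem_range] at hj ⊢
        obtain ⟨a, ha, rfl⟩ := hj
        omega
      · intro j _ _
        exact hposn j u hu x
    have h3 : δ * J u * ∑ j ∈ Finset.range n0, ((T ^ j) k).1 x
        ≤ ∑ j ∈ Finset.range N, ((T ^ j) u).1 x := by
      rw [Finset.mul_sum]
      exact (Finset.sum_le_sum fun j _ => h1 j).trans h2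
    rw [le_inv_mul_iff₀ hN0]
    refine le_trans ?_ h3
    have h4 : (N : ℝ) * (δ / (b * N) * J u) = δ * J u * (1 / b) := by field_simp
    rw [h4]
    gcongr
    rw [div_le_iff₀ hb]
    linarith
  have hITn : ∀ n u, I ((T ^ n) u) = I u := by
    intro n u
    induction n with
    | zero => simp
    | succ n ih => rw [pow_succ', Module.End.mul_apply, hIT, ih]
  have hIQ : ∀ u, I (Q u) = I u := by
    intro u
    rw [hQa, map_smul, map_sum]
    simp only [hITn, Finset.sum_const, Finset.card_range, smul_eq_mul, nsmul_eq_mul]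
    field_simp
  obtain ⟨C, ρ, hC, hρ0, hρ1, hdec⟩ := hm_decay F Q e v he hv1 hQpos hQe κ hκ0 hQv J hJpos hJe
    (δ / (b * N)) (by positivity) hQmin I hIpos hIe hIQ
  set S : Module.End ℝ F := (N : ℝ)⁻¹ • ∑ i ∈ Finset.range N, ∑ j ∈ Finset.range i, T ^ j with hS
  have hSax : ∀ (u : F) x, (S u).1 x
      = (N : ℝ)⁻¹ * ∑ i ∈ Finset.range N, ∑ j ∈ Finset.range i, ((T ^ j) u).1 x := by
    intro u x
    have : S u = (N : ℝ)⁻¹ • ∑ i ∈ Finset.range N, ∑ j ∈ Finset.range i, (T ^ j) u := by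
      simp [hS, LinearMap.sum_apply]
    rw [this, Submodule.coe_smul, Pi.smul_apply, pre_sum_apply, smul_eq_mul]
    congr 1
    exact Finset.sum_congr rfl fun i _ => pre_sum_apply _ _ _ _
  have hST : (1 - T) * S = 1 - Q := by
    exact resolvent_identity T N hN0.ne'
  set D : ℝ := (N : ℝ)⁻¹ * ∑ i ∈ Finset.range N, ∑ j ∈ Finset.range i, (1 + κ) with hD
  have hD0 : 0 ≤ D := by
    rw [hD]
    exact mul_nonneg (by positivity)
      (Finset.sum_nonneg fun i _ => Finset.sum_nonneg fun j _ => by linarith)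
  have hSb : ∀ (w : F) (a : ℝ), 0 ≤ a → (∀ x, |w.1 x| ≤ a * v.1 x) → ∀ x,
      |(S w).1 x| ≤ a * D * v.1 x := by
    intro w a ha hw x
    have hTw : ∀ j, |((T ^ j) w).1 x| ≤ a * ((1 + κ) * v.1 x) := by
      intro j
      have p1 := hmono j w (a • v) (fun z => by simpa using (abs_le.1 (hw z)).2) x
      have p2 := hmono j (-(a • v)) w (fun z => by simpa using (abs_le.1 (hw z)).1) x
      rw [map_smul] at p1
      rw [map_neg, map_smul] at p2
      simp only [Submodule.coe_smul, Pi.smul_apply, smul_eq_mul, Submodule.coe_neg, Pi.neg_apply] at p1 p2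
      have := mul_le_mul_of_nonneg_left (hTnv' j x) ha
      rw [abs_le]; constructor <;> linarith
    rw [hSax, abs_mul, abs_of_pos (by positivity : (0 : ℝ) < (N : ℝ)⁻¹)]
    calc (N : ℝ)⁻¹ * |∑ i ∈ Finset.range N, ∑ j ∈ Finset.range i, ((T ^ j) w).1 x|
        ≤ (N : ℝ)⁻¹ * ∑ i ∈ Finset.range N, ∑ j ∈ Finset.range i, (a * ((1 + κ) * v.1 x)) := by
          gcongr
          refine (Finset.abs_sum_le_sum_abs _ _).trans (Finset.sum_le_sum fun i _ => ?_)
          exact (Finset.abs_sum_le_sum_abs _ _).trans (Finset.sum_le_sum fun j _ => hTw j)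
      _ = a * D * v.1 x := by
          rw [hD]
          simp only [Finset.mul_sum, Finset.sum_mul]
          exact Finset.sum_congr rfl fun i _ => Finset.sum_congr rfl fun j _ => by ring
  refine ⟨max C (C * D), ρ, le_max_of_le_left hC, hρ0, hρ1, ?_⟩
  intro g hg
  refine ⟨fun n => S ((Q ^ n) g), fun n => (Q ^ n) g, by simp, ?_, ?_, ?_⟩
  · intro n x
    refine (hSb _ (C * ρ ^ n) (by positivity) (hdec g hg n) x).trans ?_
    have : C * D ≤ max C (C * D) := le_max_right _ _
    have h2 : 0 ≤ ρ ^ n * v.1 x := mul_nonneg (by positivity) (by linarith [hv1 x])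
    nlinarith
  · intro n x
    refine (hdec g hg n x).trans ?_
    have : C ≤ max C (C * D) := le_max_left _ _
    have h2 : 0 ≤ ρ ^ n * v.1 x := mul_nonneg (by positivity) (by linarith [hv1 x])
    nlinarith
  · intro n
    have h := congrArg (fun L : Module.End ℝ F => L ((Q ^ n) g)) hST
    simp only [Module.End.mul_apply, LinearMap.sub_apply, Module.End.one_apply] at h
    simp only [pow_succ' Q, Module.End.mul_apply]
    exact h

theorem integrable_of_lint {X : Type*} [MeasurableSpace X] {V : X → ℝ} (hVmeas : Measurable V)
    (hV1 : ∀ x, 1 ≤ V x) {ρ : Measure X} (h : ∫⁻ y, ENNReal.ofReal (V y) ∂ρ < ⊤) :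
    Integrable V ρ := by
  refine ⟨hVmeas.aestronglyMeasurable, ?_⟩
  rw [hasFiniteIntegral_iff_ofReal]
  · exact h
  · exact Eventually.of_forall fun x => by have := hV1 x; simp only [Pi.zero_apply]; linarith

theorem integrable_of_dom {X E : Type*} [MeasurableSpace X] [NormedAddCommGroup E]
    [MeasurableSpace E] [BorelSpace E] [SecondCountableTopology E] {V : X → ℝ}
    {ρ : Measure X} (hV : Integrable V ρ) {g : X → E} (hg : Measurable g) {c : ℝ}
    (hgc : ∀ x, ‖g x‖ ≤ c * V x) : Integrable g ρ :=
  Integrable.mono' (hV.const_mul c) hg.aestronglyMeasurable (Eventually.of_forall hgc)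

/-- Measurable functions of growth at most `V`. -/
def WS {X : Type*} [MeasurableSpace X] (V : X → ℝ) : Submodule ℝ (X → ℝ) where
  carrier := {g | Measurable g ∧ ∃ c : ℝ, ∀ x, |g x| ≤ c * V x}
  add_mem' := by
    rintro a c ⟨ha, ca, hca⟩ ⟨hc, cc, hcc⟩
    refine ⟨ha.add hc, ca + cc, fun x => ?_⟩
    have := abs_add_le (a x) (c x)
    have h1 := hca x
    have h2 := hcc x
    simp only [Pi.add_apply]
    linarith
  zero_mem' := ⟨measurable_const, 0, fun x => by simp⟩
  smul_mem' := by
    rintro r a ⟨ha, ca, hca⟩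
    refine ⟨ha.const_smul r, |r| * ca, fun x => ?_⟩
    simp only [Pi.smul_apply, smul_eq_mul, abs_mul, mul_assoc]
    exact mul_le_mul_of_nonneg_left (hca x) (abs_nonneg r)

theorem drift_integral {X : Type*} [MeasurableSpace X] {V : X → ℝ} (hVmeas : Measurable V)
    (hV1 : ∀ x, 1 ≤ V x) {ρ : Measure X} {r : ℝ} (hr : 0 ≤ r)
    (h : ∫⁻ y, ENNReal.ofReal (V y) ∂ρ ≤ ENNReal.ofReal r) :
    ∫ y, V y ∂ρ ≤ r := by
  rw [integral_eq_lintegral_of_nonneg_ae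
    (Eventually.of_forall fun x => by have := hV1 x; simp only [Pi.zero_apply]; linarith)
    hVmeas.aestronglyMeasurable]
  exact ENNReal.toReal_le_of_le_ofReal hr h

theorem poisson_exists {X : Type*} [MeasurableSpace X] (P : Kernel X X) [IsMarkovKernel P]
    (K : Set X) (hK : MeasurableSet K) (δ : ℝ) (hδ : 0 < δ) (m : ℕ)
    (ν : Measure X) [IsProbabilityMeasure ν]
    (hminor : ∀ x ∈ K, ∀ A : Set X, MeasurableSet A →
      ENNReal.ofReal δ * ν A ≤ (kpow P m) x A)
    (V : X → ℝ) (hVmeas : Measurable V) (hV1 : ∀ x, 1 ≤ V x)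
    (l b : ℝ) (hl0 : 0 < l) (hl1 : l < 1) (hb : 0 ≤ b)
    (hdrift : ∀ x, ∫⁻ y, ENNReal.ofReal (V y) ∂(P x)
        ≤ ENNReal.ofReal (l * V x + b * K.indicator (fun _ => 1) x))
    (π : Measure X) [IsProbabilityMeasure π]
    (hπ_inv : π.bind (fun x => P x) = π)
    (hπV : ∫⁻ x, ENNReal.ofReal (V x) ∂π < ⊤) :
    ∃ C, 0 ≤ C ∧ ∀ g : X → ℝ, Measurable g → (∀ x, |g x| ≤ V x) →
      ∃ h : X → ℝ, Measurable h ∧ (∀ x, |h x| ≤ C * V x) ∧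
        ∀ x, h x - ∫ y, h y ∂(P x) = g x - ∫ y, g y ∂π := by
  have hind0 : ∀ x, 0 ≤ K.indicator (fun _ => (1 : ℝ)) x := fun x =>
    Set.indicator_nonneg (fun _ _ => zero_le_one) x
  have hind1 : ∀ x, K.indicator (fun _ => (1 : ℝ)) x ≤ 1 := fun x =>
    Set.indicator_le_self' (fun _ _ => zero_le_one) x
  have hV0 : ∀ x, 0 ≤ V x := fun x => by linarith [hV1 x]
  have hPV : ∀ x, Integrable V (P x) := fun x =>
    integrable_of_lint hVmeas hV1 ((hdrift x).trans_lt ENNReal.ofReal_lt_top)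
  have hPVle : ∀ x, ∫ y, V y ∂(P x) ≤ l * V x + b * K.indicator (fun _ => 1) x := fun x =>
    drift_integral hVmeas hV1
      (add_nonneg (mul_nonneg hl0.le (hV0 x)) (mul_nonneg hb (hind0 x))) (hdrift x)
  have hπV' : Integrable V π := integrable_of_lint hVmeas hV1 hπV
  have hint : ∀ (u : WS V) {ρ : Measure X}, Integrable V ρ → Integrable u.1 ρ := by
    rintro ⟨u, hu, c, hc⟩ ρ hρ
    exact integrable_of_dom hρ hu (c := c) hc
  -- the operator
  have hTmem : ∀ u : WS V, (fun x => ∫ y, u.1 y ∂(P x)) ∈ WS V := by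
    intro u
    obtain ⟨hu, c, hc⟩ := u.2
    refine ⟨(hu.stronglyMeasurable.integral_kernel).measurable, |c| * (l + b), fun x => ?_⟩
    have h1 : |∫ y, u.1 y ∂(P x)| ≤ ∫ y, |c| * V y ∂(P x) := by
      refine (abs_integral_le_integral_abs).trans ?_
      refine integral_mono (hint u (hPV x)).abs ((hPV x).const_mul _) fun y => ?_
      exact (hc y).trans (mul_le_mul_of_nonneg_right (le_abs_self c) (hV0 y))
    rw [integral_const_mul] at h1
    refine h1.trans ?_
    rw [mul_assoc]
    refine mul_le_mul_of_nonneg_left ((hPVle x).trans ?_) (abs_nonneg c)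
    have := mul_le_mul_of_nonneg_left (hind1 x) hb
    nlinarith [hV1 x]
  let T : Module.End ℝ (WS V) :=
    { toFun := fun u => ⟨fun x => ∫ y, u.1 y ∂(P x), hTmem u⟩
      map_add' := by
        intro u w
        ext x
        exact integral_add (hint u (hPV x)) (hint w (hPV x))
      map_smul' := by
        intro r u
        ext x
        exact integral_const_mul r _ }
  have hT : ∀ (u : WS V) x, (T u).1 x = ∫ y, u.1 y ∂(P x) := fun u x => rfl
  let integ (ρ : Measure X) (hρ : Integrable V ρ) : WS V →ₗ[ℝ] ℝ :=
    { toFun := fun u => ∫ y, u.1 y ∂ρ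
      map_add' := fun u w => integral_add (hint u hρ) (hint w hρ)
      map_smul' := fun r u => integral_const_mul r _ }
  have hinteg : ∀ (ρ : Measure X) (hρ : Integrable V ρ) (u : WS V),
      integ ρ hρ u = ∫ y, u.1 y ∂ρ := fun _ _ _ => rfl
  let e : WS V := ⟨fun _ => 1, measurable_const, 1, fun x => by simpa using hV1 x⟩
  let v : WS V := ⟨V, hVmeas, 1, fun x => by rw [abs_of_nonneg (hV0 x), one_mul]⟩
  let k : WS V := ⟨K.indicator (fun _ => 1), measurable_const.indicator hK, 1, fun x => by
    rw [abs_of_nonneg (hind0 x), one_mul]; exact (hind1 x).trans (hV1 x)⟩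
  -- powers
  have hkfin : ∀ n x, ∫⁻ y, ENNReal.ofReal (V y) ∂(kpow P n x) < ⊤ := by
    intro n x
    induction n with
    | zero =>
      simp only [kpow, Kernel.id_apply]
      rw [lintegral_dirac' _ hVmeas.ennreal_ofReal]
      exact ENNReal.ofReal_lt_top
    | succ n ih =>
      simp only [kpow]
      rw [Kernel.lintegral_comp _ _ _ hVmeas.ennreal_ofReal]
      have hle : ∀ y, ∫⁻ z, ENNReal.ofReal (V z) ∂(P y) ≤ ENNReal.ofReal (l + b) * ENNReal.ofReal (V y) := by
        intro y
        rw [← ENNReal.ofReal_mul (by linarith)]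
        refine (hdrift y).trans (ENNReal.ofReal_le_ofReal ?_)
        have := mul_le_mul_of_nonneg_left (hind1 y) hb
        nlinarith [hV1 y]
      refine (lintegral_mono hle).trans_lt ?_
      rw [lintegral_const_mul _ hVmeas.ennreal_ofReal]
      exact ENNReal.mul_lt_top ENNReal.ofReal_lt_top ih
  have hkint : ∀ n x, Integrable V (kpow P n x) := fun n x =>
    integrable_of_lint hVmeas hV1 (hkfin n x)
  have hTpow : ∀ n (u : WS V) x, ((T ^ n) u).1 x = ∫ y, u.1 y ∂(kpow P n x) := by
    intro n
    induction n with
    | zero =>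
      intro u x
      simp only [kpow, Kernel.id_apply, pow_zero, Module.End.one_apply]
      rw [integral_dirac' _ _ u.2.1.stronglyMeasurable]
    | succ n ih =>
      intro u x
      rw [pow_succ, Module.End.mul_apply, ih]
      have := hint u (hkint (n + 1) x)
      simp only [kpow] at this ⊢
      rw [Kernel.integral_comp this]
      rfl
  -- invariance
  have hπT : ∀ u : WS V, ∫ x, (∫ y, u.1 y ∂(P x)) ∂π = ∫ x, u.1 x ∂π := by
    intro u
    have h1 : (P ∘ₖ Kernel.const Unit π) () = π := by
      rw [Kernel.comp_apply, Kernel.const_apply]; exact hπ_inv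
    have h2 := Kernel.integral_comp (η := P) (κ := Kernel.const Unit π) (a := ()) (f := u.1)
      (by rw [h1]; exact hint u hπV')
    rw [h1, Kernel.const_apply] at h2
    exact h2.symm
  have hKne : K.Nonempty := by
    by_contra hne
    rw [Set.not_nonempty_iff_eq_empty] at hne
    have h1 := hπT v
    have h2 : ∫ x, (∫ y, v.1 y ∂(P x)) ∂π ≤ ∫ x, l * V x ∂π := by
      refine integral_mono (hint (T v) hπV') (hπV'.const_mul l) fun x => ?_
      have := hPVle x
      rw [hne] at this
      simpa using this
    rw [integral_const_mul] at h2
    have h3 : ∫ x, (1 : ℝ) ∂π ≤ ∫ x, V x ∂π := integral_mono (integrable_const _) hπV' hV1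
    simp only [integral_const, probReal_univ, smul_eq_mul, mul_one] at h3
    have h4 : ∫ x, v.1 x ∂π = ∫ x, V x ∂π := rfl
    nlinarith
  have hle : ∀ x ∈ K, ENNReal.ofReal δ • ν ≤ kpow P m x := by
    intro x hx
    rw [Measure.le_iff]
    intro s hs
    simpa using hminor x hx s hs
  have hνV : Integrable V ν := by
    obtain ⟨x, hx⟩ := hKne
    have := (hkint m x).mono_measure (hle x hx)
    rwa [integrable_smul_measure (by simpa using hδ) ENNReal.ofReal_ne_top] at this
  obtain ⟨C, ρ, hC, hρ0, hρ1, hmain⟩ := poisson_pre (WS V) T e v k (fun _ => rfl) hV1 hind0 hind1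
    (fun u hu x => integral_nonneg hu) (by ext x; simp [hT, e]) l (b + 1) hl0 hl1 (by linarith)
    (fun x => by
      have h1 := hPVle x
      have h2 := hind0 x
      simp only [hT, v, k]
      linarith)
    (integ ν hνV) (fun u hu => integral_nonneg hu) (by simp [hinteg, e]) δ hδ m
    (by
      intro u hu x
      rw [hTpow, hinteg ν hνV]
      by_cases hx : x ∈ K
      · have h1 := integral_mono_measure (hle x hx) (Eventually.of_forall hu)
          (hint u (hkint m x))
        rw [integral_smul_measure, ENNReal.toReal_ofReal hδ.le, smul_eq_mul] at h1
        simpa [k, hx] using h1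
      · simp only [k, Set.indicator_of_notMem hx, mul_zero]
        exact integral_nonneg hu)
    (integ π hπV') (fun u hu => integral_nonneg hu) (by simp [hinteg, e])
    (fun u => hπT u)
  set a : ℝ := 1 + ∫ x, V x ∂π with ha
  have hIV : 0 ≤ ∫ x, V x ∂π := integral_nonneg hV0
  have ha0 : 0 < a := by linarith
  have hsumρ : Summable fun n => C * ρ ^ n := (summable_geometric_of_lt_one hρ0 hρ1).mul_left C
  refine ⟨a * ∑' n, C * ρ ^ n, mul_nonneg ha0.le (tsum_nonneg fun n => by positivity), ?_⟩
  intro g hg hgV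
  have hgπ : Integrable g π := integrable_of_dom hπV' hg (c := 1) (by simpa using hgV)
  have hgI : |∫ y, g y ∂π| ≤ ∫ x, V x ∂π :=
    abs_integral_le_integral_abs.trans (integral_mono hgπ.abs hπV' hgV)
  let g1 : WS V := ⟨fun x => a⁻¹ * (g x - ∫ y, g y ∂π), by fun_prop, 1, fun x => by
    rw [abs_mul, abs_of_pos (by positivity), one_mul, inv_mul_le_iff₀ ha0]
    have h1 := hgV x
    have h2 := abs_sub (g x) (∫ y, g y ∂π)
    have h3 := hV1 x
    rw [ha]
    nlinarith⟩
  obtain ⟨u, r, hr0, hu, hr, hur⟩ := hmain g1 ⟨fun x => by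
    have h1 := hgV x
    have h2 := abs_sub (g x) (∫ y, g y ∂π)
    have h3 := hV1 x
    simp only [g1, v]
    rw [abs_mul, abs_of_pos (by positivity), inv_mul_le_iff₀ ha0]
    rw [ha]
    nlinarith, by
    rw [hinteg π hπV']
    simp only [g1]
    rw [integral_const_mul, integral_sub hgπ (integrable_const _)]
    simp⟩
  have hsx : ∀ x, Summable fun n => (u n).1 x := fun x =>
    Summable.of_norm_bounded (hsumρ.mul_right (V x)) fun n => hu n x
  refine ⟨fun x => a * ∑' n, (u n).1 x, ?_, ?_, ?_⟩
  · refine Measurable.const_mul ?_ a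
    refine measurable_of_tendsto_metrizable (f := fun n x => ∑ i ∈ Finset.range n, (u i).1 x)
      (fun n => Finset.measurable_sum _ fun i _ => (u i).2.1) ?_
    rw [tendsto_pi_nhds]
    exact fun x => (hsx x).hasSum.tendsto_sum_nat
  · intro x
    rw [abs_mul, abs_of_pos ha0, mul_assoc]
    refine mul_le_mul_of_nonneg_left ?_ ha0.le
    rw [← tsum_mul_right]
    exact tsum_of_norm_bounded (f := fun n => (u n).1 x) (hsumρ.mul_right (V x)).hasSum
      fun n => hu n x
  · intro x
    have h1 : HasSum (fun n => ∫ y, (u n).1 y ∂(P x)) (∫ y, ∑' n, (u n).1 y ∂(P x)) := by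
      refine hasSum_integral_of_summable_integral_norm (fun n => hint (u n) (hPV x)) ?_
      refine Summable.of_nonneg_of_le (fun n => integral_nonneg fun y => norm_nonneg _) (fun n => ?_)
        (hsumρ.mul_right (∫ y, V y ∂(P x)))
      rw [← integral_const_mul]
      exact integral_mono (hint (u n) (hPV x)).norm ((hPV x).const_mul _) (hu n)
    have h2 : HasSum (fun n => (u n).1 x - ∫ y, (u n).1 y ∂(P x))
        (∑' n, (u n).1 x - ∫ y, ∑' n, (u n).1 y ∂(P x)) := (hsx x).hasSum.sub h1
    have h3 : ∀ n, (u n).1 x - ∫ y, (u n).1 y ∂(P x) = (r n).1 x - (r (n + 1)).1 x := by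
      intro n
      have := congrArg (fun w : WS V => w.1 x) (hur n)
      simpa [hT] using this
    have h4 : ∀ N, ∑ n ∈ Finset.range N, ((u n).1 x - ∫ y, (u n).1 y ∂(P x))
        = (r 0).1 x - (r N).1 x := by
      intro N
      rw [Finset.sum_congr rfl fun n _ => h3 n]
      exact Finset.sum_range_sub' (fun n => (r n).1 x) N
    have h5 : Tendsto (fun N => (r 0).1 x - (r N).1 x) atTop (𝓝 ((r 0).1 x - 0)) := by
      refine tendsto_const_nhds.sub ?_
      refine squeeze_zero_norm (fun n => hr n x) ?_
      have := (hsumρ.mul_right (V x)).tendsto_atTop_zero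
      exact this
    have h6 := h2.tendsto_sum_nat
    simp only [h4] at h6
    have h7 := tendsto_nhds_unique h6 h5
    rw [integral_const_mul, ← mul_sub, h7, hr0]
    simp only [g1, sub_zero]
    field_simp

theorem chain_joint {X : Type*} [MeasurableSpace X] (P : Kernel X X) [IsMarkovKernel P]
    (μ : Measure X) (Pμ : Measure (ℕ → X)) (hPμ : IsMarkovChainLaw μ P Pμ) (k : ℕ) :
    Pμ.map (fun ω => ((fun i : Fin (k + 1) => ω i), ω (k + 1)))
      = (Pμ.map (fun ω => (fun i : Fin (k + 1) => ω i))) ⊗ₘ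
        (P.comap (fun v : Fin (k + 1) → X => v (Fin.last k)) (measurable_pi_apply _)) := by
  obtain ⟨hprob, -, hstep⟩ := hPμ
  have hpre : Measurable (fun ω : ℕ → X => (fun i : Fin (k + 1) => ω i)) := by fun_prop
  have hpair : Measurable (fun ω : ℕ → X => ((fun i : Fin (k + 1) => ω i), ω (k + 1))) := by fun_prop
  have := Measure.isProbabilityMeasure_map (μ := Pμ) hpre.aemeasurable
  have := Measure.isProbabilityMeasure_map (μ := Pμ) hpair.aemeasurable
  refine Measure.ext_prod ?_
  intro s t hs ht
  rw [Measure.map_apply hpair (hs.prod ht), Measure.compProd_apply_prod hs ht,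
    setLIntegral_map hs (Kernel.measurable_coe _ ht) hpre]
  have h := hstep k (s.indicator 1) (t.indicator 1) (measurable_one.indicator hs)
    (measurable_one.indicator ht)
  have h1 : ∫⁻ ω, s.indicator (1 : (Fin (k + 1) → X) → ℝ≥0∞) (fun i => ω i) * t.indicator 1 (ω (k + 1)) ∂Pμ
      = Pμ ((fun ω : ℕ → X => ((fun i : Fin (k + 1) => ω i), ω (k + 1))) ⁻¹' s ×ˢ t) := by
    rw [← lintegral_indicator_one (hpair (hs.prod ht))]
    congr 1
    ext ω
    by_cases h1 : (fun i : Fin (k + 1) => ω i) ∈ s <;> by_cases h2 : ω (k + 1) ∈ t <;>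
      simp [Set.indicator, h1, h2]
  have h2 : ∫⁻ ω, s.indicator (1 : (Fin (k + 1) → X) → ℝ≥0∞) (fun i => ω i) * ∫⁻ y, t.indicator 1 y ∂(P (ω k)) ∂Pμ
      = ∫⁻ ω in (fun ω : ℕ → X => (fun i : Fin (k + 1) => ω i)) ⁻¹' s,
        (P.comap (fun v : Fin (k + 1) → X => v (Fin.last k)) (measurable_pi_apply _)) (fun i => ω i) t ∂Pμ := by
    rw [← lintegral_indicator (hpre hs)]
    congr 1
    ext ω
    rw [lintegral_indicator_one ht]
    by_cases h1 : (fun i : Fin (k + 1) => ω i) ∈ s <;> simp [Set.indicator, h1]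
  rw [← h1, h, h2]

theorem markov_step {X : Type*} [MeasurableSpace X] (P : Kernel X X) [IsMarkovKernel P]
    (μ : Measure X) (Pμ : Measure (ℕ → X)) (hPμ : IsMarkovChainLaw μ P Pμ) (k : ℕ)
    (Z : (ℕ → X) → ℂ) (hZ : Measurable Z)
    (hZk : ∀ ω ω' : ℕ → X, (∀ j ≤ k, ω j = ω' j) → Z ω = Z ω')
    (F : X × X → ℂ) (hF : Measurable F)
    (hint : Integrable (fun ω => Z ω * F (ω k, ω (k + 1))) Pμ) :
    ∫ ω, Z ω * F (ω k, ω (k + 1)) ∂Pμ = ∫ ω, Z ω * ∫ y, F (ω k, y) ∂(P (ω k)) ∂Pμ := by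
  have hprob := hPμ.1
  have hj := chain_joint P μ Pμ hPμ k
  have hpre : Measurable (fun ω : ℕ → X => (fun i : Fin (k + 1) => ω i)) := by fun_prop
  have hpair : Measurable (fun ω : ℕ → X => ((fun i : Fin (k + 1) => ω i), ω (k + 1))) := by fun_prop
  have := Measure.isProbabilityMeasure_map (μ := Pμ) hpre.aemeasurable
  let ext : (Fin (k + 1) → X) → (ℕ → X) := fun v j => v ⟨min j k, by omega⟩
  have hext : Measurable ext := measurable_pi_iff.2 fun j => measurable_pi_apply _
  have hZe : ∀ ω : ℕ → X, Z (ext fun i : Fin (k + 1) => ω i) = Z ω := by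
    intro ω
    apply hZk
    intro j hj
    simp [ext, hj]
  let G : (Fin (k + 1) → X) × X → ℂ := fun q => Z (ext q.1) * F (q.1 (Fin.last k), q.2)
  have hG : Measurable G := by
    refine (hZ.comp (hext.comp measurable_fst)).mul (hF.comp ?_)
    exact ((measurable_pi_apply _).comp measurable_fst).prodMk measurable_snd
  have hGω : ∀ ω : ℕ → X, G ((fun i : Fin (k + 1) => ω i), ω (k + 1)) = Z ω * F (ω k, ω (k + 1)) := by
    intro ω
    simp only [G, hZe]
    simp
  have e1 : ∫ ω, Z ω * F (ω k, ω (k + 1)) ∂Pμ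
      = ∫ q, G q ∂(Pμ.map (fun ω => ((fun i : Fin (k + 1) => ω i), ω (k + 1)))) := by
    rw [integral_map hpair.aemeasurable hG.aestronglyMeasurable]
    simp only [hGω]
  have hGint : Integrable G (Pμ.map (fun ω => ((fun i : Fin (k + 1) => ω i), ω (k + 1)))) := by
    rw [integrable_map_measure hG.aestronglyMeasurable hpair.aemeasurable]
    refine hint.congr (Eventually.of_forall fun ω => ?_)
    simp only [Function.comp, hGω]
  rw [hj] at hGint
  rw [e1, hj, Measure.integral_compProd hGint]
  rw [integral_map hpre.aemeasurable]
  · refine integral_congr_ae (Eventually.of_forall fun ω => ?_)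
    simp only [G, Kernel.comap_apply, hZe]
    rw [integral_const_mul]
    simp
  · exact (hG.stronglyMeasurable.integral_kernel_prod_right').aestronglyMeasurable

theorem chain_V {X : Type*} [MeasurableSpace X] (P : Kernel X X) [IsMarkovKernel P]
    (μ : Measure X) (Pμ : Measure (ℕ → X)) (hPμ : IsMarkovChainLaw μ P Pμ)
    (V : X → ℝ) (hVmeas : Measurable V) (hV1 : ∀ x, 1 ≤ V x)
    (l b : ℝ) (hl0 : 0 < l) (hl1 : l < 1) (hb : 0 ≤ b)
    (hdrift : ∀ x, ∫⁻ y, ENNReal.ofReal (V y) ∂(P x) ≤ ENNReal.ofReal (l * V x + b))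
    (hμV : ∫⁻ x, ENNReal.ofReal (V x) ∂μ < ⊤) :
    ∃ B, 0 ≤ B ∧ ∀ k, Integrable (fun ω => V (ω k)) Pμ ∧ ∫ ω, V (ω k) ∂Pμ ≤ B := by
  have hprob := hPμ.1
  obtain ⟨-, h0, hstep⟩ := hPμ
  have h1l : 0 < 1 - l := by linarith
  set M := (∫⁻ x, ENNReal.ofReal (V x) ∂μ).toReal with hM
  have hM0 : 0 ≤ M := ENNReal.toReal_nonneg
  have hκ : 0 ≤ b / (1 - l) := by positivity
  set B := M + b / (1 - l) with hB
  have hB0 : 0 ≤ B := by positivity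
  have hlB : l * B + b ≤ B := by
    have : l * (b / (1 - l)) + b = b / (1 - l) := by field_simp; ring
    rw [hB]; nlinarith
  have key : ∀ k, ∫⁻ ω, ENNReal.ofReal (V (ω k)) ∂Pμ ≤ ENNReal.ofReal B := by
    intro k
    induction k with
    | zero =>
      have : ∫⁻ ω, ENNReal.ofReal (V (ω 0)) ∂Pμ = ∫⁻ x, ENNReal.ofReal (V x) ∂μ := by
        rw [← h0, lintegral_map hVmeas.ennreal_ofReal (measurable_pi_apply 0)]
      rw [this, ← ENNReal.ofReal_toReal hμV.ne]
      exact ENNReal.ofReal_le_ofReal (by rw [hB]; linarith)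
    | succ k ih =>
      have h := hstep k (fun _ => 1) (fun x => ENNReal.ofReal (V x)) measurable_const
        hVmeas.ennreal_ofReal
      simp only [one_mul] at h
      rw [h]
      calc ∫⁻ ω, ∫⁻ y, ENNReal.ofReal (V y) ∂(P (ω k)) ∂Pμ
          ≤ ∫⁻ ω, (ENNReal.ofReal l * ENNReal.ofReal (V (ω k)) + ENNReal.ofReal b) ∂Pμ := by
            refine lintegral_mono fun ω => (hdrift _).trans ?_
            rw [← ENNReal.ofReal_mul hl0.le, ← ENNReal.ofReal_add
              (mul_nonneg hl0.le (by linarith [hV1 (ω k)])) hb]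
        _ = ENNReal.ofReal l * (∫⁻ ω, ENNReal.ofReal (V (ω k)) ∂Pμ) + ENNReal.ofReal b := by
            rw [lintegral_add_right _ measurable_const, lintegral_const_mul]
            · simp
            · exact (hVmeas.comp (measurable_pi_apply k)).ennreal_ofReal
        _ ≤ ENNReal.ofReal l * ENNReal.ofReal B + ENNReal.ofReal b := by gcongr
        _ = ENNReal.ofReal (l * B + b) := by
            rw [← ENNReal.ofReal_mul hl0.le, ← ENNReal.ofReal_add (by positivity) hb]
        _ ≤ ENNReal.ofReal B := ENNReal.ofReal_le_ofReal hlB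
  refine ⟨B, hB0, fun k => ?_⟩
  have hm : Measurable (fun ω : ℕ → X => V (ω k)) := hVmeas.comp (measurable_pi_apply k)
  exact ⟨integrable_of_lint hm (fun ω => hV1 _) ((key k).trans_lt ENNReal.ofReal_lt_top),
    drift_integral hm (fun ω => hV1 _) hB0 (key k)⟩

theorem cesaro_bound {X : Type*} [MeasurableSpace X] (P : Kernel X X) [IsMarkovKernel P]
    (μ : Measure X) (Pμ : Measure (ℕ → X)) (hPμ : IsMarkovChainLaw μ P Pμ)
    (V : X → ℝ) (hV1 : ∀ x, 1 ≤ V x) (hPV : ∀ x, Integrable V (P x))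
    (B : ℝ) (hB : ∀ k, Integrable (fun ω => V (ω k)) Pμ ∧ ∫ ω, V (ω k) ∂Pμ ≤ B)
    (π : Measure X) (C : ℝ) (hC : 0 ≤ C)
    (g : X → ℝ) (hg : Measurable g) (c : ℝ) (hgV : ∀ x, |g x| ≤ c * V x)
    (h : X → ℝ) (hh : Measurable h) (hhV : ∀ x, |h x| ≤ C * V x)
    (hpoi : ∀ x, h x - ∫ y, h y ∂(P x) = g x - ∫ y, g y ∂π) (n : ℕ) :
    ∑ k ∈ Finset.range n, ∫ ω, g (ω k) ∂Pμ ≤ n * ∫ y, g y ∂π + 2 * C * B := by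
  have hprob := hPμ.1
  have hhint : ∀ k, Integrable (fun ω => h (ω k)) Pμ := fun k =>
    integrable_of_dom (hB k).1 (hh.comp (measurable_pi_apply k)) (c := C) fun ω => hhV _
  have hgint : ∀ k, Integrable (fun ω => g (ω k)) Pμ := fun k =>
    integrable_of_dom (hB k).1 (hg.comp (measurable_pi_apply k)) (c := c) fun ω => hgV _
  have hstep : ∀ k, ∫ ω, h (ω (k + 1)) ∂Pμ = ∫ ω, (∫ y, h y ∂(P (ω k))) ∂Pμ := by
    intro k
    have := markov_step P μ Pμ hPμ k (fun _ => 1) measurable_const (fun _ _ _ => rfl)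
      (fun q => (h q.2 : ℂ)) (Complex.measurable_ofReal.comp (hh.comp measurable_snd))
      (by simp only [one_mul]; exact (hhint (k + 1)).ofReal (𝕜 := ℂ))
    simp only [one_mul] at this
    have e : ∀ ω : ℕ → X, ∫ y, (h y : ℂ) ∂(P (ω k)) = ((∫ y, h y ∂(P (ω k)) : ℝ) : ℂ) :=
      fun ω => integral_ofReal
    simp only [e] at this
    have e2 := integral_complex_ofReal (μ := Pμ) (f := fun ω => h (ω (k + 1)))
    have e3 := integral_complex_ofReal (μ := Pμ) (f := fun ω => ∫ y, h y ∂(P (ω k)))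
    rw [e2, e3] at this
    exact_mod_cast this
  have hk : ∀ k, ∫ ω, g (ω k) ∂Pμ
      = (∫ y, g y ∂π) + (∫ ω, h (ω k) ∂Pμ - ∫ ω, h (ω (k + 1)) ∂Pμ) := by
    intro k
    have e1 : ∀ ω : ℕ → X, ∫ y, h y ∂(P (ω k)) = h (ω k) - g (ω k) + ∫ y, g y ∂π := by
      intro ω; have := hpoi (ω k); linarith
    rw [hstep]
    simp only [e1]
    have hsub : Integrable (fun ω => h (ω k) - g (ω k)) Pμ := (hhint k).sub (hgint k)
    rw [integral_add hsub (integrable_const _), integral_sub (hhint k) (hgint k)]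
    simp
    ring
  have hhb : ∀ k, |∫ ω, h (ω k) ∂Pμ| ≤ C * B := by
    intro k
    refine abs_integral_le_integral_abs.trans ?_
    calc ∫ ω, |h (ω k)| ∂Pμ ≤ ∫ ω, C * V (ω k) ∂Pμ :=
          integral_mono (hhint k).abs ((hB k).1.const_mul C) fun ω => hhV _
      _ = C * ∫ ω, V (ω k) ∂Pμ := integral_const_mul _ _
      _ ≤ C * B := mul_le_mul_of_nonneg_left (hB k).2 hC
  rw [Finset.sum_congr rfl fun k _ => hk k, Finset.sum_add_distrib,
    Finset.sum_range_sub' (fun k => ∫ ω, h (ω k) ∂Pμ) n]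
  have h1 := (abs_le.1 (hhb 0)).2
  have h2 := (abs_le.1 (hhb n)).1
  simp only [Finset.sum_const, Finset.card_range, nsmul_eq_mul]
  linarith

theorem exp_sub_one_bound (z : ℂ) : ‖Complex.exp z - 1‖ ≤ ‖z‖ * Real.exp ‖z‖ := by
  have := Complex.norm_exp_sub_sum_le_norm_mul_exp z 1
  simpa using this

theorem exp_I_bound (t : ℝ) : ‖Complex.exp (Complex.I * t) - 1 - Complex.I * t‖ ≤ 2 * t ^ 2 := by
  have hn : ‖Complex.I * (t : ℂ)‖ = |t| := by simp
  by_cases h : |t| ≤ 1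
  · have := Complex.norm_exp_sub_one_sub_id_le (x := Complex.I * t) (by rw [hn]; exact h)
    rw [hn, sq_abs] at this
    nlinarith [sq_nonneg t]
  · have h1 := Real.norm_exp_I_mul_ofReal_sub_one_le (x := t)
    have h2 := norm_sub_le (Complex.exp (Complex.I * t) - 1) (Complex.I * t)
    rw [hn] at h2
    rw [Real.norm_eq_abs] at h1
    push Not at h
    have h3 : |t| ≤ |t| ^ 2 := by nlinarith
    rw [sq_abs] at h3
    linarith

theorem scalar_bound (ξ u a : ℝ) (ha : a ≠ 0) (ha1 : |a| ≤ 1) :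
    ‖(Complex.exp (Complex.I * ((a * ξ + a ^ 2 * u : ℝ) : ℂ)) - 1 - Complex.I * ((a * ξ : ℝ) : ℂ)) / (a : ℂ) ^ 2‖
      ≤ 4 * ξ ^ 2 + (4 * u ^ 2 + |u|) := by
  have ha2 : 0 < a ^ 2 := by positivity
  have hn : ‖(a : ℂ) ^ 2‖ = a ^ 2 := by simp
  rw [norm_div, hn, div_le_iff₀ ha2]
  have e : Complex.exp (Complex.I * ((a * ξ + a ^ 2 * u : ℝ) : ℂ)) - 1 - Complex.I * ((a * ξ : ℝ) : ℂ)
    = (Complex.exp (Complex.I * ((a * ξ + a ^ 2 * u : ℝ) : ℂ)) - 1 - Complex.I * ((a * ξ + a ^ 2 * u : ℝ) : ℂ))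
      + Complex.I * ((a ^ 2 * u : ℝ) : ℂ) := by push_cast; ring
  rw [e]
  refine (norm_add_le _ _).trans ?_
  have h1 := exp_I_bound (a * ξ + a ^ 2 * u)
  have h2 : ‖Complex.I * ((a ^ 2 * u : ℝ) : ℂ)‖ = a ^ 2 * |u| := by
    rw [norm_mul, Complex.norm_I, one_mul, Complex.norm_real, Real.norm_eq_abs, abs_mul,
      abs_of_pos ha2]
  have ha3 : a ^ 2 ≤ 1 := by rw [← sq_abs]; nlinarith [abs_nonneg a]
  have h3 : (a * ξ + a ^ 2 * u) ^ 2 ≤ a ^ 2 * (2 * ξ ^ 2 + 2 * u ^ 2) := by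
    have : (a * ξ + a ^ 2 * u) ^ 2 = a ^ 2 * (ξ + a * u) ^ 2 := by ring
    rw [this]
    apply mul_le_mul_of_nonneg_left _ ha2.le
    nlinarith [sq_nonneg (ξ - a * u), mul_nonneg (sub_nonneg.2 ha3) (sq_nonneg u)]
  rw [h2]
  nlinarith

theorem scalar_lim (ξ u : ℝ) :
    Tendsto (fun a : ℝ => (Complex.exp (Complex.I * ((a * ξ + a ^ 2 * u : ℝ) : ℂ)) - 1
      - Complex.I * ((a * ξ : ℝ) : ℂ)) / (a : ℂ) ^ 2) (𝓝[≠] 0)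
      (𝓝 (-((ξ ^ 2 : ℝ) : ℂ) / 2 + Complex.I * u)) := by
  let w : ℝ → ℂ := fun a => Complex.I * ((ξ + a * u : ℝ) : ℂ)
  have hw : Continuous w := by fun_prop
  have h1 : Tendsto (fun a : ℝ => Complex.I * u + w a ^ 2 / 2) (𝓝[≠] 0)
      (𝓝 (-((ξ ^ 2 : ℝ) : ℂ) / 2 + Complex.I * u)) := by
    have : Continuous (fun a : ℝ => Complex.I * u + w a ^ 2 / 2) := by fun_prop
    have h := this.tendsto 0
    have e : Complex.I * u + w 0 ^ 2 / 2 = -((ξ ^ 2 : ℝ) : ℂ) / 2 + Complex.I * u := by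
      simp only [w, mul_pow, Complex.I_sq]; push_cast; ring
    rw [e] at h
    exact h.mono_left nhdsWithin_le_nhds
  have h2 : Tendsto (fun a : ℝ => |a| * (‖w a‖ ^ 3 * Real.exp (|a| * ‖w a‖))) (𝓝[≠] 0) (𝓝 0) := by
    have : Continuous (fun a : ℝ => |a| * (‖w a‖ ^ 3 * Real.exp (|a| * ‖w a‖))) := by fun_prop
    have h := this.tendsto 0
    simp only [abs_zero, zero_mul] at h
    exact h.mono_left nhdsWithin_le_nhds
  have h3 : Tendsto (fun a : ℝ => (Complex.exp (Complex.I * ((a * ξ + a ^ 2 * u : ℝ) : ℂ)) - 1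
      - Complex.I * ((a * ξ : ℝ) : ℂ)) / (a : ℂ) ^ 2 - (Complex.I * u + w a ^ 2 / 2)) (𝓝[≠] 0) (𝓝 0) := by
    refine squeeze_zero_norm' ?_ h2
    filter_upwards [self_mem_nhdsWithin] with a ha
    have ha' : a ≠ 0 := ha
    have hac : (a : ℂ) ≠ 0 := by exact_mod_cast ha'
    have ez : Complex.I * ((a * ξ + a ^ 2 * u : ℝ) : ℂ) = a * w a := by
      simp only [w]; push_cast; ring
    have hb := Complex.norm_exp_sub_sum_le_norm_mul_exp (a * w a) 3
    have e : (Complex.exp (Complex.I * ((a * ξ + a ^ 2 * u : ℝ) : ℂ)) - 1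
      - Complex.I * ((a * ξ : ℝ) : ℂ)) / (a : ℂ) ^ 2 - (Complex.I * u + w a ^ 2 / 2)
      = (Complex.exp (a * w a) - ∑ m ∈ Finset.range 3, (a * w a) ^ m / m.factorial) / (a : ℂ) ^ 2 := by
      rw [ez]
      simp only [Finset.sum_range_succ, Finset.sum_range_zero, Nat.factorial]
      field_simp
      simp only [w]
      push_cast
      ring
    rw [e, norm_div, div_le_iff₀ (by simp; positivity)]
    refine hb.trans (le_of_eq ?_)
    have : ‖(a : ℂ) ^ 2‖ = |a| ^ 2 := by simp
    rw [this, norm_mul, Complex.norm_real, Real.norm_eq_abs]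
    ring
  have := h3.add h1
  simpa using this

theorem exp_quot_bound (γ : ℂ) (a : ℝ) (ha : a ≠ 0) (ha1 : |a| ≤ 1) :
    ‖(Complex.exp ((a : ℂ) ^ 2 * γ) - 1) / (a : ℂ) ^ 2‖ ≤ ‖γ‖ * Real.exp ‖γ‖ := by
  have ha2 : 0 < a ^ 2 := by positivity
  have ha3 : a ^ 2 ≤ 1 := by rw [← sq_abs]; nlinarith [abs_nonneg a]
  have hn : ‖(a : ℂ) ^ 2‖ = a ^ 2 := by simp
  rw [norm_div, hn, div_le_iff₀ ha2]
  refine (exp_sub_one_bound _).trans ?_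
  rw [norm_mul, hn]
  have : Real.exp (a ^ 2 * ‖γ‖) ≤ Real.exp ‖γ‖ :=
    Real.exp_le_exp.2 (by nlinarith [norm_nonneg γ])
  have h := mul_le_mul_of_nonneg_left this (mul_nonneg ha2.le (norm_nonneg γ))
  linarith

theorem exp_norm_bound (γ : ℂ) (a : ℝ) (ha1 : |a| ≤ 1) :
    ‖Complex.exp ((a : ℂ) ^ 2 * γ)‖ ≤ Real.exp ‖γ‖ := by
  have ha3 : a ^ 2 ≤ 1 := by rw [← sq_abs]; nlinarith [abs_nonneg a]
  have hn : ‖(a : ℂ) ^ 2‖ = a ^ 2 := by simp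
  refine (Complex.norm_exp_le_exp_norm _).trans (Real.exp_le_exp.2 ?_)
  rw [norm_mul, hn]
  nlinarith [norm_nonneg γ]

theorem exp_quot_lim (γ : ℂ) :
    Tendsto (fun a : ℝ => (Complex.exp ((a : ℂ) ^ 2 * γ) - 1) / (a : ℂ) ^ 2) (𝓝[≠] 0) (𝓝 γ) := by
  have h : HasDerivAt (fun z : ℂ => Complex.exp (z * γ)) γ 0 := by
    have := ((hasDerivAt_id (0 : ℂ)).mul_const γ).cexp
    simpa using this
  have h2 := h.tendsto_slope
  have h3 : Tendsto (fun a : ℝ => (a : ℂ) ^ 2) (𝓝[≠] 0) (𝓝[≠] 0) := by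
    refine tendsto_nhdsWithin_iff.2 ⟨?_, ?_⟩
    · have : Continuous (fun a : ℝ => (a : ℂ) ^ 2) := by fun_prop
      have h := this.tendsto 0
      simp only [Complex.ofReal_zero] at h
      rw [zero_pow two_ne_zero] at h
      exact h.mono_left nhdsWithin_le_nhds
    · filter_upwards [self_mem_nhdsWithin] with a ha
      have ha' : a ≠ 0 := ha
      simpa using ha'
  refine (h2.comp h3).congr fun a => ?_
  simp [slope_def_field]

theorem Q_decomp {X : Type*} [MeasurableSpace X] (ρ : Measure X) [IsProbabilityMeasure ρ]
    (ξ : X → ℝ) (hξ : Measurable ξ) (hξ1 : Integrable ξ ρ)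
    (hξ0 : ∫ y, ξ y ∂ρ = 0) (h : X → ℂ) (hh : Integrable h ρ) (u : ℝ) (γ hx : ℂ)
    (a : ℝ) (ha : a ≠ 0) :
    (∫ y, Complex.exp (Complex.I * ((a * ξ y + a ^ 2 * u : ℝ) : ℂ)) * (1 + (a : ℂ) ^ 2 * h y) ∂ρ
      - Complex.exp ((a : ℂ) ^ 2 * γ) * (1 + (a : ℂ) ^ 2 * hx)) / (a : ℂ) ^ 2
    = ∫ y, (Complex.exp (Complex.I * ((a * ξ y + a ^ 2 * u : ℝ) : ℂ)) - 1
        - Complex.I * ((a * ξ y : ℝ) : ℂ)) / (a : ℂ) ^ 2 ∂ρ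
      + ∫ y, Complex.exp (Complex.I * ((a * ξ y + a ^ 2 * u : ℝ) : ℂ)) * h y ∂ρ
      - (Complex.exp ((a : ℂ) ^ 2 * γ) - 1) / (a : ℂ) ^ 2
      - Complex.exp ((a : ℂ) ^ 2 * γ) * hx := by
  have hac : (a : ℂ) ≠ 0 := by exact_mod_cast ha
  have hEm : Measurable (fun y => Complex.exp (Complex.I * ((a * ξ y + a ^ 2 * u : ℝ) : ℂ))) := by
    fun_prop
  have hEn : ∀ y, ‖Complex.exp (Complex.I * ((a * ξ y + a ^ 2 * u : ℝ) : ℂ))‖ ≤ 1 := fun y => by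
    rw [mul_comm, Complex.norm_exp_ofReal_mul_I]
  have hE : Integrable (fun y => Complex.exp (Complex.I * ((a * ξ y + a ^ 2 * u : ℝ) : ℂ))) ρ :=
    Integrable.of_bound hEm.aestronglyMeasurable 1 (Eventually.of_forall hEn)
  have hEh : Integrable (fun y => Complex.exp (Complex.I * ((a * ξ y + a ^ 2 * u : ℝ) : ℂ)) * h y) ρ :=
    hh.bdd_mul hEm.aestronglyMeasurable (Eventually.of_forall hEn)
  have hξc : Integrable (fun y => Complex.I * ((a * ξ y : ℝ) : ℂ)) ρ :=
    ((hξ1.const_mul a).ofReal (𝕜 := ℂ)).const_mul _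
  have hξz : ∫ y, Complex.I * ((a * ξ y : ℝ) : ℂ) ∂ρ = 0 := by
    rw [integral_const_mul, integral_complex_ofReal, integral_const_mul, hξ0]
    simp
  have e1 : ∫ y, (Complex.exp (Complex.I * ((a * ξ y + a ^ 2 * u : ℝ) : ℂ)) - 1
        - Complex.I * ((a * ξ y : ℝ) : ℂ)) / (a : ℂ) ^ 2 ∂ρ
      = (∫ y, Complex.exp (Complex.I * ((a * ξ y + a ^ 2 * u : ℝ) : ℂ)) ∂ρ - 1) / (a : ℂ) ^ 2 := by
    have hE1 : Integrable (fun y => Complex.exp (Complex.I * ((a * ξ y + a ^ 2 * u : ℝ) : ℂ)) - 1) ρ :=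
      hE.sub (integrable_const _)
    rw [integral_div, integral_sub hE1 hξc, integral_sub hE (integrable_const _), hξz]
    simp
  have e2 : ∫ y, Complex.exp (Complex.I * ((a * ξ y + a ^ 2 * u : ℝ) : ℂ)) * (1 + (a : ℂ) ^ 2 * h y) ∂ρ
      = ∫ y, Complex.exp (Complex.I * ((a * ξ y + a ^ 2 * u : ℝ) : ℂ)) ∂ρ
        + (a : ℂ) ^ 2 * ∫ y, Complex.exp (Complex.I * ((a * ξ y + a ^ 2 * u : ℝ) : ℂ)) * h y ∂ρ := by
    rw [← integral_const_mul, ← integral_add hE (hEh.const_mul _)]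
    congr 1
    ext y
    ring
  rw [e1, e2]
  field_simp
  ring

theorem Q_bound {X : Type*} [MeasurableSpace X] (ρ : Measure X) [IsProbabilityMeasure ρ]
    (ξ : X → ℝ) (hξ : Measurable ξ) (hξ1 : Integrable ξ ρ) (hξ2 : Integrable (fun y => ξ y ^ 2) ρ)
    (hξ0 : ∫ y, ξ y ∂ρ = 0) (h : X → ℂ) (hh : Integrable h ρ) (u : ℝ) (γ hx : ℂ)
    (a : ℝ) (ha : a ≠ 0) (ha1 : |a| ≤ 1) :
    ‖(∫ y, Complex.exp (Complex.I * ((a * ξ y + a ^ 2 * u : ℝ) : ℂ)) * (1 + (a : ℂ) ^ 2 * h y) ∂ρ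
      - Complex.exp ((a : ℂ) ^ 2 * γ) * (1 + (a : ℂ) ^ 2 * hx)) / (a : ℂ) ^ 2‖
    ≤ 4 * ∫ y, ξ y ^ 2 ∂ρ + (4 * u ^ 2 + |u|) + ∫ y, ‖h y‖ ∂ρ + ‖γ‖ * Real.exp ‖γ‖
      + Real.exp ‖γ‖ * ‖hx‖ := by
  rw [Q_decomp ρ ξ hξ hξ1 hξ0 h hh u γ hx a ha]
  refine (norm_sub_le _ _).trans (add_le_add ((norm_sub_le _ _).trans
    (add_le_add ((norm_add_le _ _).trans (add_le_add ?_ ?_)) (exp_quot_bound γ a ha ha1))) ?_)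
  · have hc : 4 * ∫ y, ξ y ^ 2 ∂ρ + (4 * u ^ 2 + |u|) = ∫ y, (4 * ξ y ^ 2 + (4 * u ^ 2 + |u|)) ∂ρ := by
      rw [integral_add (hξ2.const_mul 4) (integrable_const _), integral_const_mul]
      simp
    rw [hc]
    exact norm_integral_le_of_norm_le ((hξ2.const_mul 4).add (integrable_const _))
      (Eventually.of_forall fun y => scalar_bound (ξ y) u a ha ha1)
  · refine norm_integral_le_of_norm_le hh.norm (Eventually.of_forall fun y => ?_)
    rw [norm_mul, mul_comm Complex.I, Complex.norm_exp_ofReal_mul_I, one_mul]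
  · rw [norm_mul]
    exact mul_le_mul_of_nonneg_right (exp_norm_bound γ a ha1) (norm_nonneg _)

theorem Q_lim {X : Type*} [MeasurableSpace X] (ρ : Measure X) [IsProbabilityMeasure ρ]
    (ξ : X → ℝ) (hξ : Measurable ξ) (hξ1 : Integrable ξ ρ) (hξ2 : Integrable (fun y => ξ y ^ 2) ρ)
    (hξ0 : ∫ y, ξ y ∂ρ = 0) (h : X → ℂ) (hh : Integrable h ρ) (u : ℝ) (γ hx : ℂ)
    (hpoi : hx - ∫ y, h y ∂ρ = (-((∫ y, ξ y ^ 2 ∂ρ : ℝ) : ℂ) / 2 + Complex.I * u) - γ) :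
    Tendsto (fun a : ℝ =>
    (∫ y, Complex.exp (Complex.I * ((a * ξ y + a ^ 2 * u : ℝ) : ℂ)) * (1 + (a : ℂ) ^ 2 * h y) ∂ρ
      - Complex.exp ((a : ℂ) ^ 2 * γ) * (1 + (a : ℂ) ^ 2 * hx)) / (a : ℂ) ^ 2) (𝓝[≠] 0) (𝓝 0) := by
  have hsmall : ∀ᶠ a : ℝ in 𝓝[≠] 0, |a| ≤ 1 := by
    refine nhdsWithin_le_nhds ?_
    filter_upwards [Metric.ball_mem_nhds (0 : ℝ) one_pos] with a ha
    simpa using (mem_ball_zero_iff.1 ha).le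
  have l1 : Tendsto (fun a : ℝ => ∫ y, (Complex.exp (Complex.I * ((a * ξ y + a ^ 2 * u : ℝ) : ℂ)) - 1
        - Complex.I * ((a * ξ y : ℝ) : ℂ)) / (a : ℂ) ^ 2 ∂ρ) (𝓝[≠] 0)
      (𝓝 (∫ y, (-((ξ y ^ 2 : ℝ) : ℂ) / 2 + Complex.I * u) ∂ρ)) := by
    refine tendsto_integral_filter_of_dominated_convergence
      (fun y => 4 * ξ y ^ 2 + (4 * u ^ 2 + |u|)) ?_ ?_ ?_ ?_
    · refine Eventually.of_forall fun a => Measurable.aestronglyMeasurable ?_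
      fun_prop
    · filter_upwards [hsmall, self_mem_nhdsWithin] with a ha ha0
      exact Eventually.of_forall fun y => scalar_bound (ξ y) u a ha0 ha
    · exact (hξ2.const_mul 4).add (integrable_const _)
    · exact Eventually.of_forall fun y => scalar_lim (ξ y) u
  have l1e : ∫ y, (-((ξ y ^ 2 : ℝ) : ℂ) / 2 + Complex.I * u) ∂ρ
      = -((∫ y, ξ y ^ 2 ∂ρ : ℝ) : ℂ) / 2 + Complex.I * u := by
    have hi : Integrable (fun y => -((ξ y ^ 2 : ℝ) : ℂ) / 2) ρ :=
      ((hξ2.ofReal (𝕜 := ℂ)).neg).div_const 2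
    rw [integral_add hi (integrable_const _), integral_div, integral_neg, integral_complex_ofReal]
    simp
  have l2 : Tendsto (fun a : ℝ => ∫ y, Complex.exp (Complex.I * ((a * ξ y + a ^ 2 * u : ℝ) : ℂ)) * h y ∂ρ)
      (𝓝[≠] 0) (𝓝 (∫ y, h y ∂ρ)) := by
    refine tendsto_integral_filter_of_dominated_convergence (fun y => ‖h y‖) ?_ ?_ hh.norm ?_
    · refine Eventually.of_forall fun a => AEStronglyMeasurable.mul
        (Measurable.aestronglyMeasurable ?_) hh.1
      fun_prop
    · refine Eventually.of_forall fun a => Eventually.of_forall fun y => ?_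
      rw [norm_mul, mul_comm Complex.I, Complex.norm_exp_ofReal_mul_I, one_mul]
    · refine Eventually.of_forall fun y => ?_
      have hc : Continuous (fun a : ℝ => Complex.exp (Complex.I * ((a * ξ y + a ^ 2 * u : ℝ) : ℂ)) * h y) := by
        fun_prop
      have := hc.tendsto 0
      simp only [zero_mul, ne_eq, OfNat.ofNat_ne_zero, not_false_eq_true, zero_pow, add_zero,
        Complex.ofReal_zero, mul_zero, Complex.exp_zero, one_mul] at this
      exact this.mono_left nhdsWithin_le_nhds
  have l3 : Tendsto (fun a : ℝ => Complex.exp ((a : ℂ) ^ 2 * γ) * hx) (𝓝[≠] 0) (𝓝 hx) := by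
    have hc : Continuous (fun a : ℝ => Complex.exp ((a : ℂ) ^ 2 * γ) * hx) := by fun_prop
    have := hc.tendsto 0
    simp only [Complex.ofReal_zero, ne_eq, OfNat.ofNat_ne_zero, not_false_eq_true, zero_pow,
      zero_mul, Complex.exp_zero, one_mul] at this
    exact this.mono_left nhdsWithin_le_nhds
  rw [l1e] at l1
  have := ((l1.add l2).sub (exp_quot_lim γ)).sub l3
  have e0 : (-((∫ y, ξ y ^ 2 ∂ρ : ℝ) : ℂ) / 2 + Complex.I * u) + ∫ y, h y ∂ρ - γ - hx = 0 := by
    linear_combination -hpoi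
  rw [e0] at this
  refine this.congr' ?_
  filter_upwards [self_mem_nhdsWithin] with a ha0
  exact (Q_decomp ρ ξ hξ hξ1 hξ0 h hh u γ hx a ha0).symm

theorem recur_bound (y r : ℕ → ℂ) (q : ℂ) (ρ : ℝ) (hq : ‖q‖ ≤ ρ) (hρ : 1 ≤ ρ)
    (hy : ∀ k, y (k + 1) = r k + q * y k) (n : ℕ) :
    ‖y n - q ^ n * y 0‖ ≤ ρ ^ n * ∑ k ∈ Finset.range n, ‖r k‖ := by
  induction n with
  | zero => simp
  | succ n ih =>
    have e : y (n + 1) - q ^ (n + 1) * y 0 = r n + q * (y n - q ^ n * y 0) := by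
      rw [hy]; ring
    have h0 : 0 ≤ ∑ k ∈ Finset.range n, ‖r k‖ := Finset.sum_nonneg fun _ _ => norm_nonneg _
    have hρn : 1 ≤ ρ ^ (n + 1) := one_le_pow₀ hρ
    rw [e, Finset.sum_range_succ]
    refine (norm_add_le _ _).trans ?_
    rw [norm_mul]
    have h1 : ‖q‖ * ‖y n - q ^ n * y 0‖ ≤ ρ * (ρ ^ n * ∑ k ∈ Finset.range n, ‖r k‖) :=
      mul_le_mul hq ih (norm_nonneg _) (by linarith)
    have h2 : ‖r n‖ ≤ ρ ^ (n + 1) * ‖r n‖ := le_mul_of_one_le_left (norm_nonneg _) hρn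
    calc ‖r n‖ + ‖q‖ * ‖y n - q ^ n * y 0‖
        ≤ ρ ^ (n + 1) * ‖r n‖ + ρ * (ρ ^ n * ∑ k ∈ Finset.range n, ‖r k‖) := add_le_add h2 h1
      _ = ρ ^ (n + 1) * (∑ k ∈ Finset.range n, ‖r k‖ + ‖r n‖) := by ring

/-- The partial exponential of the perturbed additive functional. -/
def Zf {X : Type*} (ξ : X → X → ℝ) (u : X → ℝ) (a : ℝ) (k : ℕ) (ω : ℕ → X) : ℂ :=
  Complex.exp (Complex.I * ((∑ j ∈ Finset.range k, (a * ξ (ω j) (ω (j + 1)) + a ^ 2 * u (ω j)) : ℝ) : ℂ))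

/-- One step defect of the perturbed test function, divided by `a ^ 2`. -/
def Qf {X : Type*} [MeasurableSpace X] (P : Kernel X X) (ξ : X → X → ℝ) (u : X → ℝ)
    (h : X → ℂ) (γ : ℂ) (a : ℝ) (x : X) : ℂ :=
  (∫ y, Complex.exp (Complex.I * ((a * ξ x y + a ^ 2 * u x : ℝ) : ℂ)) * (1 + (a : ℂ) ^ 2 * h y) ∂(P x)
      - Complex.exp ((a : ℂ) ^ 2 * γ) * (1 + (a : ℂ) ^ 2 * h x)) / (a : ℂ) ^ 2

theorem Zf_norm {X : Type*} (ξ : X → X → ℝ) (u : X → ℝ) (a : ℝ) (k : ℕ) (ω : ℕ → X) :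
    ‖Zf ξ u a k ω‖ = 1 := by
  rw [Zf, mul_comm, Complex.norm_exp_ofReal_mul_I]

theorem Zf_meas {X : Type*} [MeasurableSpace X] (ξ : X → X → ℝ)
    (hξ : Measurable (Function.uncurry ξ)) (u : X → ℝ) (hu : Measurable u) (a : ℝ) (k : ℕ) :
    Measurable (Zf ξ u a k) := by
  have h1 : ∀ j, Measurable (fun ω : ℕ → X => ξ (ω j) (ω (j + 1))) := fun j => by
    have hp : Measurable (fun ω : ℕ → X => (ω j, ω (j + 1))) := by fun_prop
    exact hξ.comp hp
  have h2 : ∀ j, Measurable (fun ω : ℕ → X => u (ω j)) := fun j =>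
    hu.comp (measurable_pi_apply j)
  unfold Zf
  refine Complex.measurable_exp.comp (Measurable.const_mul (Complex.measurable_ofReal.comp ?_) _)
  exact Finset.measurable_sum _ fun j _ => ((h1 j).const_mul a).add ((h2 j).const_mul _)

theorem Qf_meas {X : Type*} [MeasurableSpace X] (P : Kernel X X) [IsMarkovKernel P] (ξ : X → X → ℝ)
    (hξ : Measurable (Function.uncurry ξ)) (u : X → ℝ) (hu : Measurable u)
    (h : X → ℂ) (hh : Measurable h) (γ : ℂ) (a : ℝ) : Measurable (Qf P ξ u h γ a) := by
  have hF : Measurable (fun q : X × X => Complex.exp (Complex.I * ((a * ξ q.1 q.2 + a ^ 2 * u q.1 : ℝ) : ℂ))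
      * (1 + (a : ℂ) ^ 2 * h q.2)) := by
    have h1 : Measurable (fun q : X × X => ξ q.1 q.2) := hξ
    fun_prop
  have := hF.stronglyMeasurable.integral_kernel_prod_right' (κ := P)
  unfold Qf
  exact ((this.measurable).sub (by fun_prop)).div_const _

theorem step_eq {X : Type*} [MeasurableSpace X] (P : Kernel X X) [IsMarkovKernel P]
    (μ : Measure X) (Pμ : Measure (ℕ → X)) (hPμ : IsMarkovChainLaw μ P Pμ)
    (ξ : X → X → ℝ) (hξ : Measurable (Function.uncurry ξ)) (u : X → ℝ) (hu : Measurable u)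
    (h : X → ℂ) (hh : Measurable h) (hhint : ∀ k, Integrable (fun ω => h (ω k)) Pμ)
    (γ : ℂ) (a : ℝ) (ha : a ≠ 0)
    (hQ : ∀ k, Integrable (fun ω => Qf P ξ u h γ a (ω k)) Pμ) (k : ℕ) :
    ∫ ω, Zf ξ u a (k + 1) ω * (1 + (a : ℂ) ^ 2 * h (ω (k + 1))) ∂Pμ
     = (a : ℂ) ^ 2 * ∫ ω, Zf ξ u a k ω * Qf P ξ u h γ a (ω k) ∂Pμ
       + Complex.exp ((a : ℂ) ^ 2 * γ) * ∫ ω, Zf ξ u a k ω * (1 + (a : ℂ) ^ 2 * h (ω k)) ∂Pμ := by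
  have hprob := hPμ.1
  have hac : (a : ℂ) ≠ 0 := by exact_mod_cast ha
  let F : X × X → ℂ := fun q => Complex.exp (Complex.I * ((a * ξ q.1 q.2 + a ^ 2 * u q.1 : ℝ) : ℂ))
      * (1 + (a : ℂ) ^ 2 * h q.2)
  have hF : Measurable F := by
    have h1 : Measurable (fun q : X × X => ξ q.1 q.2) := hξ
    fun_prop
  have hZ1 : ∀ ω : ℕ → X, Zf ξ u a (k + 1) ω * (1 + (a : ℂ) ^ 2 * h (ω (k + 1)))
      = Zf ξ u a k ω * F (ω k, ω (k + 1)) := by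
    intro ω
    simp only [Zf, F]
    rw [Finset.sum_range_succ, Complex.ofReal_add, mul_add Complex.I, Complex.exp_add, mul_assoc]
  have hint0 : ∀ k, Integrable (fun ω => Zf ξ u a k ω * (1 + (a : ℂ) ^ 2 * h (ω k))) Pμ := fun k =>
    (Integrable.add (integrable_const (1 : ℂ)) ((hhint k).const_mul ((a : ℂ) ^ 2))).bdd_mul
      (Zf_meas ξ hξ u hu a k).aestronglyMeasurable (c := 1)
      (Eventually.of_forall fun ω => (Zf_norm ξ u a k ω).le)
  have hint1 : Integrable (fun ω => Zf ξ u a k ω * F (ω k, ω (k + 1))) Pμ := by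
    have := hint0 (k + 1)
    simp only [hZ1] at this
    exact this
  have hintQ : Integrable (fun ω => Zf ξ u a k ω * Qf P ξ u h γ a (ω k)) Pμ :=
    (hQ k).bdd_mul (Zf_meas ξ hξ u hu a k).aestronglyMeasurable (c := 1)
      (Eventually.of_forall fun ω => (Zf_norm ξ u a k ω).le)
  simp only [hZ1]
  rw [markov_step P μ Pμ hPμ k (Zf ξ u a k) (Zf_meas ξ hξ u hu a k) ?_ F hF hint1]
  · rw [← integral_const_mul, ← integral_const_mul,
      ← integral_add (hintQ.const_mul _) ((hint0 k).const_mul _)]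
    refine integral_congr_ae (Eventually.of_forall fun ω => ?_)
    simp only [Qf, F]
    field_simp
    ring
  · intro ω ω' hω
    simp only [Zf]
    have : ∀ j ∈ Finset.range k, a * ξ (ω j) (ω (j + 1)) + a ^ 2 * u (ω j)
        = a * ξ (ω' j) (ω' (j + 1)) + a ^ 2 * u (ω' j) := by
      intro j hj
      have hj := Finset.mem_range.1 hj
      rw [hω j (by omega), hω (j + 1) (by omega)]
    rw [Finset.sum_congr rfl this]

theorem poisson_scaled {X : Type*} [MeasurableSpace X] (P : Kernel X X)
    (V : X → ℝ) (π : Measure X) (C : ℝ)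
    (hpois : ∀ g : X → ℝ, Measurable g → (∀ x, |g x| ≤ V x) →
      ∃ h : X → ℝ, Measurable h ∧ (∀ x, |h x| ≤ C * V x) ∧
        ∀ x, h x - ∫ y, h y ∂(P x) = g x - ∫ y, g y ∂π)
    (c : ℝ) (hc : 0 < c) (g : X → ℝ) (hg : Measurable g) (hgV : ∀ x, |g x| ≤ c * V x) :
    ∃ h : X → ℝ, Measurable h ∧ (∀ x, |h x| ≤ C * c * V x) ∧
        ∀ x, h x - ∫ y, h y ∂(P x) = g x - ∫ y, g y ∂π := by
  obtain ⟨h, hm, hb, he⟩ := hpois (fun x => c⁻¹ * g x) (hg.const_mul _) (fun x => by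
    rw [abs_mul, abs_of_pos (inv_pos.2 hc), inv_mul_le_iff₀ hc]
    exact hgV x)
  refine ⟨fun x => c * h x, hm.const_mul _, fun x => ?_, fun x => ?_⟩
  · rw [abs_mul, abs_of_pos hc]
    have := mul_le_mul_of_nonneg_left (hb x) hc.le
    linarith
  · have := he x
    rw [integral_const_mul] at this
    rw [integral_const_mul]
    have e : c * (c⁻¹ * g x - c⁻¹ * ∫ y, g y ∂π) = g x - ∫ y, g y ∂π := by field_simp
    rw [← e, ← this]
    ring

theorem charfun_clt {X : Type*} [MeasurableSpace X] (P : Kernel X X) [IsMarkovKernel P]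
    (μ : Measure X) (Pμ : Measure (ℕ → X)) (hPμ : IsMarkovChainLaw μ P Pμ)
    (V : X → ℝ) (hV1 : ∀ x, 1 ≤ V x)
    (hPV : ∀ x, Integrable V (P x)) (c1 : ℝ) (hPV1 : ∀ x, ∫ y, V y ∂(P x) ≤ c1 * V x)
    (B : ℝ) (hB : ∀ k, Integrable (fun ω => V (ω k)) Pμ ∧ ∫ ω, V (ω k) ∂Pμ ≤ B)
    (π : Measure X) [IsProbabilityMeasure π] (hπV : Integrable V π) (C : ℝ) (hC : 0 ≤ C)
    (hpois : ∀ g : X → ℝ, Measurable g → (∀ x, |g x| ≤ V x) →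
      ∃ h : X → ℝ, Measurable h ∧ (∀ x, |h x| ≤ C * V x) ∧
        ∀ x, h x - ∫ y, h y ∂(P x) = g x - ∫ y, g y ∂π)
    (ξ : X → X → ℝ) (hξ : Measurable (Function.uncurry ξ))
    (hξ1 : ∀ x, Integrable (ξ x) (P x)) (hξ2 : ∀ x, Integrable (fun y => ξ x y ^ 2) (P x))
    (hξ0 : ∀ x, ∫ y, ξ x y ∂(P x) = 0)
    (c2 : ℝ) (hξV : ∀ x, ∫ y, ξ x y ^ 2 ∂(P x) ≤ c2 * V x)
    (u : X → ℝ) (hu : Measurable u) (c3 : ℝ) (hu1 : ∀ x, |u x| ≤ c3 * V x)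
    (hu2 : ∀ x, u x ^ 2 ≤ c3 * V x) :
    Tendsto (fun n : ℕ => ∫ ω, Zf ξ u (Real.sqrt n)⁻¹ n ω ∂Pμ) atTop
      (𝓝 (Complex.exp (-((∫ x, ∫ y, ξ x y ^ 2 ∂(P x) ∂π : ℝ) : ℂ) / 2
        + Complex.I * ((∫ x, u x ∂π : ℝ) : ℂ)))) := by
  have hprob := hPμ.1
  set γ : ℂ := -((∫ x, ∫ y, ξ x y ^ 2 ∂(P x) ∂π : ℝ) : ℂ) / 2
        + Complex.I * ((∫ x, u x ∂π : ℝ) : ℂ) with hγ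
  have hV0 : ∀ x, 0 < V x := fun x => by linarith [hV1 x]
  -- constants are nonnegative as soon as the space is nonempty
  have hne : Nonempty X := by
    by_contra hcon
    rw [not_nonempty_iff] at hcon
    exact IsProbabilityMeasure.ne_zero π (Measure.eq_zero_of_isEmpty π)
  obtain ⟨x₀⟩ := hne
  have hpos : ∀ {c : ℝ} {r : ℝ}, 0 ≤ r → r ≤ c * V x₀ → 0 ≤ c := by
    intro c r hr h
    by_contra hcon
    push Not at hcon
    have := mul_neg_of_neg_of_pos hcon (hV0 x₀)
    linarith
  have hc2 : 0 ≤ c2 := hpos (integral_nonneg fun y => sq_nonneg _) (hξV x₀)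
  have hc3 : 0 ≤ c3 := hpos (abs_nonneg _) (hu1 x₀)
  have hc1 : 0 ≤ c1 := hpos (integral_nonneg fun y => (hV0 y).le) (hPV1 x₀)
  have hB0 : 0 ≤ B := (integral_nonneg fun ω => (hV0 _).le).trans (hB 0).2
  -- the function `σ²`
  have hσm : Measurable (fun x => ∫ y, ξ x y ^ 2 ∂(P x)) := by
    have h1 : Measurable (fun q : X × X => ξ q.1 q.2 ^ 2) := hξ.pow_const 2
    exact (h1.stronglyMeasurable.integral_kernel_prod_right' (κ := P)).measurable
  obtain ⟨hr, hrm, hrb, hre⟩ := poisson_scaled P V π C hpois (c2 + 1) (by linarith)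
    (fun x => -(∫ y, ξ x y ^ 2 ∂(P x)) / 2) (hσm.neg.div_const 2) (fun x => by
      have h1 : 0 ≤ ∫ y, ξ x y ^ 2 ∂(P x) := integral_nonneg fun y => sq_nonneg _
      rw [abs_div, abs_neg, abs_of_nonneg h1, abs_two]
      have := hξV x
      have := hV0 x
      nlinarith)
  obtain ⟨hi, him, hib, hie⟩ := poisson_scaled P V π C hpois (c3 + 1) (by linarith) u hu
    (fun x => by have := hu1 x; have := hV0 x; nlinarith)
  let h : X → ℂ := fun x => (hr x : ℂ) + Complex.I * (hi x : ℂ)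
  have hhm : Measurable h := by fun_prop
  set Ch : ℝ := C * (c2 + 1) + C * (c3 + 1) with hCh
  have hCh0 : 0 ≤ Ch := by positivity
  have hhb : ∀ x, ‖h x‖ ≤ Ch * V x := by
    intro x
    refine (norm_add_le _ _).trans ?_
    rw [norm_mul, Complex.norm_I, one_mul, Complex.norm_real, Complex.norm_real,
      Real.norm_eq_abs, Real.norm_eq_abs, hCh, add_mul]
    exact add_le_add (hrb x) (hib x)
  have hhP : ∀ x, Integrable h (P x) := fun x => integrable_of_dom (hPV x) hhm hhb
  have hhω : ∀ k, Integrable (fun ω => h (ω k)) Pμ := fun k =>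
    integrable_of_dom (hB k).1 (hhm.comp (measurable_pi_apply k)) (c := Ch) fun ω => hhb _
  have hrP : ∀ x, Integrable hr (P x) := fun x => integrable_of_dom (hPV x) hrm hrb
  have hiP : ∀ x, Integrable hi (P x) := fun x => integrable_of_dom (hPV x) him hib
  have hpoi : ∀ x, h x - ∫ y, h y ∂(P x)
      = (-((∫ y, ξ x y ^ 2 ∂(P x) : ℝ) : ℂ) / 2 + Complex.I * u x) - γ := by
    intro x
    have e : ∫ y, h y ∂(P x) = ((∫ y, hr y ∂(P x) : ℝ) : ℂ) + Complex.I * ((∫ y, hi y ∂(P x) : ℝ) : ℂ) := by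
      have i1 : Integrable (fun y => (hr y : ℂ)) (P x) := (hrP x).ofReal (𝕜 := ℂ)
      have i2 : Integrable (fun y => Complex.I * (hi y : ℂ)) (P x) :=
        ((hiP x).ofReal (𝕜 := ℂ)).const_mul _
      simp only [h]
      rw [integral_add i1 i2, integral_const_mul, integral_complex_ofReal, integral_complex_ofReal]
    have e1 := congrArg (fun t : ℝ => (t : ℂ)) (hre x)
    have e2 := congrArg (fun t : ℝ => (t : ℂ)) (hie x)
    simp only [integral_div, integral_neg] at e1
    push_cast at e1 e2
    rw [e, hγ]
    simp only [h]
    linear_combination e1 + Complex.I * e2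
  -- uniform bound on `Qf`
  set cQ : ℝ := 4 * c2 + (4 * c3 + c3) + Ch * c1 + ‖γ‖ * Real.exp ‖γ‖ + Real.exp ‖γ‖ * Ch + 1 with hcQ
  have hcQ0 : 0 < cQ := by positivity
  have hQb : ∀ a : ℝ, a ≠ 0 → |a| ≤ 1 → ∀ x, ‖Qf P ξ u h γ a x‖ ≤ cQ * V x := by
    intro a ha ha1 x
    have hb := Q_bound (P x) (ξ x) (hξ.of_uncurry_left) (hξ1 x) (hξ2 x) (hξ0 x) h (hhP x) (u x) γ (h x) a ha ha1
    refine hb.trans ?_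
    have h1 := hξV x
    have h2 := hu1 x
    have h3 := hu2 x
    have h4 : ∫ y, ‖h y‖ ∂(P x) ≤ Ch * (c1 * V x) := by
      calc ∫ y, ‖h y‖ ∂(P x) ≤ ∫ y, Ch * V y ∂(P x) :=
            integral_mono (hhP x).norm ((hPV x).const_mul _) hhb
        _ = Ch * ∫ y, V y ∂(P x) := integral_const_mul _ _
        _ ≤ _ := mul_le_mul_of_nonneg_left (hPV1 x) hCh0
    have h5 : ‖γ‖ * Real.exp ‖γ‖ ≤ ‖γ‖ * Real.exp ‖γ‖ * V x :=
      le_mul_of_one_le_right (by positivity) (hV1 x)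
    have h6 : Real.exp ‖γ‖ * ‖h x‖ ≤ Real.exp ‖γ‖ * (Ch * V x) :=
      mul_le_mul_of_nonneg_left (hhb x) (Real.exp_pos _).le
    have := hV0 x
    rw [hcQ]
    linarith
  have hQm : ∀ a, Measurable (Qf P ξ u h γ a) := fun a => Qf_meas P ξ hξ u hu h hhm γ a
  -- limit of the π-integrals
  have hQπ : Tendsto (fun a : ℝ => ∫ x, ‖Qf P ξ u h γ a x‖ ∂π) (𝓝[≠] 0) (𝓝 0) := by
    have hsmall : ∀ᶠ a : ℝ in 𝓝[≠] 0, |a| ≤ 1 := by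
      refine nhdsWithin_le_nhds ?_
      filter_upwards [Metric.ball_mem_nhds (0 : ℝ) one_pos] with a ha
      simpa using (mem_ball_zero_iff.1 ha).le
    have : Tendsto (fun a : ℝ => ∫ x, ‖Qf P ξ u h γ a x‖ ∂π) (𝓝[≠] 0) (𝓝 (∫ x, (0 : ℝ) ∂π)) := by
      refine tendsto_integral_filter_of_dominated_convergence (fun x => cQ * V x) ?_ ?_
        (hπV.const_mul _) ?_
      · exact Eventually.of_forall fun a => (hQm a).norm.aestronglyMeasurable
      · filter_upwards [hsmall, self_mem_nhdsWithin] with a ha ha0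
        exact Eventually.of_forall fun x => by rw [norm_norm]; exact hQb a ha0 ha x
      · refine Eventually.of_forall fun x => ?_
        have := (Q_lim (P x) (ξ x) (hξ.of_uncurry_left) (hξ1 x) (hξ2 x) (hξ0 x) h (hhP x) (u x) γ (h x)
          (hpoi x)).norm
        rw [norm_zero] at this
        exact this
    simpa using this
  -- key estimate
  have hbd : ∀ k, ∫ ω, ‖h (ω k)‖ ∂Pμ ≤ Ch * B := by
    intro k
    calc ∫ ω, ‖h (ω k)‖ ∂Pμ ≤ ∫ ω, Ch * V (ω k) ∂Pμ :=
          integral_mono (hhω k).norm ((hB k).1.const_mul _) fun ω => hhb _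
      _ = Ch * ∫ ω, V (ω k) ∂Pμ := integral_const_mul _ _
      _ ≤ Ch * B := mul_le_mul_of_nonneg_left (hB k).2 hCh0
  have key : ∀ n : ℕ, 1 ≤ n → ‖∫ ω, Zf ξ u (Real.sqrt n)⁻¹ n ω ∂Pμ - Complex.exp γ‖
      ≤ Real.exp ‖γ‖ * (∫ x, ‖Qf P ξ u h γ (Real.sqrt n)⁻¹ x‖ ∂π + 2 * (C * cQ) * B * (n : ℝ)⁻¹)
        + (1 + Real.exp ‖γ‖) * (Ch * B * (n : ℝ)⁻¹) := by
    intro n hn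
    have hnpos : (0 : ℝ) < n := by exact_mod_cast hn
    have hsq : 1 ≤ Real.sqrt n := Real.one_le_sqrt.2 (by exact_mod_cast hn)
    set a : ℝ := (Real.sqrt n)⁻¹ with ha
    have ha0 : 0 < a := inv_pos.2 (by linarith)
    have ha1 : |a| ≤ 1 := by rw [abs_of_pos ha0]; exact inv_le_one_of_one_le₀ hsq
    have ha2 : a ^ 2 = (n : ℝ)⁻¹ := by rw [ha, inv_pow, Real.sq_sqrt hnpos.le]
    have hac2 : (a : ℂ) ^ 2 = (n : ℂ)⁻¹ := by
      rw [← Complex.ofReal_pow, ha2]; simp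
    have hnc : (n : ℂ) ≠ 0 := by exact_mod_cast hnpos.ne'
    have hQω : ∀ k, Integrable (fun ω => Qf P ξ u h γ a (ω k)) Pμ := fun k =>
      integrable_of_dom (hB k).1 ((hQm a).comp (measurable_pi_apply k)) (c := cQ)
        fun ω => hQb a ha0.ne' ha1 _
    let y : ℕ → ℂ := fun k => ∫ ω, Zf ξ u a k ω * (1 + (a : ℂ) ^ 2 * h (ω k)) ∂Pμ
    let r : ℕ → ℂ := fun k => (a : ℂ) ^ 2 * ∫ ω, Zf ξ u a k ω * Qf P ξ u h γ a (ω k) ∂Pμ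
    have hrec := recur_bound y r (Complex.exp ((a : ℂ) ^ 2 * γ)) (Real.exp (a ^ 2 * ‖γ‖))
      (by
        refine (Complex.norm_exp_le_exp_norm _).trans (le_of_eq ?_)
        rw [norm_mul]; simp)
      (Real.one_le_exp (by positivity))
      (fun k => step_eq P μ Pμ hPμ ξ hξ u hu h hhm hhω γ a ha0.ne' hQω k) n
    have hq : Complex.exp ((a : ℂ) ^ 2 * γ) ^ n = Complex.exp γ := by
      rw [← Complex.exp_nat_mul, hac2, ← mul_assoc, mul_inv_cancel₀ hnc, one_mul]
    have hρ : Real.exp (a ^ 2 * ‖γ‖) ^ n = Real.exp ‖γ‖ := by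
      rw [← Real.exp_nat_mul, ha2, ← mul_assoc, mul_inv_cancel₀ hnpos.ne', one_mul]
    rw [hq, hρ] at hrec
    have hrk : ∀ k, ‖r k‖ ≤ a ^ 2 * ∫ ω, ‖Qf P ξ u h γ a (ω k)‖ ∂Pμ := by
      intro k
      simp only [r]
      rw [norm_mul]
      have e : ‖(a : ℂ) ^ 2‖ = a ^ 2 := by simp
      rw [e]
      refine mul_le_mul_of_nonneg_left ?_ (sq_nonneg a)
      refine norm_integral_le_of_norm_le (hQω k).norm (Eventually.of_forall fun ω => ?_)
      rw [norm_mul, Zf_norm, one_mul]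
    have hgb : ∀ x, |‖Qf P ξ u h γ a x‖| ≤ cQ * V x := fun x => by
      rw [abs_norm]; exact hQb a ha0.ne' ha1 x
    obtain ⟨h', hm', hb', he'⟩ := poisson_scaled P V π C hpois cQ hcQ0
      (fun x => ‖Qf P ξ u h γ a x‖) (hQm a).norm hgb
    have hces := cesaro_bound P μ Pμ hPμ V hV1 hPV B hB π (C * cQ) (by positivity)
      (fun x => ‖Qf P ξ u h γ a x‖) (hQm a).norm cQ hgb h' hm' hb' he' n
    have hsum : ∑ k ∈ Finset.range n, ‖r k‖
        ≤ ∫ x, ‖Qf P ξ u h γ a x‖ ∂π + 2 * (C * cQ) * B * (n : ℝ)⁻¹ := by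
      refine (Finset.sum_le_sum fun k _ => hrk k).trans ?_
      rw [← Finset.mul_sum, ha2]
      refine (mul_le_mul_of_nonneg_left hces (inv_nonneg.2 hnpos.le)).trans (le_of_eq ?_)
      field_simp
    have hyk : ∀ k, ‖y k - ∫ ω, Zf ξ u a k ω ∂Pμ‖ ≤ Ch * B * (n : ℝ)⁻¹ := by
      intro k
      have iZ : Integrable (fun ω => Zf ξ u a k ω) Pμ :=
        Integrable.of_bound (Zf_meas ξ hξ u hu a k).aestronglyMeasurable 1
          (Eventually.of_forall fun ω => (Zf_norm ξ u a k ω).le)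
      have iZh : Integrable (fun ω => Zf ξ u a k ω * h (ω k)) Pμ :=
        (hhω k).bdd_mul (Zf_meas ξ hξ u hu a k).aestronglyMeasurable (c := 1)
          (Eventually.of_forall fun ω => (Zf_norm ξ u a k ω).le)
      have e : y k = ∫ ω, Zf ξ u a k ω ∂Pμ + (a : ℂ) ^ 2 * ∫ ω, Zf ξ u a k ω * h (ω k) ∂Pμ := by
        rw [← integral_const_mul, ← integral_add iZ (iZh.const_mul _)]
        refine integral_congr_ae (Eventually.of_forall fun ω => ?_)
        simp only []
        ring
      rw [e, add_sub_cancel_left, norm_mul]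
      have e2 : ‖(a : ℂ) ^ 2‖ = (n : ℝ)⁻¹ := by rw [← ha2]; simp
      rw [e2, mul_comm]
      refine mul_le_mul_of_nonneg_right ?_ (inv_nonneg.2 hnpos.le)
      refine (norm_integral_le_of_norm_le (hhω k).norm (Eventually.of_forall fun ω => ?_)).trans (hbd k)
      rw [norm_mul, Zf_norm, one_mul]
    have hy0 : ‖y 0 - 1‖ ≤ Ch * B * (n : ℝ)⁻¹ := by
      have := hyk 0
      have e : ∫ ω, Zf ξ u a 0 ω ∂Pμ = 1 := by simp [Zf]
      rw [e] at this
      exact this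
    have htri : ∫ ω, Zf ξ u a n ω ∂Pμ - Complex.exp γ
        = (y n - Complex.exp γ * y 0) + (Complex.exp γ * (y 0 - 1) - (y n - ∫ ω, Zf ξ u a n ω ∂Pμ)) := by ring
    rw [htri]
    refine (norm_add_le _ _).trans (add_le_add (hrec.trans
      (mul_le_mul_of_nonneg_left hsum (Real.exp_pos _).le)) ((norm_sub_le _ _).trans ?_))
    rw [norm_mul]
    have t1 : ‖Complex.exp γ‖ * ‖y 0 - 1‖ ≤ Real.exp ‖γ‖ * (Ch * B * (n : ℝ)⁻¹) :=
      mul_le_mul (Complex.norm_exp_le_exp_norm γ) hy0 (norm_nonneg _) (Real.exp_pos _).le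
    linarith [hyk n]
  have han : Tendsto (fun n : ℕ => (Real.sqrt n)⁻¹) atTop (𝓝[≠] 0) := by
    refine tendsto_nhdsWithin_iff.2 ⟨?_, ?_⟩
    · exact tendsto_inv_atTop_zero.comp (Real.tendsto_sqrt_atTop.comp tendsto_natCast_atTop_atTop)
    · filter_upwards [eventually_ge_atTop 1] with n hn
      have : (0 : ℝ) < n := by exact_mod_cast hn
      exact inv_ne_zero (Real.sqrt_pos.2 this).ne'
  have hninv : Tendsto (fun n : ℕ => (n : ℝ)⁻¹) atTop (𝓝 0) :=
    tendsto_inv_atTop_zero.comp tendsto_natCast_atTop_atTop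
  have hlim : Tendsto (fun n : ℕ => Real.exp ‖γ‖ * (∫ x, ‖Qf P ξ u h γ (Real.sqrt n)⁻¹ x‖ ∂π
      + 2 * (C * cQ) * B * (n : ℝ)⁻¹) + (1 + Real.exp ‖γ‖) * (Ch * B * (n : ℝ)⁻¹)) atTop (𝓝 0) := by
    have := (((hQπ.comp han).add (hninv.const_mul (2 * (C * cQ) * B))).const_mul (Real.exp ‖γ‖)).add
      ((hninv.const_mul (Ch * B)).const_mul (1 + Real.exp ‖γ‖))
    simpa using this
  rw [tendsto_iff_norm_sub_tendsto_zero]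
  refine squeeze_zero' (Eventually.of_forall fun n => norm_nonneg _) ?_ hlim
  filter_upwards [eventually_ge_atTop 1] with n hn using key n hn

theorem sq_integrable_of_lint {X : Type*} [MeasurableSpace X] {ρ : Measure X} {q : X → ℝ}
    (hq : Measurable q) {r : ℝ} (h : ∫⁻ y, ENNReal.ofReal (q y ^ 2) ∂ρ ≤ ENNReal.ofReal r) :
    MemLp q 2 ρ := by
  rw [memLp_two_iff_integrable_sq hq.aestronglyMeasurable]
  refine ⟨(hq.pow_const 2).aestronglyMeasurable, ?_⟩
  rw [hasFiniteIntegral_iff_ofReal (Eventually.of_forall fun y => sq_nonneg _)]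
  exact h.trans_lt ENNReal.ofReal_lt_top

theorem mean_zero {X : Type*} [MeasurableSpace X] (d : ℕ)
    (θ₀ : Fin d → ℝ) (ε : ℝ) (hε : 0 < ε)
    (P : (Fin d → ℝ) → Kernel X X)
    (hPmarkov : ∀ θ ∈ Metric.ball θ₀ ε, IsMarkovKernel (P θ))
    [IsMarkovKernel (P θ₀)]
    (p : (Fin d → ℝ) → X → X → ℝ)
    (hp_meas : ∀ θ ∈ Metric.ball θ₀ ε, Measurable (Function.uncurry (p θ)))
    (hp_nonneg : ∀ θ ∈ Metric.ball θ₀ ε, ∀ x y, 0 ≤ p θ x y)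
    (hp_density : ∀ θ ∈ Metric.ball θ₀ ε, ∀ x,
      (P θ) x = ((P θ₀) x).withDensity fun y => ENNReal.ofReal (p θ x y))
    (dp : Fin d → X → X → ℝ)
    (V : X → ℝ) (hV1 : ∀ x, 1 ≤ V x)
    (hPi_diff : ∀ i : Fin d, ∀ δ' : ℝ, 0 < δ' → ∃ η > 0, ∀ h : ℝ, h ≠ 0 → |h| < η →
      ∀ x, ∀ g : X → ℝ, Measurable g → (∀ y, |g y| ≤ V y) →
        |∫ y, g y * ((p (θ₀ + h • (Pi.single i 1 : Fin d → ℝ)) x y - 1) / h - dp i x y) ∂((P θ₀) x)|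
          ≤ δ' * V x)
    (hint : ∀ i x, Integrable (dp i x) (P θ₀ x)) (i : Fin d) (x : X) :
    ∫ y, dp i x y ∂(P θ₀ x) = 0 := by
  by_contra hcon
  have hVx : 0 < V x := by linarith [hV1 x]
  set r := |∫ y, dp i x y ∂(P θ₀ x)| with hr
  have hr0 : 0 < r := abs_pos.2 hcon
  obtain ⟨η, hη, H⟩ := hPi_diff i (r / (2 * V x)) (by positivity)
  set h : ℝ := min η ε / 2 with hh
  have hmin : 0 < min η ε := lt_min hη hε
  have h0 : 0 < h := by positivity
  have hlt : h < min η ε := by rw [hh]; linarith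
  have hθ : θ₀ + h • (Pi.single i 1 : Fin d → ℝ) ∈ Metric.ball θ₀ ε := by
    rw [Metric.mem_ball, dist_eq_norm, add_sub_cancel_left, norm_smul, Pi.norm_single]
    simp only [Real.norm_eq_abs, abs_one, mul_one, abs_of_pos h0]
    exact hlt.trans_le (min_le_right _ _)
  have hb := H h h0.ne' (by rw [abs_of_pos h0]; exact hlt.trans_le (min_le_left _ _)) x (fun _ => 1)
    measurable_const (fun y => by rw [abs_one]; exact hV1 y)
  set θ := θ₀ + h • (Pi.single i 1 : Fin d → ℝ) with hθdef
  have := hPmarkov θ hθ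
  have hpm : Measurable (p θ x) := (hp_meas θ hθ).of_uncurry_left
  have hl : ∫⁻ y, ENNReal.ofReal (p θ x y) ∂(P θ₀ x) = 1 := by
    have h1 : (P θ) x Set.univ = 1 := measure_univ
    rw [hp_density θ hθ x, withDensity_apply _ MeasurableSet.univ] at h1
    simpa using h1
  have hpi : Integrable (p θ x) (P θ₀ x) := by
    refine ⟨hpm.aestronglyMeasurable, ?_⟩
    rw [hasFiniteIntegral_iff_ofReal (Eventually.of_forall fun y => hp_nonneg θ hθ x y), hl]
    exact ENNReal.one_lt_top
  have hp1 : ∫ y, p θ x y ∂(P θ₀ x) = 1 := by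
    rw [integral_eq_lintegral_of_nonneg_ae (Eventually.of_forall fun y => hp_nonneg θ hθ x y)
      hpm.aestronglyMeasurable, hl]
    simp
  have e : ∫ y, (1 : ℝ) * ((p θ x y - 1) / h - dp i x y) ∂((P θ₀) x) = - ∫ y, dp i x y ∂(P θ₀ x) := by
    have i1 : Integrable (fun y => p θ x y - 1) (P θ₀ x) := hpi.sub (integrable_const _)
    simp only [one_mul]
    rw [integral_sub (i1.div_const h) (hint i x), integral_div, integral_sub hpi (integrable_const _),
      hp1]
    simp
  rw [e, abs_neg, ← hr] at hb
  have : r / (2 * V x) * V x = r / 2 := by field_simp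
  linarith

open scoped MatrixOrder in
theorem psd_factor {d : ℕ} (S : Matrix (Fin d) (Fin d) ℝ) (hS : S.PosSemidef) :
    ∃ D : Matrix (Fin d) (Fin d) ℝ, D * D.transpose = S := by
  obtain ⟨B, hB⟩ := CStarAlgebra.nonneg_iff_eq_star_mul_self.mp hS.nonneg
  refine ⟨B.transpose, ?_⟩
  rw [hB, Matrix.transpose_transpose, Matrix.star_eq_conjTranspose]
  rfl

theorem gauss_char {d : ℕ} (v : Fin d → ℝ) :
    ∫ w, Complex.exp (Complex.I * ((∑ i, v i * w i : ℝ) : ℂ)) ∂(Measure.pi fun _ : Fin d => gaussianReal 0 1)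
      = Complex.exp (-((∑ i, v i ^ 2 : ℝ) : ℂ) / 2) := by
  have e : ∀ w : Fin d → ℝ, Complex.exp (Complex.I * ((∑ i, v i * w i : ℝ) : ℂ))
      = ∏ i, Complex.exp (v i * w i * Complex.I) := by
    intro w
    rw [← Complex.exp_sum]
    congr 1
    push_cast
    rw [Finset.mul_sum]
    exact Finset.sum_congr rfl fun i _ => by ring
  simp only [e]
  rw [integral_fintype_prod_eq_prod (fun i (x : ℝ) => Complex.exp (v i * x * Complex.I))]
  have e2 : ∀ i, ∫ x, Complex.exp (v i * x * Complex.I) ∂(gaussianReal 0 1)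
      = Complex.exp (-((v i ^ 2 : ℝ) : ℂ) / 2) := by
    intro i
    rw [← charFun_apply_real, charFun_gaussianReal]
    congr 1
    push_cast
    ring
  simp only [e2]
  rw [← Complex.exp_sum]
  congr 1
  push_cast
  rw [← Finset.sum_div, Finset.sum_neg_distrib]

theorem quad_form {d : ℕ} (D : Matrix (Fin d) (Fin d) ℝ) (t : Fin d → ℝ) :
    ∑ k, (∑ i, t i * D i k) ^ 2 = ∑ i, ∑ j, t i * t j * (D * D.transpose) i j := by
  have e : ∀ k, (∑ i, t i * D i k) ^ 2 = ∑ i, ∑ j, t i * t j * (D i k * D j k) := by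
    intro k
    rw [sq, Finset.sum_mul_sum]
    exact Finset.sum_congr rfl fun i _ => Finset.sum_congr rfl fun j _ => by ring
  simp only [e, Matrix.mul_apply, Matrix.transpose_apply, Finset.mul_sum]
  rw [Finset.sum_comm]
  refine Finset.sum_congr rfl fun i _ => ?_
  rw [Finset.sum_comm]

theorem gauss_char_mulVec {d : ℕ} (D : Matrix (Fin d) (Fin d) ℝ) (t : Fin d → ℝ) :
    ∫ w, Complex.exp (Complex.I * ((∑ i, t i * D.mulVec w i : ℝ) : ℂ)) ∂(Measure.pi fun _ : Fin d => gaussianReal 0 1)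
      = Complex.exp (-((∑ i, ∑ j, t i * t j * (D * D.transpose) i j : ℝ) : ℂ) / 2) := by
  have e : ∀ w : Fin d → ℝ, ∑ i, t i * D.mulVec w i = ∑ k, (∑ i, t i * D i k) * w k := by
    intro w
    simp only [Matrix.mulVec, dotProduct, Finset.mul_sum, Finset.sum_mul]
    rw [Finset.sum_comm]
    refine Finset.sum_congr rfl fun j _ => Finset.sum_congr rfl fun k _ => by ring
  rw [← quad_form, ← gauss_char]
  simp only [e]

theorem gauss_same {d : ℕ} (D C : Matrix (Fin d) (Fin d) ℝ) (h : C * C.transpose = D * D.transpose)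
    (φ : BoundedContinuousFunction (Fin d → ℝ) ℝ) :
    ∫ w, φ (C.mulVec w) ∂(Measure.pi fun _ : Fin d => gaussianReal 0 1)
      = ∫ w, φ (D.mulVec w) ∂(Measure.pi fun _ : Fin d => gaussianReal 0 1) := by
  have hcont : ∀ D : Matrix (Fin d) (Fin d) ℝ, Continuous (fun w : Fin d → ℝ =>
      (WithLp.toLp 2 (D.mulVec w) : EuclideanSpace ℝ (Fin d))) := fun D =>
    (PiLp.continuous_toLp 2 _).comp (Continuous.matrix_mulVec continuous_const continuous_id)
  have hm : ∀ D : Matrix (Fin d) (Fin d) ℝ, ∫ w, φ (D.mulVec w) ∂(Measure.pi fun _ : Fin d => gaussianReal 0 1)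
      = ∫ e : EuclideanSpace ℝ (Fin d), φ (WithLp.ofLp e) ∂((Measure.pi fun _ : Fin d => gaussianReal 0 1).map
        (fun w => (WithLp.toLp 2 (D.mulVec w) : EuclideanSpace ℝ (Fin d)))) := by
    intro D
    rw [integral_map (hcont D).measurable.aemeasurable]
    exact (φ.continuous.comp (PiLp.continuous_ofLp 2 _)).measurable.aestronglyMeasurable
  rw [hm C, hm D]
  congr 1
  have hp : ∀ D : Matrix (Fin d) (Fin d) ℝ, IsProbabilityMeasure ((Measure.pi fun _ : Fin d => gaussianReal 0 1).map
        (fun w => (WithLp.toLp 2 (D.mulVec w) : EuclideanSpace ℝ (Fin d)))) := fun D =>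
    Measure.isProbabilityMeasure_map (hcont D).measurable.aemeasurable
  have := hp C
  have := hp D
  apply Measure.ext_of_charFun
  ext t
  have hc : ∀ D : Matrix (Fin d) (Fin d) ℝ, charFun ((Measure.pi fun _ : Fin d => gaussianReal 0 1).map
        (fun w => (WithLp.toLp 2 (D.mulVec w) : EuclideanSpace ℝ (Fin d)))) t
      = Complex.exp (-((∑ i, ∑ j, t i * t j * (D * D.transpose) i j : ℝ) : ℂ) / 2) := by
    intro D
    rw [charFun_apply, integral_map (hcont D).measurable.aemeasurable, ← gauss_char_mulVec]
    · congr 1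
      ext w
      rw [mul_comm, PiLp.inner_apply]
      simp
    · refine Continuous.aestronglyMeasurable ?_
      fun_prop
  rw [hc C, hc D, h]

theorem final_step {Ω : Type*} [MeasurableSpace Ω] (Pr : Measure Ω) [IsProbabilityMeasure Pr] {d : ℕ}
    (W : ℕ → Ω → Fin d → ℝ) (hW : ∀ n, Measurable (W n)) (A : ℕ → Ω → ℝ) (hA : ∀ n, Measurable (A n))
    (S : Matrix (Fin d) (Fin d) ℝ) (hS : S.PosSemidef) (α : ℝ)
    (hchar : ∀ (t : Fin d → ℝ) (s : ℝ), Tendsto (fun n =>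
      ∫ ω, Complex.exp (Complex.I * ((∑ i, t i * W n ω i + s * A n ω : ℝ) : ℂ)) ∂Pr) atTop
      (𝓝 (Complex.exp (-((∑ i, ∑ j, t i * t j * S i j : ℝ) : ℂ) / 2 + Complex.I * ((s * α : ℝ) : ℂ)))))
    (C : Matrix (Fin d) (Fin d) ℝ) (hC : C * C.transpose = (α ^ 2) • S)
    (φ : BoundedContinuousFunction (Fin d → ℝ) ℝ) :
    Tendsto (fun n : ℕ => ∫ ω, φ (fun i => A n ω * W n ω i) ∂Pr) atTop
      (𝓝 (∫ w, φ (C.mulVec w) ∂(Measure.pi fun _ : Fin d => gaussianReal 0 1))) := by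
  obtain ⟨D, hD⟩ := psd_factor S hS
  let T : (Fin d → ℝ) × ℝ → EuclideanSpace ℝ (Option (Fin d)) := fun q =>
    WithLp.toLp 2 (fun o => o.elim q.2 q.1)
  have hT : Continuous T := by
    refine (PiLp.continuous_toLp 2 _).comp (continuous_pi fun o => ?_)
    cases o with
    | none => exact continuous_snd
    | some i => exact (continuous_apply i).comp continuous_fst
  have hTi : ∀ q t, inner ℝ (T q) t = ∑ i, t (some i) * q.1 i + t none * q.2 := by
    intro q t
    rw [PiLp.inner_apply, Fintype.sum_option, add_comm]
    simp [T]
  have m1 : ∀ n, Measurable (fun ω => T (W n ω, A n ω)) := fun n =>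
    hT.measurable.comp ((hW n).prodMk (hA n))
  have c0 : Continuous (fun w : Fin d → ℝ => T (D.mulVec w, α)) :=
    hT.comp ((Continuous.matrix_mulVec continuous_const continuous_id).prodMk continuous_const)
  let μn : ℕ → ProbabilityMeasure (EuclideanSpace ℝ (Option (Fin d))) := fun n =>
    ⟨Pr.map (fun ω => T (W n ω, A n ω)), Measure.isProbabilityMeasure_map (m1 n).aemeasurable⟩
  let μ0 : ProbabilityMeasure (EuclideanSpace ℝ (Option (Fin d))) :=
    ⟨(Measure.pi fun _ : Fin d => gaussianReal 0 1).map (fun w => T (D.mulVec w, α)),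
      Measure.isProbabilityMeasure_map c0.measurable.aemeasurable⟩
  have hconv : Tendsto μn atTop (𝓝 μ0) := by
    apply ProbabilityMeasure.tendsto_of_tendsto_charFun
    intro t
    have hsm : ∀ (ρ : Measure (EuclideanSpace ℝ (Option (Fin d)))), AEStronglyMeasurable
        (fun x => Complex.exp ((inner ℝ x t : ℝ) * Complex.I)) ρ := fun ρ => by
      refine Continuous.aestronglyMeasurable ?_
      fun_prop
    have e1 : ∀ n, charFun (μn n : Measure _) t = ∫ ω, Complex.exp (Complex.I *
        ((∑ i, t (some i) * W n ω i + t none * A n ω : ℝ) : ℂ)) ∂Pr := by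
      intro n
      simp only [μn, ProbabilityMeasure.coe_mk]
      rw [charFun_apply, integral_map (m1 n).aemeasurable (hsm _)]
      congr 1
      ext ω
      rw [hTi, mul_comm]
    have e0 : charFun (μ0 : Measure _) t = Complex.exp (-((∑ i, ∑ j, t (some i) * t (some j) * S i j : ℝ) : ℂ) / 2
        + Complex.I * ((t none * α : ℝ) : ℂ)) := by
      simp only [μ0, ProbabilityMeasure.coe_mk]
      rw [charFun_apply, integral_map c0.measurable.aemeasurable (hsm _), Complex.exp_add, ← hD,
        ← gauss_char_mulVec, ← integral_mul_const]
      congr 1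
      ext w
      rw [hTi, mul_comm, ← Complex.exp_add, ← mul_add]
      push_cast
      rfl
    simp only [e1, e0]
    exact hchar (fun i => t (some i)) (t none)
  let ψc : C(EuclideanSpace ℝ (Option (Fin d)), Fin d → ℝ) :=
    ⟨fun e => fun i => e none * e (some i), by fun_prop⟩
  have hfin := (ProbabilityMeasure.tendsto_iff_forall_integral_tendsto.1 hconv) (φ.compContinuous ψc)
  have hψm : ∀ (ρ : Measure (EuclideanSpace ℝ (Option (Fin d)))), AEStronglyMeasurable
        (fun x => φ.compContinuous ψc x) ρ := fun ρ =>
    (φ.compContinuous ψc).continuous.aestronglyMeasurable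
  have e1 : ∀ n, ∫ x, φ.compContinuous ψc x ∂(μn n : Measure _) = ∫ ω, φ (fun i => A n ω * W n ω i) ∂Pr := by
    intro n
    simp only [μn, ProbabilityMeasure.coe_mk]
    rw [integral_map (m1 n).aemeasurable (hψm _)]
    rfl
  have e0 : ∫ x, φ.compContinuous ψc x ∂(μ0 : Measure _)
      = ∫ w, φ (C.mulVec w) ∂(Measure.pi fun _ : Fin d => gaussianReal 0 1) := by
    simp only [μ0, ProbabilityMeasure.coe_mk]
    rw [integral_map c0.measurable.aemeasurable (hψm _), gauss_same (α • D) C]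
    · congr 1
      ext w
      rw [Matrix.smul_mulVec]
      rfl
    · rw [hC, ← hD, Matrix.transpose_smul, Matrix.smul_mul, Matrix.mul_smul, smul_smul, sq]
  simp only [e1, e0] at hfin
  exact hfin

/-- Proposition 3.1: under Assumption 1, `n^{−1/2}·α_n·∇L_n(θ₀)` converges in distribution
to a centered multivariate Gaussian with covariance `α(θ₀)²·Σ`. -/
theorem naive_estimator_clt {X : Type*} [MeasurableSpace X] (d : ℕ)
    (θ₀ : Fin d → ℝ) (ε : ℝ) (hε : 0 < ε)
    (P : (Fin d → ℝ) → Kernel X X)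
    (hPmarkov : ∀ θ ∈ Metric.ball θ₀ ε, IsMarkovKernel (P θ))
    [IsMarkovKernel (P θ₀)]
    -- densities with respect to `P θ₀`
    (p : (Fin d → ℝ) → X → X → ℝ)
    (hp_meas : ∀ θ ∈ Metric.ball θ₀ ε, Measurable (Function.uncurry (p θ)))
    (hp_nonneg : ∀ θ ∈ Metric.ball θ₀ ε, ∀ x y, 0 ≤ p θ x y)
    (hp_density : ∀ θ ∈ Metric.ball θ₀ ε, ∀ x,
      (P θ) x = ((P θ₀) x).withDensity fun y => ENNReal.ofReal (p θ x y))
    (hp_one : ∀ x y, p θ₀ x y = 1)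
    -- differentiability of the densities at `θ₀` with partial derivatives `dp i`
    (dp : Fin d → X → X → ℝ)
    (hdp_meas : ∀ i, Measurable (Function.uncurry (dp i)))
    (hdp : ∀ x y, HasFDerivAt (fun θ => p θ x y)
      (∑ i : Fin d, dp i x y • (ContinuousLinearMap.proj i : (Fin d → ℝ) →L[ℝ] ℝ)) θ₀)
    -- (i) ψ-irreducibility
    (ψ : Measure X) [SigmaFinite ψ] (hψ : ψ ≠ 0)
    (hirr : ∀ θ ∈ Metric.ball θ₀ ε, ∀ A : Set X, MeasurableSet A → 0 < ψ A →
      ∀ x, ∃ n : ℕ, 0 < (kpow (P θ) n) x A)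
    -- (ii) minorization on the small set `K`
    (K : Set X) (hK : MeasurableSet K) (δ : ℝ) (hδ : 0 < δ) (m : ℕ)
    (ν : Measure X) [IsProbabilityMeasure ν]
    (hminor : ∀ θ ∈ Metric.ball θ₀ ε, ∀ x ∈ K, ∀ A : Set X, MeasurableSet A →
      ENNReal.ofReal δ * ν A ≤ (kpow (P θ) m) x A)
    -- (iii) drift condition
    (V : X → ℝ) (hVmeas : Measurable V) (hV1 : ∀ x, 1 ≤ V x)
    (l b : ℝ) (hl0 : 0 < l) (hl1 : l < 1) (hb : 0 ≤ b)
    (hdrift : ∀ θ ∈ Metric.ball θ₀ ε, ∀ x,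
      ∫⁻ y, ENNReal.ofReal (V y) ∂((P θ) x)
        ≤ ENNReal.ofReal (l * V x + b * K.indicator (fun _ => 1) x))
    -- (iv) finiteness of `|||P^{(i)}(θ₀)|||_V` and differentiability in `V`-operator norm
    (hPi_bdd : ∀ i : Fin d, ∃ C : ℝ, ∀ x, ∀ g : X → ℝ, Measurable g → (∀ y, |g y| ≤ V y) →
      |∫ y, g y * dp i x y ∂((P θ₀) x)| ≤ C * V x)
    (hPi_diff : ∀ i : Fin d, ∀ δ' : ℝ, 0 < δ' → ∃ η > 0, ∀ h : ℝ, h ≠ 0 → |h| < η →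
      ∀ x, ∀ g : X → ℝ, Measurable g → (∀ y, |g y| ≤ V y) →
        |∫ y, g y * ((p (θ₀ + h • (Pi.single i 1 : Fin d → ℝ)) x y - 1) / h - dp i x y) ∂((P θ₀) x)|
          ≤ δ' * V x)
    -- (v) `sup_x g_{ii}(x)/V(x) < ∞`
    (hgV : ∀ i : Fin d, ∃ C : ℝ, ∀ x,
      ∫⁻ y, ENNReal.ofReal ((dp i x y) ^ 2) ∂((P θ₀) x) ≤ ENNReal.ofReal (C * V x))
    -- (vi) `sup_x |f(x)|/√V(x) < ∞`
    (f : X → ℝ) (hf_meas : Measurable f)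
    (hf_bdd : ∃ κ : ℝ, ∀ x, |f x| ≤ κ * Real.sqrt (V x))
    -- invariant probability measure with `πV < ∞`
    (π : Measure X) [IsProbabilityMeasure π]
    (hπ_inv : π.bind (fun x => (P θ₀) x) = π)
    (hπV : ∫⁻ x, ENNReal.ofReal (V x) ∂π < ⊤)
    (α : ℝ) (hα : α = ∫ x, f x ∂π)
    (Sig : Matrix (Fin d) (Fin d) ℝ)
    (hSig : ∀ i j, Sig i j = ∫ x, ∫ y, dp i x y * dp j x y ∂((P θ₀) x) ∂π)
    -- the chain with initial distribution `μ`
    (μ : Measure X) [IsProbabilityMeasure μ]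
    (hμV : ∫⁻ x, ENNReal.ofReal (V x) ∂μ < ⊤)
    (Pμ : Measure (ℕ → X)) (hPμ : IsMarkovChainLaw μ (P θ₀) Pμ)
    (A : ℕ → (ℕ → X) → ℝ)
    (hA : ∀ n ω, A n ω = (1 / (n : ℝ)) * ∑ j ∈ Finset.range n, f (ω j))
    (M : ℕ → (ℕ → X) → Fin d → ℝ)
    (hM : ∀ n ω i, M n ω i = ∑ j ∈ Finset.range n, dp i (ω j) (ω (j + 1))) :
    ∀ C : Matrix (Fin d) (Fin d) ℝ, C * C.transpose = (α ^ 2) • Sig →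
      ∀ φ : BoundedContinuousFunction (Fin d → ℝ) ℝ,
        Tendsto (fun n : ℕ => ∫ ω, φ (fun i => A n ω * M n ω i / Real.sqrt n) ∂Pμ)
          atTop
          (nhds (∫ w, φ (C.mulVec w) ∂(Measure.pi fun _ : Fin d => gaussianReal 0 1))) := by
  intro C hC φ
  have hprob := hPμ.1
  have hθ : θ₀ ∈ Metric.ball θ₀ ε := Metric.mem_ball_self hε
  have hdr := hdrift θ₀ hθ
  have hmin := hminor θ₀ hθ
  have hV0 : ∀ x, 0 ≤ V x := fun x => zero_le_one.trans (hV1 x)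
  have hdr' : ∀ x, ∫⁻ y, ENNReal.ofReal (V y) ∂(P θ₀ x) ≤ ENNReal.ofReal (l * V x + b) := by
    intro x
    refine (hdr x).trans (ENNReal.ofReal_le_ofReal ?_)
    have : K.indicator (fun _ => (1 : ℝ)) x ≤ 1 := Set.indicator_le_self' (fun _ _ => zero_le_one) x
    nlinarith
  have hPV : ∀ x, Integrable V (P θ₀ x) := fun x =>
    integrable_of_lint hVmeas hV1 ((hdr' x).trans_lt ENNReal.ofReal_lt_top)
  have hPV1 : ∀ x, ∫ y, V y ∂(P θ₀ x) ≤ (l + b) * V x := by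
    intro x
    have h1 : 0 ≤ l * V x + b := by have := hV0 x; positivity
    refine (drift_integral hVmeas hV1 h1 (hdr' x)).trans ?_
    nlinarith [hV1 x]
  obtain ⟨B, hB0, hB⟩ := chain_V (P θ₀) μ Pμ hPμ V hVmeas hV1 l b hl0 hl1 hb hdr' hμV
  obtain ⟨Cp, hCp0, hpois⟩ := poisson_exists (P θ₀) K hK δ hδ m ν hmin V hVmeas hV1 l b hl0 hl1 hb
    hdr π hπ_inv hπV
  have hπVi : Integrable V π := integrable_of_lint hVmeas hV1 hπV
  choose cg hcg using hgV
  have hdpx : ∀ i x, Measurable (dp i x) := fun i x =>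
    (hdp_meas i).comp (measurable_const.prodMk measurable_id)
  have hL2 : ∀ i x, MemLp (dp i x) 2 (P θ₀ x) := fun i x => sq_integrable_of_lint (hdpx i x) (hcg i x)
  have hint : ∀ i x, Integrable (dp i x) (P θ₀ x) := fun i x => (hL2 i x).integrable one_le_two
  have hprod : ∀ i j x, Integrable (fun y => dp i x y * dp j x y) (P θ₀ x) := fun i j x =>
    (hL2 i x).integrable_mul (hL2 j x)
  have hmean : ∀ i x, ∫ y, dp i x y ∂(P θ₀ x) = 0 := fun i x =>
    mean_zero d θ₀ ε hε P hPmarkov p hp_meas hp_nonneg hp_density dp V hV1 hPi_diff hint i x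
  have hsq : ∀ i x, ∫ y, dp i x y * dp i x y ∂(P θ₀ x) ≤ |cg i| * V x := by
    intro i x
    rw [integral_eq_lintegral_of_nonneg_ae (Eventually.of_forall fun y => mul_self_nonneg _)
      ((hprod i i x).aestronglyMeasurable)]
    refine ENNReal.toReal_le_of_le_ofReal (mul_nonneg (abs_nonneg _) (hV0 x)) ?_
    have h1 := hcg i x
    simp only [sq] at h1
    exact h1.trans (ENNReal.ofReal_le_ofReal (mul_le_mul_of_nonneg_right (le_abs_self _) (hV0 x)))
  -- integrability of the conditional covariances
  have hcov : ∀ i j, Integrable (fun x => ∫ y, dp i x y * dp j x y ∂(P θ₀ x)) π := by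
    intro i j
    refine integrable_of_dom (c := |cg i| + |cg j|) hπVi ?_ ?_
    · have hm : Measurable (Function.uncurry fun x y => dp i x y * dp j x y) :=
        (hdp_meas i).mul (hdp_meas j)
      exact (MeasureTheory.StronglyMeasurable.integral_kernel_prod_right
        hm.stronglyMeasurable).measurable
    · intro x
      have h1 : ‖∫ y, dp i x y * dp j x y ∂(P θ₀ x)‖
          ≤ ∫ y, (dp i x y * dp i x y + dp j x y * dp j x y) ∂(P θ₀ x) := by
        refine norm_integral_le_of_norm_le ((hprod i i x).add (hprod j j x))
          (Eventually.of_forall fun y => ?_)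
        rw [Real.norm_eq_abs, abs_le]
        constructor <;> nlinarith [sq_nonneg (dp i x y + dp j x y), sq_nonneg (dp i x y - dp j x y),
          sq_nonneg (dp i x y), sq_nonneg (dp j x y)]
      rw [integral_add (hprod i i x) (hprod j j x)] at h1
      linarith [hsq i x, hsq j x]
  -- scalar projections
  have hξsq : ∀ (t : Fin d → ℝ) x y, (∑ i, t i * dp i x y) ^ 2
      = ∑ i, ∑ j, t i * t j * (dp i x y * dp j x y) := by
    intro t x y
    rw [sq, Finset.sum_mul_sum]
    refine Finset.sum_congr rfl fun i _ => Finset.sum_congr rfl fun j _ => ?_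
    ring
  have hξint : ∀ (t : Fin d → ℝ) x, ∫ y, (∑ i, t i * dp i x y) ^ 2 ∂(P θ₀ x)
      = ∑ i, ∑ j, t i * t j * ∫ y, dp i x y * dp j x y ∂(P θ₀ x) := by
    intro t x
    simp only [hξsq]
    rw [integral_finsetSum _ fun i _ => integrable_finsetSum _ fun j _ =>
      (hprod i j x).const_mul _]
    refine Finset.sum_congr rfl fun i _ => ?_
    rw [integral_finsetSum _ fun j _ => (hprod i j x).const_mul _]
    refine Finset.sum_congr rfl fun j _ => ?_
    rw [integral_const_mul]
  have hquad : ∀ (t : Fin d → ℝ), ∫ x, ∫ y, (∑ i, t i * dp i x y) ^ 2 ∂(P θ₀ x) ∂π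
      = ∑ i, ∑ j, t i * t j * Sig i j := by
    intro t
    simp only [hξint]
    rw [integral_finsetSum _ fun i _ => integrable_finsetSum _ fun j _ =>
      (hcov i j).const_mul _]
    refine Finset.sum_congr rfl fun i _ => ?_
    rw [integral_finsetSum _ fun j _ => (hcov i j).const_mul _]
    refine Finset.sum_congr rfl fun j _ => ?_
    rw [integral_const_mul, hSig]
  have hPSD : Sig.PosSemidef := by
    refine Matrix.PosSemidef.of_dotProduct_mulVec_nonneg ?_ fun t => ?_
    · ext i j
      simp only [Matrix.conjTranspose_apply, star_trivial, hSig]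
      simp only [mul_comm]
    · have h1 : star t ⬝ᵥ Sig.mulVec t = ∑ i, ∑ j, t i * t j * Sig i j := by
        simp only [dotProduct, Matrix.mulVec, Finset.mul_sum, star_trivial]
        refine Finset.sum_congr rfl fun i _ => Finset.sum_congr rfl fun j _ => ?_
        ring
      rw [h1, ← hquad]
      exact integral_nonneg fun x => integral_nonneg fun y => sq_nonneg _
  obtain ⟨κ, hκ⟩ := hf_bdd
  have hf1 : ∀ x, |f x| ≤ |κ| * Real.sqrt (V x) := fun x =>
    (hκ x).trans (mul_le_mul_of_nonneg_right (le_abs_self _) (Real.sqrt_nonneg _))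
  have hf2 : ∀ x, f x ^ 2 ≤ κ ^ 2 * V x := by
    intro x
    have := pow_le_pow_left₀ (abs_nonneg _) (hf1 x) 2
    rwa [sq_abs, mul_pow, sq_abs, Real.sq_sqrt (hV0 x)] at this
  have hf3 : ∀ x, |f x| ≤ |κ| * V x := by
    intro x
    refine (hf1 x).trans (mul_le_mul_of_nonneg_left ?_ (abs_nonneg _))
    rw [Real.sqrt_le_left (hV0 x)]
    nlinarith [hV1 x]
  have hAm : ∀ n, Measurable (A n) := by
    intro n
    have : A n = fun ω => (1 / (n : ℝ)) * ∑ j ∈ Finset.range n, f (ω j) := funext (hA n)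
    rw [this]
    exact (Finset.measurable_fun_sum _ fun j _ => hf_meas.comp (measurable_pi_apply j)).const_mul _
  have hMm : ∀ n i, Measurable (fun ω => M n ω i) := by
    intro n i
    simp only [hM]
    refine Finset.measurable_fun_sum _ fun j _ => ?_
    have hpair : Measurable (fun ω : ℕ → X => (ω j, ω (j + 1))) :=
      (measurable_pi_apply j).prodMk (measurable_pi_apply (j + 1))
    exact (hdp_meas i).comp hpair
  have hWm : ∀ n : ℕ, Measurable (fun ω i => M n ω i / Real.sqrt n) := fun n =>
    measurable_pi_lambda _ fun i => (hMm n i).div_const _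
  have hfin := final_step Pμ (fun (n : ℕ) ω i => M n ω i / Real.sqrt n) hWm A hAm Sig hPSD α ?_ C hC φ
  · simpa only [mul_div_assoc] using hfin
  intro t s
  have hξm : Measurable (Function.uncurry fun x y => ∑ i, t i * dp i x y) := by
    have : (Function.uncurry fun x y => ∑ i, t i * dp i x y)
        = fun q => ∑ i, t i * Function.uncurry (dp i) q := rfl
    rw [this]
    exact Finset.measurable_fun_sum _ fun i _ => (hdp_meas i).const_mul _
  have hmain := charfun_clt (P θ₀) μ Pμ hPμ V hV1 hPV (l + b) hPV1 B hB π hπVi Cp hCp0 hpois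
    (fun x y => ∑ i, t i * dp i x y) hξm
    (fun x => integrable_finsetSum _ fun i _ => (hint i x).const_mul _)
    (fun x => by
      simp only [hξsq]
      exact integrable_finsetSum _ fun i _ => integrable_finsetSum _ fun j _ =>
        (hprod i j x).const_mul _)
    (fun x => by
      rw [integral_finsetSum _ fun i _ => (hint i x).const_mul _]
      refine Finset.sum_eq_zero fun i _ => ?_
      rw [integral_const_mul, hmean, mul_zero])
    ((∑ i, t i ^ 2) * ∑ i, |cg i|)
    (fun x => by
      have h1 : ∫ y, (∑ i, t i * dp i x y) ^ 2 ∂(P θ₀ x)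
          ≤ ∫ y, (∑ i, t i ^ 2) * ∑ i, dp i x y * dp i x y ∂(P θ₀ x) := by
        refine integral_mono_of_nonneg (Eventually.of_forall fun y => sq_nonneg _)
          ((integrable_finsetSum _ fun i _ => hprod i i x).const_mul _)
          (Eventually.of_forall fun y => ?_)
        have := Finset.sum_mul_sq_le_sq_mul_sq Finset.univ t (fun i => dp i x y)
        simpa only [sq (dp _ x y)] using this
      rw [integral_const_mul, integral_finsetSum _ fun i _ => hprod i i x] at h1
      refine h1.trans ?_
      rw [mul_assoc, Finset.sum_mul Finset.univ (fun i => |cg i|)]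
      exact mul_le_mul_of_nonneg_left (Finset.sum_le_sum fun i _ => hsq i x)
        (Finset.sum_nonneg fun i _ => sq_nonneg _))
    (fun x => s * f x) (hf_meas.const_mul s) (|s| * |κ| + s ^ 2 * κ ^ 2)
    (fun x => by
      rw [abs_mul]
      have h1 := mul_le_mul_of_nonneg_left (hf3 x) (abs_nonneg s)
      have h2 : 0 ≤ s ^ 2 * κ ^ 2 * V x := mul_nonneg (by positivity) (hV0 x)
      linarith)
    (fun x => by
      rw [mul_pow]
      have h1 := mul_le_mul_of_nonneg_left (hf2 x) (sq_nonneg s)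
      have h2 : 0 ≤ |s| * |κ| * V x := mul_nonneg (by positivity) (hV0 x)
      linarith)
  rw [hquad, integral_const_mul, ← hα] at hmain
  refine hmain.congr fun n => ?_
  refine integral_congr_ae (Eventually.of_forall fun ω => ?_)
  simp only [Zf]
  congr 3
  rw [hA, Finset.sum_add_distrib]
  congr 1
  · simp only [hM, div_eq_mul_inv, Finset.mul_sum, Finset.sum_mul]
    rw [Finset.sum_comm]
    refine Finset.sum_congr rfl fun i _ => Finset.sum_congr rfl fun j _ => ?_
    ring
  · rw [inv_pow, Real.sq_sqrt (Nat.cast_nonneg n), ← Finset.mul_sum, ← Finset.mul_sum]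
    ring

end
end
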